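/- arXiv:0704.3864 — 4 statements merged into one kernel-verified Lean document; each statement's English description precedes it below -/
import Mathlib

section
/- Let K be a field of characteristic zero and let L be a finite-dimensional Lie algebra over K such that the second Chevalley–Eilenberg cohomology group H^2(L,V) vanishes for every finite-dimensional L-module V. Then L is one of the following: (1) a one-dimensional Lie algebra; (2) a semisimple Lie algebra; (3) the direct sum (as Lie algebras) of a semisimple Lie algebra and a one-dimensional Lie algebra. -/
universe u v

section TwoCohomology

variable (K : Type u) [Field K]
variable (L : Type v) [LieRing L] [LieAlgebra K L]

/-- `f` is an alternating bilinear 2-cocycle on `L` with values in the `L`-module `V`: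
it satisfies `f a a = 0` and the Chevalley–Eilenberg 2-cocycle identity. -/
def IsLieTwoCocycle {V : Type*} [AddCommGroup V] [Module K V] [LieRingModule L V]
    (f : L →ₗ[K] L →ₗ[K] V) : Prop :=
  (∀ a : L, f a a = 0) ∧
    ∀ x y z : L,
      ⁅x, f y z⁆ - ⁅y, f x z⁆ + ⁅z, f x y⁆ - f ⁅x, y⁆ z + f ⁅x, z⁆ y - f ⁅y, z⁆ x = 0

/-- `f` is a 2-coboundary: `f (x, y) = x · g y − y · g x − g ⁅x, y⁆` for some linear `g`. -/
def IsLieTwoCoboundary {V : Type*} [AddCommGroup V] [Module K V] [LieRingModule L V]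
    (f : L →ₗ[K] L →ₗ[K] V) : Prop :=
  ∃ g : L →ₗ[K] V, ∀ x y : L, f x y = ⁅x, g y⁆ - ⁅y, g x⁆ - g ⁅x, y⁆

/-- A finite-dimensional Lie algebra `L` is 2-trivial if `H²(L,V) = 0`, i.e. every
alternating 2-cocycle is a 2-coboundary, for every finite-dimensional `L`-module `V`. -/
def IsTwoTrivial : Prop :=
  ∀ (V : Type u) [AddCommGroup V] [Module K V] [LieRingModule L V] [LieModule K L V]
    [FiniteDimensional K V] (f : L →ₗ[K] L →ₗ[K] V),
      IsLieTwoCocycle K L f → IsLieTwoCoboundary K L f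

end TwoCohomology

section Helpers

variable {K : Type u} {L : Type v} [Field K] [LieRing L] [LieAlgebra K L]

/-- Universe-free form of 2-triviality, for values in a stable finite-dimensional subspace. -/
theorem exists_primitive (h2 : IsTwoTrivial K L) {P : Type*} [AddCommGroup P] [Module K P]
    (ρ : L →ₗ[K] Module.End K P)
    (hρ : ∀ x y p, ρ ⁅x, y⁆ p = ρ x (ρ y p) - ρ y (ρ x p))
    (X : Submodule K P) [FiniteDimensional K X] (hX : ∀ x, ∀ p ∈ X, ρ x p ∈ X)
    (f : L →ₗ[K] L →ₗ[K] P) (hfX : ∀ x y, f x y ∈ X) (hf0 : ∀ x, f x x = 0)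
    (hf : ∀ x y z : L, ρ x (f y z) - ρ y (f x z) + ρ z (f x y)
      - f ⁅x, y⁆ z + f ⁅x, z⁆ y - f ⁅y, z⁆ x = 0) :
    ∃ g : L →ₗ[K] P, (∀ x, g x ∈ X) ∧
      ∀ x y, f x y = ρ x (g y) - ρ y (g x) - g ⁅x, y⁆ := by
  classical
  let e : X ≃ₗ[K] (Fin (Module.finrank K X) → K) := (Module.finBasis K X).equivFun
  let r : L → X →ₗ[K] X := fun x => (ρ x).restrict (hX x)
  have hr : ∀ x (p : X), ((r x p : X) : P) = ρ x p := fun x p => rfl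
  let i1 : LieRingModule L (Fin (Module.finrank K X) → K) :=
    { bracket := fun x v => e (r x (e.symm v))
      add_lie := by
        intro x y m
        change e (r (x + y) (e.symm m)) = e (r x (e.symm m)) + e (r y (e.symm m))
        rw [← map_add]; congr 1; ext; simp [hr]
      lie_add := by
        intro x m n
        change e (r x (e.symm (m + n))) = e (r x (e.symm m)) + e (r x (e.symm n))
        simp
      leibniz_lie := by
        intro x y m
        change e (r x (e.symm (e (r y (e.symm m))))) = e (r ⁅x, y⁆ (e.symm m)) +
          e (r y (e.symm (e (r x (e.symm m)))))
        rw [← map_add]; congr 1; ext; simp [hr, hρ] }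
  have hb : ∀ (x : L) (v : Fin (Module.finrank K X) → K), ⁅x, v⁆ = e (r x (e.symm v)) :=
    fun _ _ => rfl
  let i2 : LieModule K L (Fin (Module.finrank K X) → K) :=
    { smul_lie := by
        intro t x m
        rw [hb, hb, ← map_smul]; congr 1; ext; simp [hr]
      lie_smul := by
        intro t x m
        rw [hb, hb]; simp }
  let f' : L →ₗ[K] L →ₗ[K] (Fin (Module.finrank K X) → K) :=
    LinearMap.mk₂ K (fun x y => e ⟨f x y, hfX x y⟩)
      (by intro a b c; rw [← map_add]; congr 1; ext; simp)
      (by intro a b c; rw [← map_smul]; congr 1; ext; simp)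
      (by intro a b c; rw [← map_add]; congr 1; ext; simp)
      (by intro a b c; rw [← map_smul]; congr 1; ext; simp)
  have hf' : ∀ x y, f' x y = e ⟨f x y, hfX x y⟩ := fun _ _ => rfl
  obtain ⟨g, hg⟩ := h2 (Fin (Module.finrank K X) → K) f' (by
    refine ⟨fun a => ?_, fun x y z => ?_⟩
    · rw [hf']
      have : (⟨f a a, hfX a a⟩ : X) = 0 := by ext; simp [hf0]
      rw [this, map_zero]
    · simp only [hf', hb, LinearEquiv.symm_apply_apply]
      simp only [← map_add, ← map_sub]
      rw [← map_zero e]; congr 1; ext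
      simpa [hr] using hf x y z)
  refine ⟨X.subtype ∘ₗ e.symm.toLinearMap ∘ₗ g, fun x => by simp, fun x y => ?_⟩
  have := congrArg (fun v => ((e.symm v : X) : P)) (hg x y)
  simpa [hf', hb, hr] using this

/-- If `α` is a nonzero character of a 2-trivial `L` then its kernel is perfect. -/
theorem ker_character_perfect [CharZero K] [FiniteDimensional K L] (h2 : IsTwoTrivial K L)
    (α : L →ₗ[K] K) (hα : ∀ x y : L, α ⁅x, y⁆ = 0) (t : L) (ht : α t = 1)
    (J : LieIdeal K L) (hJ : ∀ x, x ∈ J ↔ α x = 0) : J ≤ ⁅J, J⁆ := by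
  classical
  set I : LieIdeal K L := ⁅J, J⁆ with hI
  let q : L →ₗ[K] L ⧸ I := (LieSubmodule.Quotient.mk' I : L →ₗ⁅K, L⁆ L ⧸ I)
  have hq : ∀ x y : L, q ⁅x, y⁆ = ⁅x, q y⁆ := fun x y => rfl
  have hq0 : ∀ x, q x = 0 ↔ x ∈ I := fun x => LieSubmodule.Quotient.mk_eq_zero I
  let ρ : L →ₗ[K] Module.End K (L ⧸ I) := 
    LinearMap.mk₂ K (fun x p => ⁅x, p⁆) add_lie smul_lie lie_add (fun c x p => lie_smul c x p)
  have hρ : ∀ (x : L) p, ρ x p = ⁅x, p⁆ := fun _ _ => rfl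
  let X : Submodule K (L ⧸ I) := (J : Submodule K L).map q
  have hJX : ∀ y ∈ J, ∀ p ∈ X, ρ y p = 0 := by
    rintro y hy _ ⟨z, hz, rfl⟩
    rw [hρ, ← hq, hq0]
    exact LieSubmodule.lie_mem_lie hy hz
  have hX : ∀ x, ∀ p ∈ X, ρ x p ∈ X := by
    rintro x _ ⟨z, hz, rfl⟩
    exact ⟨⁅x, z⁆, J.lie_mem hz, rfl⟩
  let f : L →ₗ[K] L →ₗ[K] (L ⧸ I) :=
    LinearMap.mk₂ K (fun x y => q (α x • y - α y • x))
      (by intro a b c; rw [← map_add]; congr 1; simp only [map_add]; module)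
      (by intro a b c; rw [← map_smul]; congr 1; simp only [map_smul, smul_eq_mul]; module)
      (by intro a b c; rw [← map_add]; congr 1; simp only [map_add]; module)
      (by intro a b c; rw [← map_smul]; congr 1; simp only [map_smul, smul_eq_mul]; module)
  have hf : ∀ x y, f x y = q (α x • y - α y • x) := fun _ _ => rfl
  have key : ∀ x, x - α x • t ∈ J := fun x => by rw [hJ]; simp [ht]
  obtain ⟨g, hgX, hg⟩ := exists_primitive h2 ρ (by intro x y p; simp [hρ]) X hX f
    (by
      intro x y
      refine ⟨_, ?_, rfl⟩
      refine (hJ _).2 ?_; simp [mul_comm])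
    (by intro x; simp [hf])
    (by
      intro x y z
      simp only [hρ, hf, ← hq, ← map_add, ← map_sub, hq0, hα, lie_sub, lie_smul, zero_smul]
      have e1 : α x • ⁅y, z⁆ - α y • ⁅x, z⁆ + α z • ⁅x, y⁆ ∈ I := by
        have e0 : α x • ⁅y, z⁆ - α y • ⁅x, z⁆ + α z • ⁅x, y⁆ =
            α x • ⁅y - α y • t, z - α z • t⁆ - α y • ⁅x - α x • t, z - α z • t⁆
              + α z • ⁅x - α x • t, y - α y • t⁆ := by
          simp only [sub_lie, lie_sub, smul_lie, lie_smul, lie_self]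
          rw [← lie_skew y t]
          module
        rw [e0]
        exact add_mem (sub_mem (I.smul_mem _ (LieSubmodule.lie_mem_lie (key y) (key z)))
          (I.smul_mem _ (LieSubmodule.lie_mem_lie (key x) (key z))))
          (I.smul_mem _ (LieSubmodule.lie_mem_lie (key x) (key y)))
      convert neg_mem e1 using 1
      rw [← lie_skew x y, ← lie_skew x z, ← lie_skew y z]
      module)
  -- `g` vanishes on `I`
  have hgI : ∀ x ∈ I, g x = 0 := by
    intro x hx
    rw [hI, ← LieSubmodule.mem_toSubmodule, LieSubmodule.lieIdeal_oper_eq_linear_span'] at hx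
    induction hx using Submodule.span_induction with
    | mem x h =>
      obtain ⟨a, ha, b, hb, rfl⟩ := h
      have h1 := hg a b
      rw [hf, (hJ a).1 ha, (hJ b).1 hb, hJX a ha _ (hgX b), hJX b hb _ (hgX a)] at h1
      simpa using h1.symm
    | zero => simp
    | add x y _ _ h1 h2 => simp [h1, h2]
    | smul c x _ h1 => simp [h1]
  let g' : (L ⧸ I) →ₗ[K] (L ⧸ I) := Submodule.liftQ (I : Submodule K L) g
    (fun x hx => hgI x hx)
  have hg' : ∀ x, g' (q x) = g x := fun x => rfl
  have hg'X : ∀ p ∈ X, g' p ∈ X := by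
    rintro _ ⟨z, hz, rfl⟩
    rw [hg']; exact hgX z
  let G : Module.End K X := g'.restrict hg'X
  let T : Module.End K X := (ρ t).restrict (hX t)
  have hGT : T * G - G * T = 1 := by
    ext ⟨_, z, hz, rfl⟩
    have h1 := hg t z
    rw [hf, (hJ z).1 hz, ht, hJX z hz _ (hgX t)] at h1
    change ρ t (g' (q z)) - g' (ρ t (q z)) = q z
    rw [hg', hρ, hρ, ← hq, hg', ← hρ]
    simpa using h1.symm
  have htr := congrArg (LinearMap.trace K X) hGT
  rw [map_sub, LinearMap.trace_mul_comm, sub_self, LinearMap.trace_one] at htr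
  have h0 : Module.finrank K X = 0 := by exact_mod_cast htr.symm
  have hXbot : X = ⊥ := Submodule.finrank_eq_zero.1 h0
  intro y hy
  rw [← hq0]
  have : q y ∈ X := ⟨y, hy, rfl⟩
  rw [hXbot] at this
  simpa using this

/-- Maps which act on a sequence in a strictly triangular way cannot exist in finite dimension. -/
theorem no_triangular [FiniteDimensional K L] {P : Type*} [AddCommGroup P] [Module K P]
    (G : ℕ → L →ₗ[K] P) (u : ℕ → L) (h0 : ∀ i k, i < k → G i (u k) = 0)
    (h1 : ∀ i, G i (u i) ≠ 0) : False := by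
  let c : ℕ →o (Submodule K L)ᵒᵈ :=
    ⟨fun n => OrderDual.toDual (⨅ j : Fin n, LinearMap.ker (G j)), by
      intro m n hmn
      change (⨅ j : Fin n, LinearMap.ker (G j)) ≤ ⨅ j : Fin m, LinearMap.ker (G j)
      exact le_iInf fun j => iInf_le (fun j : Fin n => LinearMap.ker (G j)) ⟨j, by omega⟩⟩
  obtain ⟨n, hn⟩ := IsArtinian.monotone_stabilizes c
  have h := hn (n + 1) (by omega)
  have h' : (⨅ j : Fin n, LinearMap.ker (G j)) = ⨅ j : Fin (n + 1), LinearMap.ker (G j) := h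
  have hu : u n ∈ ⨅ j : Fin n, LinearMap.ker (G j) := by
    simp only [Submodule.mem_iInf, LinearMap.mem_ker]
    exact fun j => h0 j n j.2
  rw [h'] at hu
  simp only [Submodule.mem_iInf, LinearMap.mem_ker] at hu
  exact h1 n (hu ⟨n, by omega⟩)

open MvPolynomial in
/-- A 1-cocycle of a 2-trivial Lie algebra has rank at most one on any subalgebra
acting trivially. -/
theorem cocycle_rank_le_one [FiniteDimensional K L] (h2 : IsTwoTrivial K L)
    {E : Type*} [AddCommGroup E] [Module K E] [FiniteDimensional K E]
    (ρ : L →ₗ[K] Module.End K E)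
    (hρ : ∀ x y p, ρ ⁅x, y⁆ p = ρ x (ρ y p) - ρ y (ρ x p))
    (γ : L →ₗ[K] E) (hγ : ∀ x y, γ ⁅x, y⁆ = ρ x (γ y) - ρ y (γ x))
    (N : LieIdeal K L) (hN : ∀ n ∈ N, ρ n = 0) (n₁ n₂ : L) (hn₁ : n₁ ∈ N) (hn₂ : n₂ ∈ N)
    (φ ψ : E →ₗ[K] K) (h11 : φ (γ n₁) = 1) (h12 : φ (γ n₂) = 0) (h22 : ψ (γ n₂) = 1) :
    False := by
  classical
  let b := Module.finBasis K E
  let ι := Fin (Module.finrank K E)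
  let P := MvPolynomial (ι ⊕ ι) K
  let ι₁ : E →ₗ[K] P := b.constr K (fun i => X (Sum.inl i))
  let ι₂ : E →ₗ[K] P := b.constr K (fun i => X (Sum.inr i))
  have hι₁ : ∀ i, ι₁ (b i) = X (Sum.inl i) := fun i => by simp [ι₁]
  have hι₂ : ∀ i, ι₂ (b i) = X (Sum.inr i) := fun i => by simp [ι₂]
  let Dx : L → Derivation K P P := fun x =>
    mkDerivation K (Sum.elim (fun i => ι₁ (ρ x (b i))) (fun i => ι₂ (ρ x (b i))))
  have hD₁ : ∀ x e, Dx x (ι₁ e) = ι₁ (ρ x e) := by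
    intro x e
    have : (Dx x).toLinearMap ∘ₗ ι₁ = ι₁ ∘ₗ ρ x := b.ext fun i => by
      change Dx x (ι₁ (b i)) = _
      rw [hι₁]; exact mkDerivation_X K _ _
    exact LinearMap.congr_fun this e
  have hD₂ : ∀ x e, Dx x (ι₂ e) = ι₂ (ρ x e) := by
    intro x e
    have : (Dx x).toLinearMap ∘ₗ ι₂ = ι₂ ∘ₗ ρ x := b.ext fun i => by
      change Dx x (ι₂ (b i)) = _
      rw [hι₂]; exact mkDerivation_X K _ _
    exact LinearMap.congr_fun this e
  have hext : ∀ D₁ D₂ : Derivation K P P, (∀ e, D₁ (ι₁ e) = D₂ (ι₁ e)) →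
      (∀ e, D₁ (ι₂ e) = D₂ (ι₂ e)) → D₁ = D₂ := by
    intro D₁ D₂ h h'
    apply derivation_ext
    rintro (i | i)
    · rw [← hι₁, h]
    · rw [← hι₂, h']
  let D : L →ₗ[K] Module.End K P :=
    { toFun := fun x => (Dx x).toLinearMap
      map_add' := by
        intro x y
        have : Dx (x + y) = Dx x + Dx y := hext _ _ (by simp [hD₁]) (by simp [hD₂])
        rw [this]; rfl
      map_smul' := by
        intro c x
        have : Dx (c • x) = c • Dx x := hext _ _ (by simp [hD₁]) (by simp [hD₂])
        rw [this]; rfl }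
  have hDx : ∀ x p, D x p = Dx x p := fun _ _ => rfl
  have hDmul : ∀ x p q, D x (p * q) = p * D x q + D x p * q := by
    intro x p q
    rw [hDx, Derivation.leibniz, hDx, hDx, smul_eq_mul, smul_eq_mul, mul_comm q]
  have hDlie : ∀ x y p, D ⁅x, y⁆ p = D x (D y p) - D y (D x p) := by
    intro x y p
    have : Dx ⁅x, y⁆ = ⁅Dx x, Dx y⁆ := hext _ _
      (by intro e; simp [Derivation.commutator_apply, hD₁, hρ])
      (by intro e; simp [Derivation.commutator_apply, hD₂, hρ])
    rw [hDx, this, Derivation.commutator_apply]; rfl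
  have hDN : ∀ n ∈ N, ∀ p, D n p = 0 := by
    intro n hn p
    have : Dx n = 0 := hext _ _ (by simp [hD₁, hN n hn]) (by simp [hD₂, hN n hn])
    rw [hDx, this]; rfl
  let M : Submodule K P := LinearMap.range ι₁ ⊔ LinearMap.range ι₂
  have hMfg : M.FG := by
    refine Submodule.FG.sup ?_ ?_
    · rw [← Submodule.map_top]; exact Module.Finite.fg_top.map ι₁
    · rw [← Submodule.map_top]; exact Module.Finite.fg_top.map ι₂
  have hM1 : ∀ e, ι₁ e ∈ M := fun e => Submodule.mem_sup_left ⟨e, rfl⟩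
  have hM2 : ∀ e, ι₂ e ∈ M := fun e => Submodule.mem_sup_right ⟨e, rfl⟩
  have hDM : ∀ x, ∀ p ∈ M, D x p ∈ M := by
    intro x p hp
    obtain ⟨_, ⟨e, rfl⟩, _, ⟨e', rfl⟩, rfl⟩ := Submodule.mem_sup.1 hp
    rw [map_add, hDx, hDx, hD₁, hD₂]
    exact add_mem (hM1 _) (hM2 _)
  have hDMk : ∀ k : ℕ, ∀ x, ∀ p ∈ M ^ (k + 1), D x p ∈ M ^ (k + 1) := by
    intro k
    induction k with
    | zero => simpa using hDM
    | succ k ih =>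
      intro x p hp
      rw [pow_succ] at hp ⊢
      induction hp using Submodule.mul_induction_on' with
      | mem_mul_mem a ha c hc =>
        rw [hDmul]
        exact add_mem (Submodule.mul_mem_mul ha (hDM x c hc))
          (Submodule.mul_mem_mul (ih x a ha) hc)
      | add a _ c _ h h' => rw [map_add]; exact add_mem h h'
  have hfd : ∀ k : ℕ, FiniteDimensional K ↥(M ^ (k + 1)) := fun k =>
    Module.Finite.iff_fg.2 (hMfg.pow _)
  let c : L →ₗ[K] P := ι₁ ∘ₗ γ
  have hc : ∀ x y, c ⁅x, y⁆ = D x (c y) - D y (c x) := by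
    intro x y
    simp only [c, LinearMap.comp_apply, hDx, hD₁, hγ, map_sub]
  let Q : ℕ → (L →ₗ[K] P) → Prop := fun k G => (∀ x, G x ∈ M ^ (k + 1)) ∧
    ∃ H : L →ₗ[K] P, ∀ x y, c x * H y - c y * H x = D x (G y) - D y (G x) - G ⁅x, y⁆
  have step : ∀ k G, Q k G → ∃ G', Q (k + 1) G' ∧
      ∀ x y, c x * G y - c y * G x = D x (G' y) - D y (G' x) - G' ⁅x, y⁆ := by
    rintro k G ⟨hG, H, hH⟩
    have := hfd (k + 1)
    let f : L →ₗ[K] L →ₗ[K] P := LinearMap.mk₂ K (fun x y => c x * G y - c y * G x)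
      (by intro a b c; simp only [map_add]; ring)
      (by intro a b c; simp only [map_smul, smul_mul_assoc, mul_smul_comm, smul_sub])
      (by intro a b c; simp only [map_add]; ring)
      (by intro a b c; simp only [map_smul, smul_mul_assoc, mul_smul_comm, smul_sub])
    have hf : ∀ x y, f x y = c x * G y - c y * G x := fun _ _ => rfl
    have hm : ∀ x y, c x * G y ∈ M ^ (k + 1 + 1) := fun x y => by
      rw [pow_succ' M (k + 1)]
      exact Submodule.mul_mem_mul (hM1 _) (hG y)
    obtain ⟨G', hG', h'⟩ := exists_primitive h2 D hDlie (M ^ (k + 1 + 1)) (hDMk (k + 1)) f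
      (by intro x y; rw [hf]; exact sub_mem (hm _ _) (hm _ _))
      (by intro x; rw [hf, sub_self])
      (by
        intro x y z
        have e : ∀ x y, G ⁅x, y⁆ = D x (G y) - D y (G x) - (c x * H y - c y * H x) := by
          intro x y; rw [hH]; ring
        simp only [hf, map_sub, hDmul, e, hc]
        ring)
    exact ⟨G', ⟨hG', G, h'⟩, h'⟩
  have base : Q 0 (ι₂ ∘ₗ γ) := by
    refine ⟨fun x => by simpa using hM2 _, 0, fun x y => ?_⟩
    simp only [LinearMap.comp_apply, hDx, hD₂, hγ, map_sub]
    simp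
  choose! nxt hnxt hnxt' using step
  let G : ℕ → L →ₗ[K] P := fun k => Nat.rec (ι₂ ∘ₗ γ) (fun k g => nxt k g) k
  have hG0 : G 0 = ι₂ ∘ₗ γ := rfl
  have hGs : ∀ k, G (k + 1) = nxt k (G k) := fun _ => rfl
  have hQ : ∀ k, Q k (G k) := by
    intro k
    induction k with
    | zero => exact base
    | succ k ih => rw [hGs]; exact hnxt k _ ih
  have hrec : ∀ k, ∀ n ∈ N, ∀ m ∈ N, G (k + 1) ⁅n, m⁆ = c m * G k n - c n * G k m := by
    intro k n hn m hm
    have h := hnxt' k _ (hQ k) n m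
    rw [← hGs, hDN n hn, hDN m hm] at h
    linear_combination h
  let u : ℕ → L := fun k => Nat.rec n₂ (fun _ w => ⁅n₁, w⁆) k
  have hus : ∀ k, u (k + 1) = ⁅n₁, u k⁆ := fun _ => rfl
  have huN : ∀ k, u k ∈ N := by
    intro k
    cases k with
    | zero => exact hn₂
    | succ k => rw [hus]; exact lie_mem_left K L N _ _ hn₁
  have hγu : ∀ k, γ (u (k + 1)) = 0 := by
    intro k
    rw [hus, hγ, hN _ hn₁, hN _ (huN k)]; simp
  have hstep : ∀ i k, G (i + 1) (u (k + 2)) = - c n₁ * G i (u (k + 1)) := by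
    intro i k
    rw [hus (k + 1), hrec i _ hn₁ _ (huN (k + 1))]
    have h0 : c (u (k + 1)) = 0 := by
      change ι₁ (γ (u (k + 1))) = 0
      rw [hγu, map_zero]
    rw [h0]; ring
  have hzero : ∀ i k, G i (u (i + 1 + k)) = 0 := by
    intro i
    induction i with
    | zero =>
      intro k
      rw [show 0 + 1 + k = k + 1 by omega, hG0, LinearMap.comp_apply, hγu, map_zero]
    | succ i ih =>
      intro k
      rw [show i + 1 + 1 + k = (i + k) + 2 by omega, hstep,
        show i + k + 1 = i + 1 + k by omega, ih, mul_zero]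
  let ev : P →ₐ[K] K := aeval (Sum.elim (fun i => φ (b i)) (fun i => ψ (b i)))
  have hev₁ : ∀ e, ev (ι₁ e) = φ e := by
    intro e
    have : ev.toLinearMap ∘ₗ ι₁ = φ := b.ext fun i => by
      change ev (ι₁ (b i)) = _
      rw [hι₁]; exact aeval_X _ _
    exact LinearMap.congr_fun this e
  have hev₂ : ∀ e, ev (ι₂ e) = ψ e := by
    intro e
    have : ev.toLinearMap ∘ₗ ι₂ = ψ := b.ext fun i => by
      change ev (ι₂ (b i)) = _
      rw [hι₂]; exact aeval_X _ _
    exact LinearMap.congr_fun this e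
  have hne : ∀ i, ev (G (i + 1) (u (i + 1))) ≠ 0 := by
    intro i
    induction i with
    | zero =>
      rw [hus 0, hrec 0 _ hn₁ _ (huN 0), hG0]
      change ev (ι₁ (γ n₂) * ι₂ (γ n₁) - ι₁ (γ n₁) * ι₂ (γ n₂)) ≠ 0
      rw [map_sub, map_mul, map_mul, hev₁, hev₁, hev₂, hev₂, h11, h12, h22]
      simp
    | succ i ih =>
      rw [hstep, map_mul, map_neg]
      refine mul_ne_zero ?_ ih
      change - ev (ι₁ (γ n₁)) ≠ 0
      rw [hev₁, h11]; simp
  exact no_triangular (fun i => G (i + 1)) (fun i => u (i + 1))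
    (fun i k hik => by
      obtain ⟨d, rfl⟩ := Nat.exists_eq_add_of_lt hik
      have := hzero (i + 1) d
      rwa [show i + 1 + 1 + d = i + d + 1 + 1 by omega] at this)
    (fun i h => hne i (by
      have h' : G (i + 1) (u (i + 1)) = 0 := h
      rw [h', map_zero]))

theorem perfect_induction (D : LieIdeal K L) (hDD : D ≤ ⁅D, D⁆) (A : Submodule K L)
    (h : ∀ x ∈ D, ∀ y ∈ D, ⁅x, y⁆ ∈ A) : ∀ x ∈ D, x ∈ A := by
  intro x hx
  have hx' := hDD hx
  rw [← LieSubmodule.mem_toSubmodule, LieSubmodule.lieIdeal_oper_eq_linear_span'] at hx'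
  refine Submodule.span_le.2 ?_ hx'
  rintro _ ⟨a, ha, b, hb, rfl⟩
  exact h a ha b hb

theorem cocycle_lie_lie_eq_zero [FiniteDimensional K L] (h2 : IsTwoTrivial K L)
    {E : Type*} [AddCommGroup E] [Module K E] [FiniteDimensional K E]
    (ρ : L →ₗ[K] Module.End K E)
    (hρ : ∀ x y p, ρ ⁅x, y⁆ p = ρ x (ρ y p) - ρ y (ρ x p))
    (γ : L →ₗ[K] E) (hγ : ∀ x y, γ ⁅x, y⁆ = ρ x (γ y) - ρ y (γ x))
    (N : LieIdeal K L) (hN : ∀ n ∈ N, ρ n = 0) (x y n : L) (hn : n ∈ N) :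
    γ ⁅⁅x, y⁆, n⁆ = 0 := by
  have h1 : ∀ x, ∀ n ∈ N, γ ⁅x, n⁆ = ρ x (γ n) := by
    intro x n hn
    rw [hγ, hN n hn]; simp
  rw [h1 _ _ hn]
  by_cases hv : γ n = 0
  · rw [hv, map_zero]
  have hmul : ∀ m ∈ N, ∃ a : K, γ m = a • γ n := by
    intro m hm
    by_contra hcon
    have hnot : γ m ∉ K ∙ γ n := by
      intro h
      obtain ⟨a, ha⟩ := Submodule.mem_span_singleton.1 h
      exact hcon ⟨a, ha.symm⟩
    obtain ⟨φ, hφ, hφ'⟩ := Submodule.exists_le_ker_of_notMem hnot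
    have hbot : γ n ∉ (⊥ : Submodule K E) := by simpa using hv
    obtain ⟨ψ, hψ, -⟩ := Submodule.exists_le_ker_of_notMem hbot
    have hφn : φ (γ n) = 0 := hφ' (Submodule.mem_span_singleton_self _)
    exact cocycle_rank_le_one h2 ρ hρ γ hγ N hN m n hm hn
      ((φ (γ m))⁻¹ • φ) ((ψ (γ n))⁻¹ • ψ)
      (by rw [LinearMap.smul_apply, smul_eq_mul, inv_mul_cancel₀ hφ])
      (by rw [LinearMap.smul_apply, hφn, smul_zero])
      (by rw [LinearMap.smul_apply, smul_eq_mul, inv_mul_cancel₀ hψ])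
  obtain ⟨a, ha⟩ := hmul ⁅x, n⁆ (N.lie_mem hn)
  obtain ⟨b, hb⟩ := hmul ⁅y, n⁆ (N.lie_mem hn)
  rw [h1 _ _ hn] at ha hb
  rw [hρ, ha, hb, map_smul, map_smul, ha, hb, smul_smul, smul_smul, mul_comm, sub_self]

theorem lie_le_of_perfect [FiniteDimensional K L] (h2 : IsTwoTrivial K L)
    (D N : LieIdeal K L) (hD : ∀ x y : L, ⁅x, y⁆ ∈ D) (hDD : D ≤ ⁅D, D⁆) :
    ⁅D, N⁆ ≤ ⁅N, N⁆ := by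
  classical
  set I : LieIdeal K L := ⁅N, N⁆ with hI
  let q : L →ₗ[K] L ⧸ I := (LieSubmodule.Quotient.mk' I : L →ₗ⁅K, L⁆ L ⧸ I)
  have hq : ∀ x y : L, q ⁅x, y⁆ = ⁅x, q y⁆ := fun x y => rfl
  have hq0 : ∀ x, q x = 0 ↔ x ∈ I := fun x => LieSubmodule.Quotient.mk_eq_zero I
  let E : Submodule K (L →ₗ[K] (L ⧸ I)) :=
    { carrier := {f | (∀ n ∈ N, f n = 0) ∧ ∀ s, ∃ n ∈ N, f s = q n}
      add_mem' := by
        rintro f g ⟨h1, h2⟩ ⟨h3, h4⟩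
        refine ⟨fun n hn => by simp [h1 n hn, h3 n hn], fun s => ?_⟩
        obtain ⟨a, ha, ha'⟩ := h2 s
        obtain ⟨b, hb, hb'⟩ := h4 s
        exact ⟨a + b, add_mem ha hb, by simp [ha', hb']⟩
      zero_mem' := ⟨fun n hn => rfl, fun s => ⟨0, zero_mem _, by simp⟩⟩
      smul_mem' := by
        rintro c f ⟨h1, h2⟩
        refine ⟨fun n hn => by simp [h1 n hn], fun s => ?_⟩
        obtain ⟨a, ha, ha'⟩ := h2 s
        exact ⟨c • a, N.smul_mem c ha, by simp [ha']⟩ }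
  have hE : ∀ x : L, ∀ f ∈ E, ⁅x, f⁆ ∈ E := by
    rintro x f ⟨h1, h2⟩
    refine ⟨fun n hn => ?_, fun s => ?_⟩
    · rw [LieHom.lie_apply, h1 n hn, h1 _ (N.lie_mem hn)]; simp
    · obtain ⟨a, ha, ha'⟩ := h2 s
      obtain ⟨b, hb, hb'⟩ := h2 ⁅x, s⁆
      exact ⟨⁅x, a⁆ - b, sub_mem (N.lie_mem ha) hb, by
        rw [LieHom.lie_apply, ha', hb', map_sub, hq]⟩
  have hNE : ∀ n ∈ N, ∀ f ∈ E, ⁅n, f⁆ = 0 := by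
    rintro n hn f ⟨h1, h2⟩
    ext s
    obtain ⟨a, ha, ha'⟩ := h2 s
    rw [LieHom.lie_apply, ha', h1 _ (lie_mem_left K L N _ _ hn), ← hq, sub_zero,
      LinearMap.zero_apply, hq0]
    exact LieSubmodule.lie_mem_lie hn ha
  let ρ : L →ₗ[K] Module.End K E :=
    LinearMap.mk₂ K (fun x f => (⟨⁅x, (f : L →ₗ[K] (L ⧸ I))⁆, hE x f f.2⟩ : E))
      (by intro a b c; ext1; simp) (by intro a b c; ext1; simp)
      (by intro a b c; ext1; simp) (by intro a b c; ext1; simp)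
  have hρ : ∀ x f, ((ρ x f : E) : L →ₗ[K] (L ⧸ I)) = ⁅x, (f : L →ₗ[K] (L ⧸ I))⁆ := fun _ _ => rfl
  obtain ⟨p₀, hp₀⟩ := (N : Submodule K L).exists_isCompl
  let p : L →ₗ[K] L := (N : Submodule K L).subtype ∘ₗ Submodule.projectionOnto _ _ hp₀
  have hpN : ∀ x, p x ∈ N := fun x => (Submodule.projectionOnto _ _ hp₀ x).2
  have hp : ∀ n ∈ N, p n = n := fun n hn =>
    congrArg Subtype.val (Submodule.projectionOnto_apply_left hp₀ ⟨n, hn⟩)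
  let w : L →ₗ[K] (L ⧸ I) := q ∘ₗ p
  have hw : ∀ s, w s = q (p s) := fun _ => rfl
  have hwE : ∀ x : L, ⁅x, w⁆ ∈ E := by
    intro x
    refine ⟨fun n hn => ?_, fun s => ⟨⁅x, p s⁆ - p ⁅x, s⁆, sub_mem (N.lie_mem (hpN _)) (hpN _), ?_⟩⟩
    · rw [LieHom.lie_apply, hw, hw, hp n hn, hp _ (N.lie_mem hn), hq, sub_self]
    · rw [LieHom.lie_apply, hw, hw, map_sub, hq]
  let γ : L →ₗ[K] E :=
    { toFun := fun x => ⟨⁅x, w⁆, hwE x⟩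
      map_add' := by intro x y; ext1; simp
      map_smul' := by intro c x; ext1; simp }
  have hγ : ∀ x, ((γ x : E) : L →ₗ[K] (L ⧸ I)) = ⁅x, w⁆ := fun _ => rfl
  have main := cocycle_lie_lie_eq_zero h2 ρ
    (by intro x y f; ext1; simp [hρ]) γ
    (by intro x y; ext1; simp [hρ, hγ]) N
    (by
      intro n hn
      ext1 f
      ext1
      rw [hρ, hNE n hn _ f.2]; rfl)
  have main' : ∀ x y n : L, n ∈ N → ∀ s : L, ⁅s, ⁅⁅x, y⁆, n⁆⁆ ∈ I := by
    intro x y n hn s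
    have h := main x y n hn
    have h' : ⁅⁅⁅x, y⁆, n⁆, w⁆ = 0 := by rw [← hγ, h]; rfl
    have h'' := LinearMap.congr_fun h' s
    have hm : ⁅⁅x, y⁆, n⁆ ∈ N := N.lie_mem hn
    rw [LieHom.lie_apply, hw, hw, hp _ (lie_mem_left K L N _ _ hm), ← hq, ← map_sub,
      LinearMap.zero_apply, hq0] at h''
    have h3 : ⁅⁅⁅x, y⁆, n⁆, p s⁆ ∈ I := LieSubmodule.lie_mem_lie hm (hpN s)
    have h4 := sub_mem h'' h3
    rw [sub_sub_cancel_left, lie_skew] at h4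
    exact h4
  have step1 : ∀ d ∈ D, ∀ n ∈ N, ∀ s : L, ⁅s, ⁅d, n⁆⁆ ∈ I := by
    intro d hd
    refine perfect_induction D hDD
      { carrier := {d | ∀ n ∈ N, ∀ s : L, ⁅s, ⁅d, n⁆⁆ ∈ I}
        add_mem' := fun {a b} ha hb n hn s => by
          rw [add_lie, lie_add]; exact add_mem (ha n hn s) (hb n hn s)
        zero_mem' := fun n hn s => by
          rw [zero_lie, lie_zero]; exact zero_mem _
        smul_mem' := fun c a ha n hn s => by
          rw [smul_lie, lie_smul]; exact I.smul_mem c (ha n hn s) } ?_ d hd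
    intro x _ y _ n hn s
    exact main' x y n hn s
  have step2 : ∀ d ∈ D, ∀ n ∈ N, ⁅d, n⁆ ∈ I := by
    intro d hd
    refine perfect_induction D hDD
      { carrier := {d | ∀ n ∈ N, ⁅d, n⁆ ∈ I}
        add_mem' := fun {a b} ha hb n hn => by
          rw [add_lie]; exact add_mem (ha n hn) (hb n hn)
        zero_mem' := fun n hn => by
          rw [zero_lie]; exact zero_mem _
        smul_mem' := fun c a ha n hn => by
          rw [smul_lie]; exact I.smul_mem c (ha n hn) } ?_ d hd
    intro x hx y hy n hn
    rw [lie_lie]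
    exact sub_mem (step1 y hy n hn x) (step1 x hx n hn y)
  rw [LieSubmodule.lie_le_iff]
  exact step2

theorem killing_two_cocycle {S : Type*} [LieRing S] [LieAlgebra K S] [FiniteDimensional K S]
    [LieAlgebra.IsKilling K S] (f : S →ₗ[K] S →ₗ[K] K) (hf0 : ∀ x y, f x y = - f y x)
    (hf : ∀ x y z, f ⁅x, y⁆ z + f ⁅y, z⁆ x + f ⁅z, x⁆ y = 0) :
    ∃ d : S, ∀ x y, f x y = killingForm K S d ⁅x, y⁆ := by
  have hnd := LieAlgebra.IsKilling.killingForm_nondegenerate K S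
  let δ : S →ₗ[K] S :=
    (LinearMap.BilinForm.toDual (killingForm K S) hnd).symm.toLinearMap ∘ₗ f
  have hδ : ∀ x y, killingForm K S (δ x) y = f x y := fun x y =>
    LinearMap.BilinForm.apply_toDual_symm_apply (hB := hnd) (f x) y
  let δ' : LieDerivation K S S :=
    { toLinearMap := δ
      leibniz' := by
        intro a b
        rw [← sub_eq_zero]
        refine hnd.1 _ fun z => ?_
        have e1 : killingForm K S ⁅a, δ b⁆ z = - killingForm K S (δ b) ⁅a, z⁆ :=
          LieModule.traceForm_apply_lie_apply' K S S a (δ b) z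
        have e2 : killingForm K S ⁅b, δ a⁆ z = - killingForm K S (δ a) ⁅b, z⁆ :=
          LieModule.traceForm_apply_lie_apply' K S S b (δ a) z
        rw [map_sub, map_sub, LinearMap.sub_apply, LinearMap.sub_apply, e1, e2, hδ, hδ, hδ,
          hf0 b, hf0 a ⁅b, z⁆]
        have h := hf a b z
        rw [← lie_skew z a, map_neg, LinearMap.neg_apply] at h
        linear_combination h }
  obtain ⟨d, hd⟩ := LieDerivation.IsKilling.exists_eq_ad δ'
  refine ⟨d, fun x y => ?_⟩
  have hx : ⁅d, x⁆ = δ x := by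
    have := congrArg (fun t : LieDerivation K S S => t x) hd
    exact (by simpa using this : ⁅d, x⁆ = δ' x)
  rw [← hδ, ← hx]
  exact LieModule.traceForm_apply_lie_apply K S S d x y

theorem killing_functional_eq_zero {S : Type*} [LieRing S] [LieAlgebra K S]
    [FiniteDimensional K S] [LieAlgebra.IsKilling K S] (φ : S →ₗ[K] K)
    (h : ∀ x y : S, φ ⁅x, y⁆ = 0) : φ = 0 := by
  have hnd := LieAlgebra.IsKilling.killingForm_nondegenerate K S
  let y : S := (LinearMap.BilinForm.toDual (killingForm K S) hnd).symm φ
  have hy : ∀ x, killingForm K S y x = φ x := fun x =>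
    LinearMap.BilinForm.apply_toDual_symm_apply (hB := hnd) φ x
  have h0 : ∀ a : S, ⁅y, a⁆ = 0 := by
    intro a
    refine hnd.1 _ fun b => ?_
    have := LieModule.traceForm_apply_lie_apply K S S y a b
    exact this.trans ((hy _).trans (h a b))
  have h1 : LieAlgebra.ad K S y = 0 := by
    ext a; simpa using h0 a
  ext x
  rw [← hy, killingForm_apply_apply, h1]
  simp

theorem solvable_of_derived_le [FiniteDimensional K L] (J R : LieIdeal K L)
    (hR : LieAlgebra.IsSolvable R) (k : ℕ)
    (h : LieAlgebra.derivedSeriesOfIdeal K L k J ≤ R) : LieAlgebra.IsSolvable J := by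
  obtain ⟨l, hl⟩ := LieAlgebra.IsSolvable.solvable K R
  rw [LieIdeal.derivedSeries_eq_bot_iff] at hl
  refine LieAlgebra.IsSolvable.mk (R := K) (k := l + k) ?_
  rw [LieIdeal.derivedSeries_eq_bot_iff, LieAlgebra.derivedSeriesOfIdeal_add, eq_bot_iff, ← hl]
  exact LieAlgebra.derivedSeriesOfIdeal_mono h l

theorem trivialRadical_quotient [FiniteDimensional K L] :
    LieAlgebra.HasTrivialRadical K (L ⧸ LieAlgebra.radical K L) := by
  set R := LieAlgebra.radical K L with hR
  refine LieAlgebra.hasTrivialRadical_of_no_solvable_ideals fun J hJ => ?_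
  let π : L →ₗ⁅K⁆ (L ⧸ R) :=
    { (LieSubmodule.Quotient.mk' R : L →ₗ[K] L ⧸ R) with map_lie' := by intro x y; rfl }
  have hπ0 : ∀ x, π x = 0 ↔ x ∈ R := fun x => LieSubmodule.Quotient.mk_eq_zero R
  obtain ⟨k, hk⟩ := LieAlgebra.IsSolvable.solvable K J
  rw [LieIdeal.derivedSeries_eq_bot_iff] at hk
  have hle : ∀ k, LieAlgebra.derivedSeriesOfIdeal K L k (J.comap π) ≤
      (LieAlgebra.derivedSeriesOfIdeal K (L ⧸ R) k J).comap π := by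
    intro k
    induction k with
    | zero => exact le_rfl
    | succ k ih =>
      rw [LieAlgebra.derivedSeriesOfIdeal_succ, LieAlgebra.derivedSeriesOfIdeal_succ]
      refine (LieSubmodule.mono_lie ih ih).trans ?_
      rw [LieSubmodule.lie_le_iff]
      intro x hx y hy
      rw [LieIdeal.mem_comap] at hx hy ⊢
      rw [LieHom.map_lie]
      exact LieSubmodule.lie_mem_lie hx hy
  have hs : LieAlgebra.IsSolvable (J.comap π) := by
    refine solvable_of_derived_le _ R inferInstance k fun x hx => ?_
    have := hle k hx
    rw [LieIdeal.mem_comap, hk, LieSubmodule.mem_bot, hπ0] at this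
    exact this
  rw [LieAlgebra.LieIdeal.solvable_iff_le_radical] at hs
  rw [eq_bot_iff]
  intro s hs'
  obtain ⟨x, rfl⟩ := LieSubmodule.Quotient.surjective_mk' R s
  have hx : x ∈ J.comap π := hs'
  rw [LieSubmodule.mem_bot]
  exact (hπ0 x).2 (hs hx)

theorem radical_inf_perfect_le [CharZero K] [FiniteDimensional K L]
    (D N : LieIdeal K L) (hD : ∀ x y : L, ⁅x, y⁆ ∈ D) (hDD : D ≤ ⁅D, D⁆)
    (hN : N = LieAlgebra.radical K L ⊓ D) (hDN : ⁅D, N⁆ ≤ ⁅N, N⁆) : N ≤ ⁅N, N⁆ := by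
  classical
  set R := LieAlgebra.radical K L with hR
  have hrad : LieAlgebra.HasTrivialRadical K (L ⧸ R) := trivialRadical_quotient
  have hkill : LieAlgebra.IsKilling K (L ⧸ R) := inferInstance
  let π : L →ₗ⁅K⁆ (L ⧸ R) :=
    { (LieSubmodule.Quotient.mk' R : L →ₗ[K] L ⧸ R) with map_lie' := by intro x y; rfl }
  have hπ0 : ∀ x, π x = 0 ↔ x ∈ R := fun x => LieSubmodule.Quotient.mk_eq_zero R
  have hπs : ∀ s, ∃ x, π x = s := LieSubmodule.Quotient.surjective_mk' R
  let πD : D →ₗ[K] (L ⧸ R) := (π : L →ₗ[K] L ⧸ R) ∘ₗ (D : Submodule K L).subtype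
  have hπD : ∀ x : D, πD x = π x := fun _ => rfl
  have hsurj : LinearMap.range πD = ⊤ := by
    by_contra hne
    obtain ⟨s, -, hs⟩ := SetLike.exists_of_lt (lt_top_iff_ne_top.2 hne)
    obtain ⟨φ, hφ, hφ'⟩ := Submodule.exists_le_ker_of_notMem hs
    apply hφ
    rw [killing_functional_eq_zero φ, LinearMap.zero_apply]
    intro a b
    obtain ⟨x, rfl⟩ := hπs a
    obtain ⟨y, rfl⟩ := hπs b
    rw [← LieHom.map_lie]
    exact hφ' ⟨⟨⁅x, y⁆, hD x y⟩, rfl⟩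
  obtain ⟨τ, hτ⟩ := LinearMap.exists_rightInverse_of_surjective πD hsurj
  let σ : (L ⧸ R) →ₗ[K] L := (D : Submodule K L).subtype ∘ₗ τ
  have hσD : ∀ s, σ s ∈ D := fun s => (τ s).2
  have hσ : ∀ s, π (σ s) = s := fun s => LinearMap.congr_fun hτ s
  have hRN : ∀ x ∈ D, π x = 0 → x ∈ N := by
    intro x hx h
    rw [hN]
    exact ⟨(hπ0 x).1 h, hx⟩
  have hNR : ∀ x ∈ N, π x = 0 := by
    intro x hx
    rw [hN] at hx
    exact (hπ0 x).2 hx.1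
  intro w hw
  by_contra hwN
  obtain ⟨φ, hφ, hφ'⟩ := Submodule.exists_le_ker_of_notMem
    (p := ((⁅N, N⁆ : LieIdeal K L) : Submodule K L)) hwN
  have hφ0 : ∀ d ∈ D, ∀ n ∈ N, φ ⁅d, n⁆ = 0 := fun d hd n hn =>
    hφ' (hDN (LieSubmodule.lie_mem_lie hd hn))
  have hφ1 : ∀ d ∈ D, ∀ n ∈ N, φ ⁅n, d⁆ = 0 := fun d hd n hn => by
    rw [← lie_skew, map_neg, hφ0 d hd n hn, neg_zero]
  -- brackets in `D` only depend on the images in the quotient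
  have hdep : ∀ x ∈ D, ∀ y ∈ D, φ ⁅σ (π x), σ (π y)⁆ = φ ⁅x, y⁆ := by
    intro x hx y hy
    have hx' : σ (π x) - x ∈ N := hRN _ (sub_mem (hσD _) hx) (by rw [map_sub, hσ, sub_self])
    have hy' : σ (π y) - y ∈ N := hRN _ (sub_mem (hσD _) hy) (by rw [map_sub, hσ, sub_self])
    have e1 := hφ1 _ (hσD (π y)) _ hx'
    have e2 := hφ0 _ hx _ hy'
    rw [sub_lie, map_sub] at e1
    rw [lie_sub, map_sub] at e2
    linear_combination e1 + e2
  let f : (L ⧸ R) →ₗ[K] (L ⧸ R) →ₗ[K] K :=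
    LinearMap.mk₂ K (fun a b => φ ⁅σ a, σ b⁆)
      (by intro a b c; simp) (by intro a b c; simp)
      (by intro a b c; simp) (by intro a b c; simp)
  have hf : ∀ a b, f a b = φ ⁅σ a, σ b⁆ := fun _ _ => rfl
  obtain ⟨d, hd⟩ := killing_two_cocycle f
    (by intro x y; rw [hf, hf, ← lie_skew, map_neg])
    (by
      have key : ∀ a b c, f ⁅a, b⁆ c = φ ⁅⁅σ a, σ b⁆, σ c⁆ := by
        intro a b c
        have := hdep ⁅σ a, σ b⁆ (hD _ _) (σ c) (hσD c)
        rwa [LieHom.map_lie, hσ, hσ, hσ] at this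
      intro x y z
      rw [key, key, key, ← map_add, ← map_add]
      have h' : ⁅⁅σ x, σ y⁆, σ z⁆ + ⁅⁅σ y, σ z⁆, σ x⁆ + ⁅⁅σ z, σ x⁆, σ y⁆ = 0 := by
        have h := lie_jacobi (σ x) (σ y) (σ z)
        rw [← lie_skew ⁅σ x, σ y⁆, ← lie_skew ⁅σ y, σ z⁆, ← lie_skew ⁅σ z, σ x⁆,
          ← neg_eq_zero, ← h]
        abel
      rw [h', map_zero])
  have hall : ∀ x ∈ D, x ∈ LinearMap.ker (φ - (killingForm K (L ⧸ R) d) ∘ₗ (π : L →ₗ[K] L ⧸ R)) := by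
    refine perfect_induction D hDD _ fun x hx y hy => ?_
    rw [LinearMap.mem_ker, LinearMap.sub_apply, sub_eq_zero, ← hdep x hx y hy, ← hf, hd,
      LinearMap.comp_apply]
    exact congrArg _ (LieHom.map_lie π x y).symm
  have hwD : w ∈ D := by rw [hN] at hw; exact hw.2
  have := hall w hwD
  rw [LinearMap.mem_ker, LinearMap.sub_apply, sub_eq_zero, LinearMap.comp_apply] at this
  apply hφ
  rw [this]
  change killingForm K (L ⧸ R) d (π w) = 0
  rw [hNR w hw, map_zero]

theorem radical_inf_perfect_eq_bot [CharZero K] [FiniteDimensional K L] (h2 : IsTwoTrivial K L)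
    (D : LieIdeal K L) (hD : ∀ x y : L, ⁅x, y⁆ ∈ D) (hDD : D ≤ ⁅D, D⁆) :
    LieAlgebra.radical K L ⊓ D = ⊥ := by
  set N := LieAlgebra.radical K L ⊓ D with hN
  have h := radical_inf_perfect_le D N hD hDD hN (lie_le_of_perfect h2 D N hD hDD)
  have hsol : LieAlgebra.IsSolvable N :=
    (LieAlgebra.LieIdeal.solvable_iff_le_radical K L N).2 inf_le_left
  obtain ⟨k, hk⟩ := LieAlgebra.IsSolvable.solvable K N
  rw [LieIdeal.derivedSeries_eq_bot_iff] at hk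
  have hall : ∀ k, N ≤ LieAlgebra.derivedSeriesOfIdeal K L k N := by
    intro k
    induction k with
    | zero => exact le_rfl
    | succ k ih =>
      rw [LieAlgebra.derivedSeriesOfIdeal_succ]
      exact h.trans (LieSubmodule.mono_lie ih ih)
  rw [eq_bot_iff, ← hk]
  exact hall k

theorem radical_of_direct_factor [FiniteDimensional K L] (D A : LieIdeal K L)
    (hDA : IsCompl D A) (h : LieAlgebra.radical K L ⊓ D = ⊥) :
    LieAlgebra.radical K ↥D = ⊥ := by
  have hzero : ∀ d ∈ D, ∀ a ∈ A, ⁅a, d⁆ = 0 := by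
    intro d hd a ha
    have h1 : ⁅a, d⁆ ∈ D ⊓ A := ⟨D.lie_mem hd, lie_mem_left K L A _ _ ha⟩
    rw [hDA.inf_eq_bot] at h1
    simpa using h1
  set Q := LieAlgebra.radical K ↥D with hQ
  let M : LieIdeal K L :=
    { (Q : Submodule K D).map (D : Submodule K L).subtype with
      lie_mem := by
        rintro x _ ⟨q, hq, rfl⟩
        have hx : x ∈ D ⊔ A := by rw [hDA.sup_eq_top]; trivial
        obtain ⟨d, hd, a, ha, rfl⟩ := (LieSubmodule.mem_sup D A x).1 hx
        refine ⟨(⁅(⟨d, hd⟩ : D), (⟨q.1, q.2⟩ : D)⁆ : D), Q.lie_mem hq, ?_⟩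
        change ⁅d, (q : L)⁆ = ⁅d + a, (q : L)⁆
        rw [add_lie, hzero _ q.2 a ha, add_zero] }
  have hM : ∀ q : D, q ∈ Q → (q : L) ∈ M := fun q hq => ⟨q, hq, rfl⟩
  have hMD : ∀ x ∈ M, ∃ q : D, q ∈ Q ∧ (q : L) = x := fun x ⟨q, hq, e⟩ => ⟨q, hq, e⟩
  have hMle : M ≤ D := by
    rintro x hx
    obtain ⟨q, -, rfl⟩ := hMD x hx
    exact q.2
  have hsol : LieAlgebra.IsSolvable M := by
    let j : M →ₗ⁅K⁆ Q :=
      { toFun := fun x => ⟨⟨x, hMle x.2⟩, by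
          obtain ⟨q, hq, e⟩ := hMD x x.2
          have : (⟨x, hMle x.2⟩ : D) = q := Subtype.ext e.symm
          rw [this]; exact hq⟩
        map_add' := fun _ _ => rfl
        map_smul' := fun _ _ => rfl
        map_lie' := rfl }
    have hj : Function.Injective j := by
      intro x y hxy
      ext
      exact congrArg (fun t : Q => ((t : D) : L)) hxy
    exact hj.lieAlgebra_isSolvable
  have hMbot : M ≤ ⊥ := by
    rw [← h]
    exact le_inf ((LieAlgebra.LieIdeal.solvable_iff_le_radical K L M).1 hsol) hMle
  rw [eq_bot_iff]
  intro q hq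
  have := hMbot (hM q hq)
  rw [LieSubmodule.mem_bot] at this ⊢
  exact Subtype.ext this

end Helpers

/-- **A converse to the Second Whitehead Lemma.**
A finite-dimensional Lie algebra over a field of characteristic zero whose second cohomology
vanishes in every finite-dimensional module is one-dimensional, semisimple, or the direct sum
of a semisimple Lie algebra and a one-dimensional Lie algebra. -/
theorem converse_second_whitehead_lemma
    (K : Type u) (L : Type v) [Field K] [CharZero K]
    [LieRing L] [LieAlgebra K L] [FiniteDimensional K L]
    (h2 : IsTwoTrivial K L) :
    Module.finrank K L = 1 ∨ LieAlgebra.radical K L = ⊥ ∨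
      ∃ S A : LieIdeal K L, IsCompl S A ∧
        LieAlgebra.radical K ↥S = ⊥ ∧ Module.finrank K ↥A = 1 := by
  classical
  right
  have hDmem : ∀ x y : L, ⁅x, y⁆ ∈ (⁅(⊤ : LieIdeal K L), (⊤ : LieIdeal K L)⁆ : LieIdeal K L) :=
    fun x y => LieSubmodule.lie_mem_lie (LieSubmodule.mem_top x) (LieSubmodule.mem_top y)
  by_cases hD : (⁅(⊤ : LieIdeal K L), (⊤ : LieIdeal K L)⁆ : LieIdeal K L) = ⊤
  · left
    have h := radical_inf_perfect_eq_bot h2 ⊤ (fun x y => LieSubmodule.mem_top _) hD.ge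
    rwa [inf_top_eq] at h
  · obtain ⟨t₀, -, ht₀⟩ := SetLike.exists_of_lt (lt_top_iff_ne_top.2 hD)
    obtain ⟨β, hβ, hβ'⟩ := Submodule.exists_le_ker_of_notMem
      (p := ((⁅(⊤ : LieIdeal K L), (⊤ : LieIdeal K L)⁆ : LieIdeal K L) : Submodule K L)) ht₀
    have hβ0 : ∀ x y : L, β ⁅x, y⁆ = 0 := fun x y => hβ' (hDmem x y)
    let J : LieIdeal K L :=
      { LinearMap.ker β with lie_mem := fun {x m} _ => hβ0 x m }
    have hJ : ∀ x, x ∈ J ↔ β x = 0 := fun x => Iff.rfl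
    have hJJ : J ≤ ⁅J, J⁆ := by
      refine ker_character_perfect h2 ((β t₀)⁻¹ • β) (fun x y => ?_) t₀ ?_ J (fun x => ?_)
      · rw [LinearMap.smul_apply, hβ0, smul_zero]
      · rw [LinearMap.smul_apply, smul_eq_mul, inv_mul_cancel₀ hβ]
      · rw [hJ, LinearMap.smul_apply, smul_eq_mul, mul_eq_zero, inv_eq_zero]
        exact ⟨Or.inr, fun h => h.resolve_left hβ⟩
    have hbot := radical_inf_perfect_eq_bot h2 J (fun x y => (hJ _).2 (hβ0 x y)) hJJ
    by_cases hR : LieAlgebra.radical K L = ⊥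
    · exact Or.inl hR
    right
    set A := LieAlgebra.radical K L with hA
    obtain ⟨r, hr, hr0⟩ : ∃ r ∈ A, r ≠ 0 := by
      by_contra! hcon
      exact hR ((LieSubmodule.eq_bot_iff A).2 hcon)
    have hker : ∀ a ∈ A, β a = 0 → a = 0 := by
      intro a ha h
      have h1 : a ∈ A ⊓ J := ⟨ha, (hJ a).2 h⟩
      rw [hbot] at h1
      simpa using h1
    have hβr : β r ≠ 0 := fun h => hr0 (hker r hr h)
    have hcompl : IsCompl J A := by
      refine ⟨disjoint_iff.2 (by rw [inf_comm]; exact hbot), codisjoint_iff.2 ?_⟩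
      rw [eq_top_iff]
      intro x _
      rw [LieSubmodule.mem_sup]
      refine ⟨x - (β x * (β r)⁻¹) • r, ?_, (β x * (β r)⁻¹) • r, A.smul_mem _ hr, by abel⟩
      rw [hJ, map_sub, map_smul, smul_eq_mul, mul_assoc, inv_mul_cancel₀ hβr, mul_one, sub_self]
    refine ⟨J, A, hcompl, radical_of_direct_factor J A hcompl hbot, ?_⟩
    refine finrank_eq_one (⟨r, hr⟩ : A) ?_ ?_
    · intro h
      exact hr0 (congrArg Subtype.val h)
    · rintro ⟨a, ha⟩
      refine ⟨β a * (β r)⁻¹, Subtype.ext ?_⟩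
      have h1 : a - (β a * (β r)⁻¹) • r = 0 := by
        refine hker _ (sub_mem ha (A.smul_mem _ hr)) ?_
        rw [map_sub, map_smul, smul_eq_mul, mul_assoc, inv_mul_cancel₀ hβr, mul_one, sub_self]
      exact (sub_eq_zero.1 h1).symm
end

section
/- Let L be a finite-dimensional Lie algebra over a field K of characteristic zero, V a finite-dimensional L-module, and I an ideal of L of codimension 1. Then for any natural number n ≥ 1 and any x ∈ L with x ∉ I, there is an isomorphism of vector spaces H^n(L,V) ≅ H^n(I,V)^x ⊕ H^{n−1}(I,V)^x. -/
namespace CE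

variable (K : Type*) [Field K]
variable (L : Type*) [LieRing L] [LieAlgebra K L]
variable (V : Type*) [AddCommGroup V] [Module K V] [LieRingModule L V] [LieModule K L V]

/-- The submodule of `(Fin n → L) → V` consisting of alternating multilinear `n`-cochains. -/
def Cc (n : ℕ) : Submodule K ((Fin n → L) → V) where
  carrier := {f |
    (∀ (y : Fin n → L) (i : Fin n) (a b : L),
      f (Function.update y i (a + b)) = f (Function.update y i a) + f (Function.update y i b)) ∧
    (∀ (y : Fin n → L) (i : Fin n) (c : K) (a : L),
      f (Function.update y i (c • a)) = c • f (Function.update y i a)) ∧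
    (∀ (y : Fin n → L) (i j : Fin n), i ≠ j → y i = y j → f y = 0)}
  add_mem' := by
    rintro f g ⟨hf1, hf2, hf3⟩ ⟨hg1, hg2, hg3⟩
    refine ⟨fun y i a b => ?_, fun y i c a => ?_, fun y i j hij hy => ?_⟩
    · simp only [Pi.add_apply, hf1 y i a b, hg1 y i a b, add_add_add_comm]
    · simp only [Pi.add_apply, hf2 y i c a, hg2 y i c a, smul_add]
    · simp only [Pi.add_apply, hf3 y i j hij hy, hg3 y i j hij hy, add_zero]
  zero_mem' := by
    refine ⟨fun y i a b => ?_, fun y i c a => ?_, fun y i j hij hy => ?_⟩ <;> simp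
  smul_mem' := by
    rintro c f ⟨hf1, hf2, hf3⟩
    refine ⟨fun y i a b => ?_, fun y i d a => ?_, fun y i j hij hy => ?_⟩
    · simp only [Pi.smul_apply, hf1 y i a b, smul_add]
    · simp only [Pi.smul_apply, hf2 y i d a]
      rw [smul_comm]
    · simp only [Pi.smul_apply, hf3 y i j hij hy, smul_zero]

/-- The raw Chevalley–Eilenberg differential, as a function. -/
def dAux : ∀ (n : ℕ), ((Fin n → L) → V) → (Fin (n + 1) → L) → V
  | 0, f, x => ⁅x 0, f Fin.elim0⁆
  | (m + 1), f, x =>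
      (∑ i : Fin (m + 2), ((-1 : ℤ) ^ (i : ℕ)) • ⁅x i, f (x ∘ i.succAbove)⁆) +
      ∑ i : Fin (m + 2), ∑ j : Fin (m + 2),
        if h : (i : ℕ) < (j : ℕ) then
          ((-1 : ℤ) ^ ((i : ℕ) + (j : ℕ))) •
            f (Fin.cons ⁅x i, x j⁆ fun k =>
                x (j.succAbove ((Fin.castLT i
                  (lt_of_lt_of_le h (Nat.lt_succ_iff.mp j.isLt))).succAbove k)))
        else 0

/-- The Chevalley–Eilenberg differential, as a linear map on all raw cochains. -/
def dRaw (n : ℕ) : ((Fin n → L) → V) →ₗ[K] ((Fin (n + 1) → L) → V) where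
  toFun := dAux L V n
  map_add' f g := by
    have hsplit : ∀ (P : Prop) [Decidable P] (a b : P → V),
        (if h : P then a h + b h else 0) =
          (if h : P then a h else 0) + (if h : P then b h else 0) := by
      intro P _ a b; split <;> simp
    funext x
    cases n with
    | zero => simp [dAux]
    | succ m =>
      simp only [dAux, Pi.add_apply, lie_add, smul_add, hsplit, Finset.sum_add_distrib]
      abel
  map_smul' c f := by
    funext x
    cases n with
    | zero => simp [dAux]
    | succ m =>
      simp only [dAux, Pi.smul_apply, lie_smul, RingHom.id_apply, smul_add, Finset.smul_sum]
      congr 1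
      · exact Finset.sum_congr rfl fun i _ => smul_comm _ _ _
      · refine Finset.sum_congr rfl fun i _ => Finset.sum_congr rfl fun j _ => ?_
        split
        · exact smul_comm _ _ _
        · simp

/-- Cocycles. -/
def Zc (n : ℕ) : Submodule K ((Fin n → L) → V) :=
  Cc K L V n ⊓ LinearMap.ker (dRaw K L V n)

/-- Coboundaries. -/
def Bc : ∀ n : ℕ, Submodule K ((Fin n → L) → V)
  | 0 => ⊥
  | (m + 1) => Submodule.map (dRaw K L V m) (Cc K L V m)

/-- The `n`-th Chevalley–Eilenberg cohomology. -/
abbrev Hq (n : ℕ) :=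
  ↥(Zc K L V n) ⧸ Submodule.comap (Zc K L V n).subtype (Bc K L V n)

end CE

namespace CE

variable (K : Type*) [Field K]
variable (L : Type*) [LieRing L] [LieAlgebra K L]
variable (V : Type*) [AddCommGroup V] [Module K V] [LieRingModule L V] [LieModule K L V]
variable (I : LieSubalgebra K L)

/-- The action of an element `x ∈ L` on the `n`-cochains of an ideal `I ≤ L` with
coefficients in `V`: `(x·f)(y₁,…,yₙ) = x·f(y₁,…,yₙ) − Σᵢ f(y₁,…,⁅x,yᵢ⁆,…,yₙ)`. -/
def actRaw (hI : ∀ a b : L, b ∈ I → ⁅a, b⁆ ∈ I) (x : L) (n : ℕ) :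
    ((Fin n → ↥I) → V) →ₗ[K] ((Fin n → ↥I) → V) where
  toFun f := fun y =>
    ⁅x, f y⁆ - ∑ i : Fin n, f (Function.update y i ⟨⁅x, (y i : L)⁆, hI x (y i) (y i).2⟩)
  map_add' f g := by
    funext y
    simp only [Pi.add_apply, lie_add, Finset.sum_add_distrib]
    abel
  map_smul' c f := by
    funext y
    simp only [Pi.smul_apply, lie_smul, RingHom.id_apply, Finset.smul_sum, smul_sub]

/-- The cocycles whose cohomology class is annihilated by the induced action of `x`:
cocycles `f` such that `x·f` is a coboundary. -/
def ZxInv (hI : ∀ a b : L, b ∈ I → ⁅a, b⁆ ∈ I) (x : L) (n : ℕ) :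
    Submodule K ((Fin n → ↥I) → V) :=
  Zc K ↥I V n ⊓ (Bc K ↥I V n).comap (actRaw K L V I hI x n)

/-- `Hⁿ(I,V)ˣ`: the subspace of `Hⁿ(I,V)` consisting of the classes annihilated by the
induced action of `x`, i.e. the image in `Hⁿ(I,V)` of the cocycles `f` with `x·f` a
coboundary. -/
def HInv (hI : ∀ a b : L, b ∈ I → ⁅a, b⁆ ∈ I) (x : L) (n : ℕ) :
    Submodule K (Hq K ↥I V n) :=
  ((ZxInv K L V I hI x n).comap (Zc K ↥I V n).subtype).map
    (Submodule.mkQ (Submodule.comap (Zc K ↥I V n).subtype (Bc K ↥I V n)))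

end CE

namespace CE

section calculus

set_option linter.unusedSectionVars false

variable {K : Type*} [Field K]
variable {L : Type*} [LieRing L] [LieAlgebra K L]
variable {V : Type*} [AddCommGroup V] [Module K V] [LieRingModule L V] [LieModule K L V]

/-- Turn a cochain into a Mathlib alternating map. -/
def toAlt {n : ℕ} (f : (Fin n → L) → V) (hf : f ∈ Cc K L V n) : L [⋀^Fin n]→ₗ[K] V where
  toFun := f
  map_update_add' := by
    intro inst y i a b
    have : inst = instDecidableEqFin n := Subsingleton.elim _ _
    subst this
    exact hf.1 y i a b
  map_update_smul' := by
    intro inst y i a b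
    have : inst = instDecidableEqFin n := Subsingleton.elim _ _
    subst this
    exact hf.2.1 y i a b
  map_eq_zero_of_eq' := fun y i j h hij => hf.2.2 y i j hij h

theorem toAlt_apply {n : ℕ} (f : (Fin n → L) → V) (hf : f ∈ Cc K L V n) (y : Fin n → L) :
    toAlt f hf y = f y := rfl

theorem alt_mem {n : ℕ} (g : L [⋀^Fin n]→ₗ[K] V) : (fun y => g y) ∈ Cc K L V n :=
  ⟨fun y i a b => g.map_update_add y i a b, fun y i c a => g.map_update_smul y i c a,
    fun y _ _ hij h => g.map_eq_zero_of_eq y h hij⟩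

/-- Contraction with `y`. -/
def contr {n : ℕ} (y : L) (f : (Fin (n + 1) → L) → V) : (Fin n → L) → V := fun z => f (Fin.cons y z)

/-- Lie derivative. -/
def th {n : ℕ} (x : L) (f : (Fin n → L) → V) : (Fin n → L) → V :=
  fun y => ⁅x, f y⁆ - ∑ i : Fin n, f (Function.update y i ⁅x, y i⁆)

theorem contr_ext {n : ℕ} {f g : (Fin (n + 1) → L) → V} (h : ∀ y, contr y f = contr y g) : f = g := by
  funext z
  have := congrFun (h (z 0)) (Fin.tail z)
  simpa [contr, Fin.cons_self_tail] using this

theorem contr_add {n : ℕ} (y : L) (f g : (Fin (n + 1) → L) → V) :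
    contr y (f + g) = contr y f + contr y g := rfl
theorem contr_sub {n : ℕ} (y : L) (f g : (Fin (n + 1) → L) → V) :
    contr y (f - g) = contr y f - contr y g := rfl
theorem contr_neg {n : ℕ} (y : L) (f : (Fin (n + 1) → L) → V) :
    contr y (-f) = - contr y f := rfl
theorem contr_zero {n : ℕ} (y : L) : contr y (0 : (Fin (n + 1) → L) → V) = 0 := rfl

theorem contr_mem {n : ℕ} (y : L) {f : (Fin (n + 1) → L) → V} (hf : f ∈ Cc K L V (n + 1)) :
    contr y f ∈ Cc K L V n := by
  refine ⟨fun z i a b => ?_, fun z i c a => ?_, fun z i j hij h => ?_⟩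
  · simp only [contr, Fin.cons_update]; exact hf.1 _ _ _ _
  · simp only [contr, Fin.cons_update]; exact hf.2.1 _ _ _ _
  · exact hf.2.2 _ i.succ j.succ (by simpa using hij) (by simpa using h)

theorem contr_add_left {n : ℕ} {f : (Fin (n + 1) → L) → V} (hf : f ∈ Cc K L V (n + 1)) (a b : L) :
    contr (a + b) f = contr a f + contr b f := by
  funext z
  have := hf.1 (Fin.cons 0 z) 0 a b
  simpa [contr, Fin.update_cons_zero] using this

theorem contr_smul_left {n : ℕ} {f : (Fin (n + 1) → L) → V} (hf : f ∈ Cc K L V (n + 1)) (c : K)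
    (a : L) : contr (c • a) f = c • contr a f := by
  funext z
  have := hf.2.1 (Fin.cons 0 z) 0 c a
  simpa [contr, Fin.update_cons_zero] using this

theorem contr_sub_left {n : ℕ} {f : (Fin (n + 1) → L) → V} (hf : f ∈ Cc K L V (n + 1)) (a b : L) :
    contr (a - b) f = contr a f - contr b f := by
  have := contr_add_left hf (a - b) b
  rw [sub_add_cancel] at this
  rw [this]; simp

theorem contr_zero_left {n : ℕ} {f : (Fin (n + 1) → L) → V} (hf : f ∈ Cc K L V (n + 1)) :
    contr 0 f = 0 := by
  have := contr_sub_left hf 0 0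
  simpa using this

theorem contr_contr_self {n : ℕ} {f : (Fin (n + 2) → L) → V} (hf : f ∈ Cc K L V (n + 2)) (a : L) :
    contr a (contr a f) = 0 := by
  funext z
  exact hf.2.2 _ 0 1 (by simp) (by simp)

theorem contr_contr {n : ℕ} {f : (Fin (n + 2) → L) → V} (hf : f ∈ Cc K L V (n + 2)) (a b : L) :
    contr a (contr b f) = - contr b (contr a f) := by
  have h := contr_contr_self hf (a + b)
  rw [contr_add_left hf, contr_add, contr_add_left (contr_mem a hf), contr_add_left (contr_mem b hf),
    contr_contr_self hf, contr_contr_self hf] at h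
  simp only [zero_add, add_zero] at h
  rw [add_comm] at h
  exact eq_neg_of_add_eq_zero_left h

theorem mem_of_contr {n : ℕ} {F : (Fin (n + 1) → L) → V} (h1 : ∀ y, contr y F ∈ Cc K L V n)
    (h2 : ∀ a b, contr (a + b) F = contr a F + contr b F) (h3 : ∀ (c : K) a, contr (c • a) F = c • contr a F)
    (h4 : ∀ (y : L) (z : Fin n → L) (j : Fin n), z j = y → F (Fin.cons y z) = 0) :
    F ∈ Cc K L V (n + 1) := by
  refine ⟨fun z i a b => ?_, fun z i c a => ?_, fun z i j hij h => ?_⟩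
  · rw [← Fin.cons_self_tail z]
    refine Fin.cases ?_ (fun i => ?_) i
    · simp only [Fin.update_cons_zero]
      exact congrFun (h2 a b) _
    · simp only [← Fin.cons_update]
      exact (h1 _).1 _ _ _ _
  · rw [← Fin.cons_self_tail z]
    refine Fin.cases ?_ (fun i => ?_) i
    · simp only [Fin.update_cons_zero]
      exact congrFun (h3 c a) _
    · simp only [← Fin.cons_update]
      exact (h1 _).2.1 _ _ _ _
  · rw [← Fin.cons_self_tail z]
    induction i using Fin.cases with
    | zero =>
      induction j using Fin.cases with
      | zero => exact absurd rfl hij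
      | succ j => exact h4 _ _ j h.symm
    | succ i =>
      induction j using Fin.cases with
      | zero => exact h4 _ _ i h
      | succ j => exact (h1 (z 0)).2.2 _ i j (by simpa using hij) h

theorem mem_of_contr_zero {F : (Fin 1 → L) → V}
    (h2 : ∀ a b, contr (a + b) F = contr a F + contr b F) (h3 : ∀ (c : K) a, contr (c • a) F = c • contr a F) :
    F ∈ Cc K L V 1 :=
  mem_of_contr (fun _ => ⟨fun _ i => i.elim0, fun _ i => i.elim0, fun _ i => i.elim0⟩) h2 h3
    (fun _ _ j => j.elim0)

theorem mem_of_contr_succ {n : ℕ} {F : (Fin (n + 2) → L) → V} (h1 : ∀ y, contr y F ∈ Cc K L V (n + 1))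
    (h2 : ∀ a b, contr (a + b) F = contr a F + contr b F) (h3 : ∀ (c : K) a, contr (c • a) F = c • contr a F)
    (h4 : ∀ y, contr y (contr y F) = 0) :
    F ∈ Cc K L V (n + 2) := by
  refine mem_of_contr h1 h2 h3 fun y z j hj => ?_
  have key : ∀ w : Fin (n + 1) → L, w 0 = y → F (Fin.cons y w) = 0 := by
    intro w hw
    have := congrFun (h4 y) (Fin.tail w)
    rw [← Fin.cons_self_tail w, hw]
    exact this
  by_cases hj0 : j = 0
  · subst hj0; exact key z hj
  · have := (toAlt (contr y F) (h1 y)).map_swap z hj0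
    rw [toAlt_apply, toAlt_apply] at this
    have h0 : contr y F (z ∘ Equiv.swap j 0) = 0 := key _ (by simp [hj])
    rw [h0] at this
    simpa [contr] using this.symm

theorem contr_th {n : ℕ} (x y : L) (f : (Fin (n + 1) → L) → V) :
    contr y (th x f) = th x (contr y f) - contr ⁅x, y⁆ f := by
  funext z
  simp only [contr, th, Fin.sum_univ_succ, Pi.sub_apply, Fin.update_cons_zero, Fin.cons_zero,
    Fin.cons_succ, ← Fin.cons_update]
  abel

theorem th_contr {n : ℕ} (x y : L) (f : (Fin (n + 1) → L) → V) :
    th x (contr y f) = contr y (th x f) + contr ⁅x, y⁆ f := by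
  rw [contr_th]; abel

theorem th_add {n : ℕ} (x : L) (f g : (Fin n → L) → V) : th x (f + g) = th x f + th x g := by
  funext y
  simp only [th, Pi.add_apply, lie_add, Finset.sum_add_distrib]
  abel

theorem th_neg {n : ℕ} (x : L) (f : (Fin n → L) → V) : th x (-f) = - th x f := by
  funext y
  simp only [th, Pi.neg_apply, lie_neg, Finset.sum_neg_distrib]
  abel

theorem th_sub {n : ℕ} (x : L) (f g : (Fin n → L) → V) : th x (f - g) = th x f - th x g := by
  rw [sub_eq_add_neg, th_add, th_neg, sub_eq_add_neg]

theorem th_zero {n : ℕ} (x : L) : th x (0 : (Fin n → L) → V) = 0 := by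
  funext y
  simp [th]

theorem th_smul {n : ℕ} (x : L) (c : K) (f : (Fin n → L) → V) : th x (c • f) = c • th x f := by
  funext y
  simp only [th, Pi.smul_apply, lie_smul, Finset.smul_sum, smul_sub]

theorem th_add_left {n : ℕ} (x y : L) {f : (Fin n → L) → V} (hf : f ∈ Cc K L V n) :
    th (x + y) f = th x f + th y f := by
  funext z
  simp only [th, Pi.add_apply, add_lie, hf.1, Finset.sum_add_distrib]
  abel

theorem th_smul_left {n : ℕ} (c : K) (x : L) {f : (Fin n → L) → V} (hf : f ∈ Cc K L V n) :
    th (c • x) f = c • th x f := by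
  funext z
  simp only [th, Pi.smul_apply, smul_lie, hf.2.1, Finset.smul_sum, smul_sub]

theorem mem_zero_deg (f : (Fin 0 → L) → V) : f ∈ Cc K L V 0 :=
  ⟨fun _ i => i.elim0, fun _ i => i.elim0, fun _ i => i.elim0⟩

theorem th_mem {n : ℕ} (x : L) {f : (Fin n → L) → V} (hf : f ∈ Cc K L V n) :
    th x f ∈ Cc K L V n := by
  induction n with
  | zero => exact mem_zero_deg _
  | succ n ih =>
    have h2 : ∀ a b, contr (a + b) (th x f) = contr a (th x f) + contr b (th x f) := by
      intro a b
      simp only [contr_th, lie_add, contr_add_left hf, th_add]; abel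
    have h3 : ∀ (c : K) a, contr (c • a) (th x f) = c • contr a (th x f) := by
      intro c a
      simp only [contr_th, lie_smul, contr_smul_left hf, th_smul, smul_sub]
    cases n with
    | zero => exact mem_of_contr_zero h2 h3
    | succ n =>
      refine mem_of_contr_succ (fun y => ?_) h2 h3 fun y => ?_
      · rw [contr_th]
        exact Submodule.sub_mem _ (ih (contr_mem y hf)) (contr_mem _ hf)
      · rw [contr_th, contr_sub, contr_th, contr_contr_self hf, th_zero, contr_contr hf y]
        abel

theorem th_th {n : ℕ} (x y : L) {f : (Fin n → L) → V} (hf : f ∈ Cc K L V n) :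
    th x (th y f) = th y (th x f) + th ⁅x, y⁆ f := by
  induction n with
  | zero =>
    funext z
    simp [th]
  | succ n ih =>
    refine contr_ext fun w => ?_
    simp only [contr_add, contr_th, th_sub, ih (contr_mem w hf), lie_lie, contr_sub_left hf]
    abel

theorem update_eq_insertNth {n : ℕ} (z : Fin (n + 1) → L) (k : Fin (n + 1)) (a : L) :
    Function.update z k a = Fin.insertNth k a (z ∘ k.succAbove) := by
  conv_lhs => rw [← Fin.insertNth_self_removeNth k z]
  rw [Fin.update_insertNth]
  rfl

theorem move_front {n : ℕ} {f : (Fin (n + 1) → L) → V} (hf : f ∈ Cc K L V (n + 1))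
    (z : Fin (n + 1) → L) (k : Fin (n + 1)) (a : L) :
    ((-1 : ℤ) ^ (k : ℕ)) • f (Fin.cons a (z ∘ k.succAbove)) = f (Function.update z k a) := by
  have := (toAlt f hf).map_insertNth k a (z ∘ k.succAbove)
  rw [update_eq_insertNth]
  rw [toAlt_apply, toAlt_apply] at this
  rw [this]
  rfl

theorem swap_front {n : ℕ} {f : (Fin (n + 2) → L) → V} (hf : f ∈ Cc K L V (n + 2))
    (a b : L) (z : Fin n → L) :
    f (Fin.cons a (Fin.cons b z)) = - f (Fin.cons b (Fin.cons a z)) :=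
  congrFun (contr_contr hf b a) z

theorem cartan0 (y : L) (f : (Fin 0 → L) → V) : contr y (dRaw K L V 0 f) = th y f := by
  funext z
  have : z = Fin.elim0 := Subsingleton.elim _ _
  subst this
  simp [contr, th, dRaw, dAux]

theorem d_cons {m : ℕ} (y : L) (f : (Fin (m + 1) → L) → V) (z : Fin (m + 1) → L) :
    dRaw K L V (m + 1) f (Fin.cons y z) =
      (⁅y, f z⁆ + ∑ i : Fin (m + 1), ((-1 : ℤ) ^ ((i : ℕ) + 1)) •
        ⁅z i, f (Fin.cons y (z ∘ i.succAbove))⁆) +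
      ((∑ j : Fin (m + 1), ((-1 : ℤ) ^ ((j : ℕ) + 1)) • f (Fin.cons ⁅y, z j⁆ (z ∘ j.succAbove))) +
      ∑ i : Fin (m + 1), ∑ j : Fin (m + 1),
        if h : (i : ℕ) < (j : ℕ) then
          ((-1 : ℤ) ^ ((i : ℕ) + (j : ℕ))) •
            f (Fin.cons ⁅z i, z j⁆ fun k : Fin m =>
                (Fin.cons y z : Fin (m + 2) → L) (j.succ.succAbove ((Fin.castLT i
                  (lt_of_lt_of_le h (Nat.lt_succ_iff.mp j.isLt))).succ.succAbove k)))
        else 0) := by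
  have e1 : (Fin.cons y z : Fin (m + 2) → L) ∘ Fin.succAbove 0 = z := by
    funext i; simp
  have e2 : ∀ i : Fin (m + 1), (Fin.cons y z : Fin (m + 2) → L) ∘ i.succ.succAbove =
      Fin.cons y (z ∘ i.succAbove) := fun i => Fin.cons_comp_succ_succAbove _ _ _
  simp only [dRaw, dAux, LinearMap.coe_mk, AddHom.coe_mk]
  congr 1
  · rw [Fin.sum_univ_succ, e1]
    simp only [e2, Fin.cons_zero, Fin.cons_succ, Fin.val_succ, Fin.val_zero, pow_zero, one_smul]
  · rw [Fin.sum_univ_succ]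
    congr 1
    · rw [Fin.sum_univ_succ, dif_neg (by simp), zero_add]
      refine Finset.sum_congr rfl fun j _ => ?_
      rw [dif_pos (by simp)]
      simp only [Fin.cons_zero, Fin.cons_succ, Fin.val_succ, Fin.val_zero, zero_add]
      congr 3
      funext k
      change (Fin.cons y z : Fin (m + 2) → L) (j.succ.succAbove ((0 : Fin (m + 1)).succAbove k)) = _
      simp
    · refine Finset.sum_congr rfl fun i _ => ?_
      rw [Fin.sum_univ_succ, dif_neg (by simp), zero_add]
      refine Finset.sum_congr rfl fun j _ => ?_
      by_cases h : (i : ℕ) < (j : ℕ)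
      · rw [dif_pos (by simpa using h), dif_pos h]
        simp only [Fin.cons_succ, Fin.val_succ]
        congr 1
        rw [show (i : ℕ) + 1 + ((j : ℕ) + 1) = (i : ℕ) + j + 2 by ring, pow_add]
        simp
      · rw [dif_neg (by simpa using h), dif_neg h]

theorem cartan1 (y : L) {f : (Fin 1 → L) → V} (hf : f ∈ Cc K L V 1) :
    contr y (dRaw K L V 1 f) = th y f - dRaw K L V 0 (contr y f) := by
  funext z
  have e3 : ∀ (a : L) (w : Fin 0 → L), (Fin.cons a w : Fin 1 → L) = Function.update z 0 a := by
    intro a w; funext i; fin_cases i; simp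
  simp only [contr]
  rw [d_cons]
  simp only [e3, contr, th, dRaw, dAux, LinearMap.coe_mk, AddHom.coe_mk, Pi.sub_apply]
  simp
  abel

theorem cartan2 {m : ℕ} (y : L) {f : (Fin (m + 2) → L) → V} (hf : f ∈ Cc K L V (m + 2)) :
    contr y (dRaw K L V (m + 2) f) = th y f - dRaw K L V (m + 1) (contr y f) := by
  funext z
  simp only [contr]
  rw [d_cons]
  have a1 : (∑ j : Fin (m + 2), ((-1 : ℤ) ^ ((j : ℕ) + 1)) •
      f (Fin.cons ⁅y, z j⁆ (z ∘ j.succAbove))) =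
      - ∑ i : Fin (m + 2), f (Function.update z i ⁅y, z i⁆) := by
    rw [← Finset.sum_neg_distrib]
    refine Finset.sum_congr rfl fun j _ => ?_
    rw [← move_front hf, pow_succ]
    simp
  have a2 : (∑ i : Fin (m + 2), ((-1 : ℤ) ^ ((i : ℕ) + 1)) •
        ⁅z i, f (Fin.cons y (z ∘ i.succAbove))⁆) = - ∑ i : Fin (m + 2), ((-1 : ℤ) ^ (i : ℕ)) •
        ⁅z i, f (Fin.cons y (z ∘ i.succAbove))⁆ := by
    rw [← Finset.sum_neg_distrib]
    refine Finset.sum_congr rfl fun j _ => ?_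
    rw [pow_succ]
    simp
  have a3 : (∑ i : Fin (m + 2), ∑ j : Fin (m + 2),
        if h : (i : ℕ) < (j : ℕ) then
          ((-1 : ℤ) ^ ((i : ℕ) + (j : ℕ))) •
            f (Fin.cons ⁅z i, z j⁆ fun k : Fin (m + 1) =>
                (Fin.cons y z : Fin (m + 3) → L) (j.succ.succAbove ((Fin.castLT i
                  (lt_of_lt_of_le h (Nat.lt_succ_iff.mp j.isLt))).succ.succAbove k)))
        else 0) = - ∑ i : Fin (m + 2), ∑ j : Fin (m + 2),
        if h : (i : ℕ) < (j : ℕ) then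
          ((-1 : ℤ) ^ ((i : ℕ) + (j : ℕ))) •
            f (Fin.cons y (Fin.cons ⁅z i, z j⁆ fun k : Fin m =>
                z (j.succAbove ((Fin.castLT i
                  (lt_of_lt_of_le h (Nat.lt_succ_iff.mp j.isLt))).succAbove k))))
        else 0 := by
    rw [← Finset.sum_neg_distrib]
    refine Finset.sum_congr rfl fun i _ => ?_
    rw [← Finset.sum_neg_distrib]
    refine Finset.sum_congr rfl fun j _ => ?_
    by_cases h : (i : ℕ) < (j : ℕ)
    · rw [dif_pos h, dif_pos h, swap_front hf y, smul_neg, neg_neg]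
      congr 3
      funext k
      refine Fin.cases ?_ (fun k => ?_) k
      · simp
      · simp
    · rw [dif_neg h, dif_neg h, neg_zero]
  rw [a1, a2, a3]
  simp only [contr, th, dRaw, dAux, LinearMap.coe_mk, AddHom.coe_mk, Pi.sub_apply]
  abel

theorem cartan {m : ℕ} (y : L) {f : (Fin (m + 1) → L) → V} (hf : f ∈ Cc K L V (m + 1)) :
    contr y (dRaw K L V (m + 1) f) = th y f - dRaw K L V m (contr y f) := by
  cases m with
  | zero => exact cartan1 y hf
  | succ m => exact cartan2 y hf

theorem d_mem {n : ℕ} {f : (Fin n → L) → V} (hf : f ∈ Cc K L V n) :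
    dRaw K L V n f ∈ Cc K L V (n + 1) := by
  induction n with
  | zero =>
    refine mem_of_contr_zero (fun a b => ?_) fun c a => ?_
    · simp only [cartan0, th_add_left a b hf]
    · simp only [cartan0, th_smul_left c a hf]
  | succ n ih =>
    refine mem_of_contr_succ (fun y => ?_) (fun a b => ?_) (fun c a => ?_) fun y => ?_
    · rw [cartan y hf]
      exact Submodule.sub_mem _ (th_mem y hf) (ih (contr_mem y hf))
    · simp only [cartan _ hf, th_add_left a b hf, contr_add_left hf, map_add]; abel
    · simp only [cartan _ hf, th_smul_left c a hf, contr_smul_left hf, map_smul, smul_sub]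
    · rw [cartan _ hf, contr_sub, contr_th, lie_self, contr_zero_left hf]
      cases n with
      | zero => rw [cartan0]; abel
      | succ n => rw [cartan _ (contr_mem y hf), contr_contr_self hf, map_zero]; abel

theorem d_th {n : ℕ} (x : L) {f : (Fin n → L) → V} (hf : f ∈ Cc K L V n) :
    dRaw K L V n (th x f) = th x (dRaw K L V n f) := by
  induction n with
  | zero =>
    refine contr_ext fun y => ?_
    rw [cartan0, contr_th, cartan0, cartan0, th_th x y hf]; abel
  | succ n ih =>
    refine contr_ext fun y => ?_
    rw [cartan _ (th_mem x hf), contr_th, contr_th, cartan _ hf, cartan _ hf, map_sub,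
      ih (contr_mem y hf), th_sub, th_th x y hf]
    abel

theorem d_d {n : ℕ} {f : (Fin n → L) → V} (hf : f ∈ Cc K L V n) :
    dRaw K L V (n + 1) (dRaw K L V n f) = 0 := by
  induction n with
  | zero =>
    refine contr_ext fun y => ?_
    rw [cartan _ (d_mem hf), cartan0, d_th y hf, sub_self, contr_zero]
  | succ n ih =>
    refine contr_ext fun y => ?_
    rw [cartan _ (d_mem hf), cartan _ hf, map_sub, d_th y hf, ih (contr_mem y hf), contr_zero]
    abel

end calculus
end CE

namespace CE

section ideal

set_option linter.unusedSectionVars false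

variable {K : Type*} [Field K]
variable {L : Type*} [LieRing L] [LieAlgebra K L]
variable {V : Type*} [AddCommGroup V] [Module K V] [LieRingModule L V] [LieModule K L V]
variable {I : LieSubalgebra K L}

/-- Restriction of cochains to the subalgebra. -/
def res (I : LieSubalgebra K L) (V : Type*) [AddCommGroup V] [Module K V] (n : ℕ) :
    ((Fin n → L) → V) →ₗ[K] ((Fin n → ↥I) → V) :=
  LinearMap.funLeft K V (fun (y : Fin n → ↥I) i => (y i : L))

theorem res_apply {n : ℕ} (f : (Fin n → L) → V) (y : Fin n → ↥I) :
    res I V n f y = f (fun i => (y i : L)) := rfl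

theorem coe_update {n : ℕ} (y : Fin n → ↥I) (i : Fin n) (a : ↥I) :
    (fun k => ((Function.update y i a k : ↥I) : L)) =
      Function.update (fun k => (y k : L)) i (a : L) := by
  funext k
  by_cases h : k = i
  · subst h; simp
  · simp [h]

theorem coe_cons {n : ℕ} (a : ↥I) (y : Fin n → ↥I) :
    (fun k => (((Fin.cons a y : Fin (n + 1) → ↥I) k : ↥I) : L)) =
      Fin.cons (a : L) (fun k => (y k : L)) := by
  funext k
  refine Fin.cases ?_ (fun k => ?_) k <;> simp

theorem res_mem {n : ℕ} {f : (Fin n → L) → V} (hf : f ∈ Cc K L V n) :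
    res I V n f ∈ Cc K ↥I V n := by
  refine ⟨fun y i a b => ?_, fun y i c a => ?_, fun y i j hij h => ?_⟩
  · simp only [res_apply, coe_update]; exact hf.1 _ _ _ _
  · simp only [res_apply, coe_update]; exact hf.2.1 _ _ _ _
  · exact hf.2.2 _ i j hij (by simp [h])

theorem res_d {n : ℕ} (f : (Fin n → L) → V) :
    res I V (n + 1) (dRaw K L V n f) = dRaw K ↥I V n (res I V n f) := by
  funext y
  cases n with
  | zero =>
    simp only [res_apply, dRaw, dAux, LinearMap.coe_mk, AddHom.coe_mk]
    rw [Subsingleton.elim (fun i : Fin 0 => ((Fin.elim0 i : ↥I) : L)) Fin.elim0]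
    rfl
  | succ m =>
    simp only [res_apply, dRaw, dAux, LinearMap.coe_mk, AddHom.coe_mk, coe_cons]
    rfl

theorem res_th (hI : ∀ a b : L, b ∈ I → ⁅a, b⁆ ∈ I) (x : L) {n : ℕ} (f : (Fin n → L) → V) :
    res I V n (th x f) = actRaw K L V I hI x n (res I V n f) := by
  funext y
  simp only [res_apply, th, actRaw, LinearMap.coe_mk, AddHom.coe_mk, coe_update]

theorem res_contr (a : ↥I) {n : ℕ} (f : (Fin (n + 1) → L) → V) :
    res I V n (contr (a : L) f) = contr a (res I V (n + 1) f) := by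
  funext y
  simp only [res_apply, contr, coe_cons]

/-- A splitting of `L` as `I ⊕ K x`. -/
structure Split (I : LieSubalgebra K L) (x : L) where
  p : L →ₗ[K] ↥I
  lam : L →ₗ[K] K
  dec : ∀ y, (p y : L) + lam y • x = y
  pI : ∀ i : ↥I, p (i : L) = i
  lI : ∀ i : ↥I, lam (i : L) = 0
  px : p x = 0
  lx : lam x = 1

theorem exists_split (hcodim : Module.finrank K (L ⧸ I.toSubmodule) = 1)
    (x : L) (hx : x ∉ I) : Nonempty (Split I x) := by
  have : FiniteDimensional K (L ⧸ I.toSubmodule) :=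
    Module.finite_of_finrank_pos (by omega)
  let e : (L ⧸ I.toSubmodule) ≃ₗ[K] K :=
    LinearEquiv.ofFinrankEq _ _ (by rw [hcodim, Module.finrank_self])
  have hx0 : e (I.toSubmodule.mkQ x) ≠ 0 := by
    intro h
    rw [LinearEquiv.map_eq_zero_iff] at h
    simp at h
    exact hx h
  let lam : L →ₗ[K] K := (e (I.toSubmodule.mkQ x))⁻¹ • (e.toLinearMap ∘ₗ I.toSubmodule.mkQ)
  have hlx : lam x = 1 := by
    change (e (I.toSubmodule.mkQ x))⁻¹ * e (I.toSubmodule.mkQ x) = 1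
    exact inv_mul_cancel₀ hx0
  have hker : ∀ y, lam y = 0 ↔ y ∈ I := by
    intro y
    change (e (I.toSubmodule.mkQ x))⁻¹ * e (I.toSubmodule.mkQ y) = 0 ↔ _
    rw [mul_eq_zero, or_iff_right (inv_ne_zero hx0), LinearEquiv.map_eq_zero_iff]
    simp
  let q : L →ₗ[K] L := LinearMap.id - lam.smulRight x
  have hq : ∀ y, q y = y - lam y • x := fun y => rfl
  have hqI : ∀ y, q y ∈ I.toSubmodule := by
    intro y
    change q y ∈ I
    rw [← hker, hq, map_sub, map_smul, hlx]; simp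
  refine ⟨⟨q.codRestrict I.toSubmodule hqI, lam, fun y => ?_, fun i => ?_, fun i => ?_, ?_, hlx⟩⟩
  · change q y + lam y • x = y
    rw [hq]; simp
  · apply Subtype.ext
    change q i = i
    rw [hq, (hker _).2 i.2]; simp
  · exact (hker _).2 i.2
  · apply Subtype.ext
    change q x = 0
    rw [hq, hlx]; simp

variable {x : L}

theorem split_contr (S : Split I x) {n : ℕ} {f : (Fin (n + 1) → L) → V} (hf : f ∈ Cc K L V (n + 1))
    (y : L) : contr y f = contr (S.p y : L) f + S.lam y • contr x f := by
  conv_lhs => rw [← S.dec y]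
  rw [contr_add_left hf, contr_smul_left hf]

theorem eq_zero_of (S : Split I x) {n : ℕ} {f : (Fin (n + 1) → L) → V}
    (hf : f ∈ Cc K L V (n + 1)) (h1 : res I V (n + 1) f = 0) (h2 : res I V n (contr x f) = 0) :
    f = 0 := by
  induction n with
  | zero =>
    have key : ∀ g : (Fin 0 → L) → V, res I V 0 g = 0 → g = 0 := by
      intro g hg
      funext z
      have := congrFun hg Fin.elim0
      rw [res_apply] at this
      rw [Subsingleton.elim z fun i => ((Fin.elim0 i : ↥I) : L)]
      exact this
    refine contr_ext fun y => ?_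
    rw [split_contr S hf, key _ h2, key (contr (S.p y : L) f) (by rw [res_contr, h1]; rfl), contr_zero]
    simp
  | succ n ih =>
    refine contr_ext fun y => ?_
    have a1 : contr x f = 0 := by
      refine ih (contr_mem x hf) h2 ?_
      rw [contr_contr_self hf, map_zero]
    have a2 : contr (S.p y : L) f = 0 := by
      refine ih (contr_mem _ hf) (by rw [res_contr, h1]; rfl) ?_
      rw [contr_contr hf, a1, contr_zero, neg_zero, map_zero]
    rw [split_contr S hf, a1, a2, contr_zero]
    simp

theorem eq_of (S : Split I x) {n : ℕ} {f g : (Fin (n + 1) → L) → V}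
    (hf : f ∈ Cc K L V (n + 1)) (hg : g ∈ Cc K L V (n + 1))
    (h1 : res I V (n + 1) f = res I V (n + 1) g)
    (h2 : res I V n (contr x f) = res I V n (contr x g)) :
    f = g := by
  rw [← sub_eq_zero]
  refine eq_zero_of S (Submodule.sub_mem _ hf hg) ?_ ?_
  · rw [map_sub, h1, sub_self]
  · rw [contr_sub, map_sub, h2, sub_self]

/-- Extension by pulling back along the projection. -/
def ex0 (S : Split I x) (V : Type*) [AddCommGroup V] [Module K V] (n : ℕ) :
    ((Fin n → ↥I) → V) →ₗ[K] ((Fin n → L) → V) :=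
  LinearMap.funLeft K V (fun (y : Fin n → L) i => S.p (y i))

theorem ex0_apply (S : Split I x) {n : ℕ} (f : (Fin n → ↥I) → V) (y : Fin n → L) :
    ex0 S V n f y = f (fun i => S.p (y i)) := rfl

theorem ex0_mem (S : Split I x) {n : ℕ} {f : (Fin n → ↥I) → V} (hf : f ∈ Cc K ↥I V n) :
    ex0 S V n f ∈ Cc K L V n :=
  alt_mem ((toAlt f hf).compLinearMap S.p)

theorem res_ex0 (S : Split I x) {n : ℕ} (f : (Fin n → ↥I) → V) :
    res I V n (ex0 S V n f) = f := by
  funext y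
  simp only [res_apply, ex0_apply, S.pI]

theorem contr_ex0 (S : Split I x) {n : ℕ} {f : (Fin (n + 1) → ↥I) → V}
    (hf : f ∈ Cc K ↥I V (n + 1)) : contr x (ex0 S V (n + 1) f) = 0 := by
  funext z
  have h := congrFun (contr_zero_left hf) (fun i => S.p (z i))
  simp only [contr, ex0_apply, Pi.zero_apply] at h ⊢
  rw [← h]
  congr 1
  funext k
  refine Fin.cases ?_ (fun k => ?_) k
  · simp [S.px]
  · simp

/-- The map `h ↦ λ ∧ h`. -/
def ex1 (S : Split I x) (V : Type*) [AddCommGroup V] [Module K V] (n : ℕ) :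
    ((Fin n → ↥I) → V) →ₗ[K] ((Fin (n + 1) → L) → V) where
  toFun h := fun y => ∑ i : Fin (n + 1),
    ((-1 : ℤ) ^ (i : ℕ)) • S.lam (y i) • h (fun k => S.p (y (i.succAbove k)))
  map_add' f g := by
    funext y
    simp only [Pi.add_apply, smul_add, Finset.sum_add_distrib]
  map_smul' c f := by
    funext y
    simp only [Pi.smul_apply, RingHom.id_apply, Finset.smul_sum]
    refine Finset.sum_congr rfl fun i _ => ?_
    rw [smul_comm c, smul_comm c]

theorem ex1_apply (S : Split I x) {n : ℕ} (h : (Fin n → ↥I) → V) (y : Fin (n + 1) → L) :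
    ex1 S V n h y = ∑ i : Fin (n + 1),
      ((-1 : ℤ) ^ (i : ℕ)) • S.lam (y i) • h (fun k => S.p (y (i.succAbove k))) := rfl

theorem ex1_mem (S : Split I x) {n : ℕ} {f : (Fin n → ↥I) → V} (hf : f ∈ Cc K ↥I V n) :
    ex1 S V n f ∈ Cc K L V (n + 1) := by
  have := alt_mem (AlternatingMap.alternatizeUncurryFin
    (S.lam.smulRight ((toAlt f hf).compLinearMap S.p)))
  convert this using 1
  funext y
  rw [ex1_apply, AlternatingMap.alternatizeUncurryFin_apply]
  rfl

theorem res_ex1 (S : Split I x) {n : ℕ} (f : (Fin n → ↥I) → V) :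
    res I V (n + 1) (ex1 S V n f) = 0 := by
  funext y
  simp [res_apply, ex1_apply, S.lI]

theorem res_contr_ex1 (S : Split I x) {n : ℕ} (f : (Fin n → ↥I) → V) :
    res I V n (contr x (ex1 S V n f)) = f := by
  funext y
  simp only [res_apply, contr, ex1_apply, Fin.sum_univ_succ, Fin.cons_zero, Fin.cons_succ, S.lI, S.lx]
  simp [S.pI]

theorem act_mem (S : Split I x) (hI : ∀ a b : L, b ∈ I → ⁅a, b⁆ ∈ I) {n : ℕ}
    {f : (Fin n → ↥I) → V} (hf : f ∈ Cc K ↥I V n) : actRaw K L V I hI x n f ∈ Cc K ↥I V n := by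
  rw [← res_ex0 S f, ← res_th]
  exact res_mem (th_mem x (ex0_mem S hf))

theorem d_act (S : Split I x) (hI : ∀ a b : L, b ∈ I → ⁅a, b⁆ ∈ I) {n : ℕ}
    {f : (Fin n → ↥I) → V} (hf : f ∈ Cc K ↥I V n) :
    dRaw K ↥I V n (actRaw K L V I hI x n f) = actRaw K L V I hI x (n + 1) (dRaw K ↥I V n f) := by
  have : f = res I V n (ex0 S V n f) := (res_ex0 S f).symm
  rw [this, ← res_th, ← res_d, d_th x (ex0_mem S hf), res_th, res_d]

/-- `s d f = x • r f - d s f`. -/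
theorem s_d (hI : ∀ a b : L, b ∈ I → ⁅a, b⁆ ∈ I) {n : ℕ} {f : (Fin (n + 1) → L) → V}
    (hf : f ∈ Cc K L V (n + 1)) :
    res I V (n + 1) (contr x (dRaw K L V (n + 1) f)) =
      actRaw K L V I hI x (n + 1) (res I V (n + 1) f) - dRaw K ↥I V n (res I V n (contr x f)) := by
  rw [cartan x hf, map_sub, res_th hI, res_d]

theorem s_d0 (hI : ∀ a b : L, b ∈ I → ⁅a, b⁆ ∈ I) (f : (Fin 0 → L) → V) :
    res I V 0 (contr x (dRaw K L V 0 f)) = actRaw K L V I hI x 0 (res I V 0 f) := by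
  rw [cartan0, res_th hI]

theorem s_d_ex0 (S : Split I x) (hI : ∀ a b : L, b ∈ I → ⁅a, b⁆ ∈ I) {n : ℕ}
    {f : (Fin n → ↥I) → V} (hf : f ∈ Cc K ↥I V n) :
    res I V n (contr x (dRaw K L V n (ex0 S V n f))) = actRaw K L V I hI x n f := by
  cases n with
  | zero => rw [s_d0 hI, res_ex0]
  | succ n => rw [s_d hI (ex0_mem S hf), res_ex0, contr_ex0 S hf]; simp

theorem d_ex1 (S : Split I x) {n : ℕ}
    (hI : ∀ a b : L, b ∈ I → ⁅a, b⁆ ∈ I) {f : (Fin n → ↥I) → V} (hf : f ∈ Cc K ↥I V n) :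
    dRaw K L V (n + 1) (ex1 S V n f) = - ex1 S V (n + 1) (dRaw K ↥I V n f) := by
  refine eq_of S (d_mem (ex1_mem S hf)) (Submodule.neg_mem _ (ex1_mem S (d_mem hf))) ?_ ?_
  · rw [res_d, res_ex1, map_zero, map_neg, res_ex1, neg_zero]
  · rw [s_d hI (ex1_mem S hf), res_ex1, res_contr_ex1, contr_neg, map_neg, res_contr_ex1, map_zero, zero_sub]

/-- `λ ∧ (x • u) = d (p^* u)` for cocycles `u`. -/
theorem ex1_act (S : Split I x) (hI : ∀ a b : L, b ∈ I → ⁅a, b⁆ ∈ I) {n : ℕ}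
    {f : (Fin n → ↥I) → V} (hf : f ∈ Zc K ↥I V n) :
    ex1 S V n (actRaw K L V I hI x n f) = dRaw K L V n (ex0 S V n f) := by
  refine eq_of S (ex1_mem S (act_mem S hI hf.1)) (d_mem (ex0_mem S hf.1)) ?_ ?_
  · rw [res_ex1, res_d, res_ex0]; exact hf.2.symm
  · rw [res_contr_ex1, s_d_ex0 S hI hf.1]

theorem ex1_res_contr (S : Split I x) {n : ℕ} {f : (Fin (n + 1) → L) → V}
    (hf : f ∈ Cc K L V (n + 1)) (h : res I V (n + 1) f = 0) :
    ex1 S V n (res I V n (contr x f)) = f := by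
  refine eq_of S (ex1_mem S (res_mem (contr_mem x hf))) hf ?_ ?_
  · rw [res_ex1, h]
  · rw [res_contr_ex1]

end ideal
end CE

namespace CE

section main

set_option linter.unusedSectionVars false

variable {K : Type*} [Field K]
variable {L : Type*} [LieRing L] [LieAlgebra K L]
variable {V : Type*} [AddCommGroup V] [Module K V] [LieRingModule L V] [LieModule K L V]
variable {I : LieSubalgebra K L} {x : L}

theorem finite_Cc [FiniteDimensional K L] [FiniteDimensional K V] (n : ℕ) :
    FiniteDimensional K (Cc K L V n) := by
  let φ : Cc K L V n →ₗ[K] MultilinearMap K (fun _ : Fin n => L) V :=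
    { toFun := fun f => (toAlt f.1 f.2).toMultilinearMap
      map_add' := fun f g => rfl
      map_smul' := fun c f => rfl }
  refine Module.Finite.of_injective φ fun f g h => ?_
  apply Subtype.ext
  funext y
  exact congrArg (fun F : MultilinearMap K (fun _ : Fin n => L) V => F y) h

theorem finite_Zc [FiniteDimensional K L] [FiniteDimensional K V] (n : ℕ) :
    FiniteDimensional K (Zc K L V n) := by
  have := finite_Cc (K := K) (L := L) (V := V) n
  exact Submodule.finiteDimensional_of_le (inf_le_left : Zc K L V n ≤ Cc K L V n)

theorem finite_Hq [FiniteDimensional K L] [FiniteDimensional K V] (n : ℕ) :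
    FiniteDimensional K (Hq K L V n) := by
  have := finite_Zc (K := K) (L := L) (V := V) n
  infer_instance

theorem d_of_mem_Zc {n : ℕ} {f : (Fin n → L) → V} (hf : f ∈ Zc K L V n) :
    dRaw K L V n f = 0 := hf.2

theorem res_Z {n : ℕ} {f : (Fin n → L) → V} (hf : f ∈ Zc K L V n) :
    res I V n f ∈ Zc K ↥I V n := by
  refine ⟨res_mem hf.1, ?_⟩
  change dRaw K ↥I V n (res I V n f) = 0
  rw [← res_d, d_of_mem_Zc hf, map_zero]

theorem res_B {n : ℕ} {f : (Fin n → L) → V} (hf : f ∈ Bc K L V n) :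
    res I V n f ∈ Bc K ↥I V n := by
  cases n with
  | zero =>
    have : f = 0 := hf
    rw [this, map_zero]; exact Submodule.zero_mem _
  | succ n =>
    obtain ⟨u, hu, rfl⟩ := hf
    exact ⟨res I V n u, res_mem hu, (res_d u).symm⟩

theorem act_Z (S : Split I x) (hI : ∀ a b : L, b ∈ I → ⁅a, b⁆ ∈ I) {n : ℕ}
    {f : (Fin n → ↥I) → V} (hf : f ∈ Zc K ↥I V n) : actRaw K L V I hI x n f ∈ Zc K ↥I V n := by
  refine ⟨act_mem S hI hf.1, ?_⟩
  change dRaw K ↥I V n (actRaw K L V I hI x n f) = 0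
  rw [d_act S hI hf.1, d_of_mem_Zc hf, map_zero]

theorem act_B (S : Split I x) (hI : ∀ a b : L, b ∈ I → ⁅a, b⁆ ∈ I) {n : ℕ}
    {f : (Fin n → ↥I) → V} (hf : f ∈ Bc K ↥I V n) : actRaw K L V I hI x n f ∈ Bc K ↥I V n := by
  cases n with
  | zero =>
    have : f = 0 := hf
    rw [this, map_zero]; exact Submodule.zero_mem _
  | succ n =>
    obtain ⟨u, hu, rfl⟩ := hf
    exact ⟨_, act_mem S hI hu, d_act S hI hu⟩

theorem ex1_Z (S : Split I x) (hI : ∀ a b : L, b ∈ I → ⁅a, b⁆ ∈ I) {n : ℕ}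
    {f : (Fin n → ↥I) → V} (hf : f ∈ Zc K ↥I V n) : ex1 S V n f ∈ Zc K L V (n + 1) := by
  refine ⟨ex1_mem S hf.1, ?_⟩
  change dRaw K L V (n + 1) (ex1 S V n f) = 0
  rw [d_ex1 S hI hf.1, d_of_mem_Zc hf, map_zero, neg_zero]

theorem ex1_B (S : Split I x) (hI : ∀ a b : L, b ∈ I → ⁅a, b⁆ ∈ I) {n : ℕ}
    {f : (Fin n → ↥I) → V} (hf : f ∈ Bc K ↥I V n) : ex1 S V n f ∈ Bc K L V (n + 1) := by
  cases n with
  | zero =>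
    have : f = 0 := hf
    rw [this, map_zero]; exact Submodule.zero_mem _
  | succ n =>
    obtain ⟨u, hu, rfl⟩ := hf
    refine ⟨- ex1 S V n u, Submodule.neg_mem _ (ex1_mem S hu), ?_⟩
    rw [map_neg, d_ex1 S hI hu, neg_neg]

/-- The restriction map in cohomology. -/
def rho (I : LieSubalgebra K L) (n : ℕ) : Hq K L V n →ₗ[K] Hq K ↥I V n :=
  Submodule.mapQ _ _ ((res I V n).restrict (p := Zc K L V n) (q := Zc K ↥I V n)
    fun _ hf => res_Z hf) fun _ hf => res_B hf

/-- The action of `x` in cohomology. -/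
def theta (S : Split I x) (hI : ∀ a b : L, b ∈ I → ⁅a, b⁆ ∈ I) (n : ℕ) :
    Hq K ↥I V n →ₗ[K] Hq K ↥I V n :=
  Submodule.mapQ _ _ ((actRaw K L V I hI x n).restrict (p := Zc K ↥I V n) (q := Zc K ↥I V n)
    fun _ hf => act_Z S hI hf) fun _ hf => act_B S hI hf

/-- The connecting map in cohomology. -/
def sigma (S : Split I x) (hI : ∀ a b : L, b ∈ I → ⁅a, b⁆ ∈ I) (n : ℕ) :
    Hq K ↥I V n →ₗ[K] Hq K L V (n + 1) :=
  Submodule.mapQ _ _ ((ex1 S V n).restrict (p := Zc K ↥I V n) (q := Zc K L V (n + 1))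
    fun _ hf => ex1_Z S hI hf) fun _ hf => ex1_B S hI hf

/-- The class of a cocycle. -/
def cls {n : ℕ} (f : (Fin n → L) → V) (hf : f ∈ Zc K L V n) : Hq K L V n :=
  Submodule.Quotient.mk ⟨f, hf⟩

theorem cls_surj {n : ℕ} (c : Hq K L V n) : ∃ f hf, c = cls f hf := by
  obtain ⟨⟨f, hf⟩, rfl⟩ := Submodule.Quotient.mk_surjective _ c
  exact ⟨f, hf, rfl⟩

theorem cls_eq {n : ℕ} {f g : (Fin n → L) → V} (hf : f ∈ Zc K L V n) (hg : g ∈ Zc K L V n) :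
    cls f hf = cls g hg ↔ f - g ∈ Bc K L V n :=
  Submodule.Quotient.eq _

theorem cls_eq_zero {n : ℕ} {f : (Fin n → L) → V} (hf : f ∈ Zc K L V n) :
    cls f hf = 0 ↔ f ∈ Bc K L V n :=
  Submodule.Quotient.mk_eq_zero _

theorem rho_cls {n : ℕ} {f : (Fin n → L) → V} (hf : f ∈ Zc K L V n) :
    rho (V := V) I n (cls f hf) = cls (res I V n f) (res_Z hf) := rfl

theorem theta_cls (S : Split I x) (hI : ∀ a b : L, b ∈ I → ⁅a, b⁆ ∈ I) {n : ℕ}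
    {f : (Fin n → ↥I) → V} (hf : f ∈ Zc K ↥I V n) :
    theta (V := V) S hI n (cls f hf) = cls (actRaw K L V I hI x n f) (act_Z S hI hf) := rfl

theorem sigma_cls (S : Split I x) (hI : ∀ a b : L, b ∈ I → ⁅a, b⁆ ∈ I) {n : ℕ}
    {f : (Fin n → ↥I) → V} (hf : f ∈ Zc K ↥I V n) :
    sigma (V := V) S hI n (cls f hf) = cls (ex1 S V n f) (ex1_Z S hI hf) := rfl

theorem cls_mem_HInv (hI : ∀ a b : L, b ∈ I → ⁅a, b⁆ ∈ I) {n : ℕ} {f : (Fin n → ↥I) → V}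
    (hf : f ∈ Zc K ↥I V n) (h : actRaw K L V I hI x n f ∈ Bc K ↥I V n) :
    cls f hf ∈ HInv K L V I hI x n :=
  ⟨⟨f, hf⟩, ⟨hf, h⟩, rfl⟩

theorem of_mem_HInv (hI : ∀ a b : L, b ∈ I → ⁅a, b⁆ ∈ I) {n : ℕ} {c : Hq K ↥I V n}
    (hc : c ∈ HInv K L V I hI x n) :
    ∃ f hf, c = cls f hf ∧ actRaw K L V I hI x n f ∈ Bc K ↥I V n := by
  obtain ⟨⟨f, hf⟩, ⟨_, h⟩, rfl⟩ := hc
  exact ⟨f, hf, rfl, h⟩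

theorem ker_theta (S : Split I x) (hI : ∀ a b : L, b ∈ I → ⁅a, b⁆ ∈ I) (n : ℕ) :
    LinearMap.ker (theta (V := V) S hI n) = HInv K L V I hI x n := by
  ext c
  rw [LinearMap.mem_ker]
  constructor
  · intro h
    obtain ⟨f, hf, rfl⟩ := cls_surj c
    rw [theta_cls, cls_eq_zero] at h
    exact cls_mem_HInv hI hf h
  · intro h
    obtain ⟨f, hf, rfl, h⟩ := of_mem_HInv hI h
    rwa [theta_cls, cls_eq_zero]

theorem range_rho (S : Split I x) (hI : ∀ a b : L, b ∈ I → ⁅a, b⁆ ∈ I) (n : ℕ) :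
    LinearMap.range (rho (V := V) I (n + 1)) = HInv K L V I hI x (n + 1) := by
  ext c
  constructor
  · rintro ⟨c, rfl⟩
    obtain ⟨f, hf, rfl⟩ := cls_surj c
    rw [rho_cls]
    refine cls_mem_HInv hI _ ⟨res I V n (contr x f), res_mem (contr_mem x hf.1), ?_⟩
    have h := s_d (x := x) hI hf.1
    rw [d_of_mem_Zc hf, contr_zero, map_zero] at h
    exact (sub_eq_zero.1 h.symm).symm
  · intro h
    obtain ⟨g, hg, rfl, ⟨u, hu, h⟩⟩ := of_mem_HInv hI h
    have hC : ex0 S V (n + 1) g + ex1 S V n u ∈ Cc K L V (n + 1) :=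
      Submodule.add_mem _ (ex0_mem S hg.1) (ex1_mem S hu)
    have hr : res I V (n + 1) (ex0 S V (n + 1) g + ex1 S V n u) = g := by
      rw [map_add, res_ex0, res_ex1, add_zero]
    have hZ : ex0 S V (n + 1) g + ex1 S V n u ∈ Zc K L V (n + 1) := by
      refine ⟨hC, ?_⟩
      refine eq_zero_of S (d_mem hC) ?_ ?_
      · rw [res_d, hr, d_of_mem_Zc hg]
      · rw [s_d hI hC, hr, contr_add, contr_ex0 S hg.1, zero_add, res_contr_ex1, h, sub_self]
    refine ⟨cls _ hZ, ?_⟩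
    rw [rho_cls, cls_eq, hr, sub_self]
    exact Submodule.zero_mem _

theorem range_sigma (S : Split I x) (hI : ∀ a b : L, b ∈ I → ⁅a, b⁆ ∈ I) (n : ℕ) :
    LinearMap.range (sigma (V := V) S hI n) = LinearMap.ker (rho (V := V) I (n + 1)) := by
  ext c
  rw [LinearMap.mem_ker]
  constructor
  · rintro ⟨c, rfl⟩
    obtain ⟨f, hf, rfl⟩ := cls_surj c
    rw [sigma_cls, rho_cls, cls_eq_zero, res_ex1]
    exact Submodule.zero_mem _
  · intro h
    obtain ⟨f, hf, rfl⟩ := cls_surj c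
    rw [rho_cls, cls_eq_zero] at h
    obtain ⟨u, hu, h⟩ := h
    have hdC : dRaw K L V n (ex0 S V n u) ∈ Cc K L V (n + 1) := d_mem (ex0_mem S hu)
    have hC : f - dRaw K L V n (ex0 S V n u) ∈ Cc K L V (n + 1) := Submodule.sub_mem _ hf.1 hdC
    have hd : dRaw K L V (n + 1) (f - dRaw K L V n (ex0 S V n u)) = 0 := by
      rw [map_sub, d_of_mem_Zc hf, d_d (ex0_mem S hu), sub_self]
    have hr : res I V (n + 1) (f - dRaw K L V n (ex0 S V n u)) = 0 := by
      rw [map_sub, res_d, res_ex0, h, sub_self]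
    have hZ : res I V n (contr x (f - dRaw K L V n (ex0 S V n u))) ∈ Zc K ↥I V n := by
      refine ⟨res_mem (contr_mem x hC), ?_⟩
      change dRaw K ↥I V n _ = 0
      have h2 := s_d (x := x) hI hC
      rw [hd, hr, contr_zero, map_zero, map_zero, zero_sub] at h2
      exact neg_eq_zero.1 h2.symm
    refine ⟨cls _ hZ, ?_⟩
    rw [sigma_cls, cls_eq, ex1_res_contr S hC hr]
    refine ⟨- ex0 S V n u, Submodule.neg_mem _ (ex0_mem S hu), ?_⟩
    rw [map_neg]; abel

theorem ker_sigma (S : Split I x) (hI : ∀ a b : L, b ∈ I → ⁅a, b⁆ ∈ I) (n : ℕ) :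
    LinearMap.ker (sigma (V := V) S hI n) = LinearMap.range (theta (V := V) S hI n) := by
  ext c
  rw [LinearMap.mem_ker]
  constructor
  · intro h
    obtain ⟨f, hf, rfl⟩ := cls_surj c
    rw [sigma_cls, cls_eq_zero] at h
    obtain ⟨w, hw, h⟩ := h
    have hZ : res I V n w ∈ Zc K ↥I V n := by
      refine ⟨res_mem hw, ?_⟩
      change dRaw K ↥I V n _ = 0
      rw [← res_d, h, res_ex1]
    refine ⟨cls _ hZ, ?_⟩
    rw [theta_cls, cls_eq]
    have h2 : res I V n (contr x (dRaw K L V n w)) = f := by rw [h, res_contr_ex1]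
    cases n with
    | zero =>
      rw [s_d0 hI] at h2
      rw [h2, sub_self]
      exact Submodule.zero_mem _
    | succ n =>
      rw [s_d hI hw] at h2
      refine ⟨res I V n (contr x w), res_mem (contr_mem x hw), ?_⟩
      rw [← h2]; abel
  · rintro ⟨c, rfl⟩
    obtain ⟨f, hf, rfl⟩ := cls_surj c
    rw [theta_cls, sigma_cls, cls_eq_zero, ex1_act S hI hf]
    exact ⟨_, ex0_mem S hf.1, rfl⟩

end main
end CE

/-- **(Dixmier.)** Let `L` be a finite-dimensional Lie algebra over a field `K` of
characteristic zero, `V` a finite-dimensional `L`-module, and `I` an ideal of `L` of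
codimension 1.  Then for any `n ≥ 1` and any `x ∈ L` with `x ∉ I` there is an isomorphism
of vector spaces `Hⁿ(L,V) ≃ Hⁿ(I,V)ˣ × Hⁿ⁻¹(I,V)ˣ`. -/
theorem dixmier_codim_one_iso
    (K : Type*) (L : Type*) (V : Type*) [Field K] [CharZero K]
    [LieRing L] [LieAlgebra K L] [FiniteDimensional K L]
    [AddCommGroup V] [Module K V] [LieRingModule L V] [LieModule K L V]
    [FiniteDimensional K V]
    (I : LieSubalgebra K L) (hI : ∀ a b : L, b ∈ I → ⁅a, b⁆ ∈ I)
    (hcodim : Module.finrank K (L ⧸ I.toSubmodule) = 1)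
    (x : L) (hx : x ∉ I) (n : ℕ) (hn : 1 ≤ n) :
    Nonempty ((CE.Hq K L V n) ≃ₗ[K]
      (↥(CE.HInv K L V I hI x n) × ↥(CE.HInv K L V I hI x (n - 1)))) := by
  obtain ⟨S⟩ := CE.exists_split hcodim x hx
  obtain ⟨m, rfl⟩ : ∃ m, n = m + 1 := ⟨n - 1, by omega⟩
  have f1 : FiniteDimensional K (CE.Hq K L V (m + 1)) := CE.finite_Hq _
  have f2 : FiniteDimensional K (CE.Hq K ↥I V (m + 1)) := CE.finite_Hq _
  have f3 : FiniteDimensional K (CE.Hq K ↥I V m) := CE.finite_Hq _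
  have f4 : FiniteDimensional K (CE.Hq K ↥I V (m + 1 - 1)) := CE.finite_Hq _
  have e1 := LinearMap.finrank_range_add_finrank_ker (CE.rho (V := V) I (m + 1))
  have e2 := LinearMap.finrank_range_add_finrank_ker (CE.sigma (V := V) S hI m)
  have e3 := LinearMap.finrank_range_add_finrank_ker (CE.theta (V := V) S hI m)
  rw [CE.range_rho S hI] at e1
  rw [CE.range_sigma, CE.ker_sigma] at e2
  rw [CE.ker_theta] at e3
  refine ⟨LinearEquiv.ofFinrankEq _ _ ?_⟩
  rw [Module.finrank_prod]
  change _ = _ + Module.finrank K ↥(CE.HInv K L V I hI x m)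
  omega
end

section
/- Let L be a 2-trivial Lie algebra over a field K of characteristic zero, and suppose L is the semidirect sum L = S ⋉ I of a subalgebra S and an ideal I. Then for every finite-dimensional S-module V, the subspace of S-invariants (H^2(I,K) ⊗ V)^S is zero, where S acts on H^2(I,K) via the action induced by the adjoint action of S on I, and acts on the tensor product diagonally. -/
universe u v

section SecondCohomologyOfIdeal

variable (K : Type u) [Field K]
variable (L : Type v) [LieRing L] [LieAlgebra K L]
variable (I : LieIdeal K L)

/-- The alternating bilinear 2-cocycles on the ideal `I` with values in the trivial
one-dimensional module `K`, as a submodule of the space of all functions `I → I → K`: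
bilinear alternating functions `f` satisfying
`f(⁅a,b⁆,c) − f(⁅a,c⁆,b) + f(⁅b,c⁆,a) = 0`. -/
def Z2 : Submodule K (↥I → ↥I → K) where
  carrier := {f |
    (∀ a a' b : ↥I, f (a + a') b = f a b + f a' b) ∧
    (∀ (c : K) (a b : ↥I), f (c • a) b = c • f a b) ∧
    (∀ a b b' : ↥I, f a (b + b') = f a b + f a b') ∧
    (∀ (c : K) (a b : ↥I), f a (c • b) = c • f a b) ∧
    (∀ a : ↥I, f a a = 0) ∧
    (∀ a b c : ↥I, f ⁅a, b⁆ c - f ⁅a, c⁆ b + f ⁅b, c⁆ a = 0)}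
  add_mem' := by
    rintro f g ⟨hf1, hf2, hf3, hf4, hf5, hf6⟩ ⟨hg1, hg2, hg3, hg4, hg5, hg6⟩
    refine ⟨fun a a' b => ?_, fun c a b => ?_, fun a b b' => ?_, fun c a b => ?_,
      fun a => ?_, fun a b c => ?_⟩ <;>
      simp only [Pi.add_apply, hf1, hf2, hf3, hf4, hf5, hf6, hg1, hg2, hg3, hg4, hg5, hg6,
        smul_eq_mul]
    · ring
    · ring
    · ring
    · ring
    · ring
    · linear_combination hf6 a b c + hg6 a b c
  zero_mem' := by
    refine ⟨fun a a' b => ?_, fun c a b => ?_, fun a b b' => ?_, fun c a b => ?_,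
      fun a => ?_, fun a b c => ?_⟩ <;> simp
  smul_mem' := by
    rintro t f ⟨hf1, hf2, hf3, hf4, hf5, hf6⟩
    refine ⟨fun a a' b => ?_, fun c a b => ?_, fun a b b' => ?_, fun c a b => ?_,
      fun a => ?_, fun a b c => ?_⟩ <;>
      simp only [Pi.smul_apply, hf1, hf2, hf3, hf4, hf5, smul_eq_mul]
    · ring
    · ring
    · ring
    · ring
    · ring
    · linear_combination t * hf6 a b c

/-- The 2-coboundaries on `I` with trivial coefficients: the functions of the form
`(a, b) ↦ g ⁅a, b⁆` for a linear map `g : I → K`. -/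
def B2 : Submodule K (↥I → ↥I → K) where
  carrier := {f | ∃ g : ↥I →ₗ[K] K, ∀ a b : ↥I, f a b = g ⁅a, b⁆}
  add_mem' := by
    rintro f f' ⟨g, hg⟩ ⟨g', hg'⟩
    exact ⟨g + g', fun a b => by simp [hg a b, hg' a b]⟩
  zero_mem' := ⟨0, fun a b => by simp⟩
  smul_mem' := by
    rintro c f ⟨g, hg⟩
    exact ⟨c • g, fun a b => by simp [hg a b]⟩

/-- `H²(I,K)`, the second Chevalley–Eilenberg cohomology of `I` with trivial
coefficients: 2-cocycles modulo 2-coboundaries. -/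
abbrev H2 := ↥(Z2 K L I) ⧸ Submodule.comap (Z2 K L I).subtype (B2 K L I)

/-- The adjoint action of `x ∈ L` on the ideal `I`, as a linear endomorphism of `I`. -/
def adI (x : L) : ↥I →ₗ[K] ↥I where
  toFun a := ⟨⁅x, (a : L)⁆, I.lie_mem a.2⟩
  map_add' a b := Subtype.ext (by simp)
  map_smul' c a := Subtype.ext (by simp)

lemma adI_bracket (x : L) (a b : ↥I) :
    adI K L I x ⁅a, b⁆ = ⁅adI K L I x a, b⁆ + ⁅a, adI K L I x b⁆ := by
  apply Subtype.ext
  simp only [adI, LinearMap.coe_mk, AddHom.coe_mk, AddSubmonoid.coe_add,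
    Submodule.coe_toAddSubmonoid, LieIdeal.coe_bracket_of_module]
  exact leibniz_lie x (a : L) (b : L)

/-- The action of `x ∈ L` on 2-cochains of `I` with trivial coefficients:
`(x·f)(y₁, y₂) = −f(⁅x,y₁⁆, y₂) − f(y₁, ⁅x,y₂⁆)`. -/
def actC2 (x : L) : (↥I → ↥I → K) →ₗ[K] (↥I → ↥I → K) where
  toFun f := fun a b => -f (adI K L I x a) b - f a (adI K L I x b)
  map_add' f g := by
    funext a b
    simp only [Pi.add_apply]
    ring
  map_smul' c f := by
    funext a b
    simp only [Pi.smul_apply, RingHom.id_apply, smul_eq_mul]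
    ring

lemma actC2_mem_Z2 (x : L) {f : ↥I → ↥I → K} (hf : f ∈ Z2 K L I) :
    actC2 K L I x f ∈ Z2 K L I := by
  obtain ⟨h1, h2, h3, h4, h5, h6⟩ := hf
  have hskew : ∀ a b : ↥I, f a b = -f b a := by
    intro a b
    have h := h5 (a + b)
    rw [h1, h3, h3, h5 a, h5 b] at h
    linear_combination h
  have key : ∀ a b : ↥I,
      actC2 K L I x f a b = -f (adI K L I x a) b - f a (adI K L I x b) := fun a b => rfl
  refine ⟨fun a a' b => ?_, fun c a b => ?_, fun a b b' => ?_, fun c a b => ?_,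
    fun a => ?_, fun a b c => ?_⟩
  · simp only [key, map_add, h1, h3]; ring
  · simp only [key, map_smul, h2, h4, smul_eq_mul]; ring
  · simp only [key, map_add, h1, h3]; ring
  · simp only [key, map_smul, h2, h4, smul_eq_mul]; ring
  · simp only [key]
    linear_combination -hskew (adI K L I x a) a
  · simp only [key]
    rw [adI_bracket K L I x a b, adI_bracket K L I x a c, adI_bracket K L I x b c,
      h1, h1, h1]
    linear_combination -h6 (adI K L I x a) b c - h6 a (adI K L I x b) c -
      h6 a b (adI K L I x c)

lemma actC2_mem_B2 (x : L) {f : ↥I → ↥I → K} (hf : f ∈ B2 K L I) :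
    actC2 K L I x f ∈ B2 K L I := by
  obtain ⟨g, hg⟩ := hf
  refine ⟨-(g ∘ₗ adI K L I x), fun a b => ?_⟩
  have key : actC2 K L I x f a b = -f (adI K L I x a) b - f a (adI K L I x b) := rfl
  rw [key, hg (adI K L I x a) b, hg a (adI K L I x b)]
  simp only [LinearMap.neg_apply, LinearMap.comp_apply, adI_bracket K L I x a b, map_add]
  ring

/-- The action of `x` on 2-cocycles. -/
def actZ2 (x : L) : ↥(Z2 K L I) →ₗ[K] ↥(Z2 K L I) :=
  (actC2 K L I x).restrict (fun f hf => actC2_mem_Z2 K L I x hf)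

/-- The induced action of `x ∈ L` on `H²(I,K)`, coming from the adjoint action of `x`
on the ideal `I`. -/
def actH2 (x : L) : H2 K L I →ₗ[K] H2 K L I :=
  Submodule.mapQ (Submodule.comap (Z2 K L I).subtype (B2 K L I))
    (Submodule.comap (Z2 K L I).subtype (B2 K L I)) (actZ2 K L I x)
    (by
      rintro ⟨f, hfZ⟩ hfB
      simpa [actZ2, LinearMap.restrict_apply, Submodule.mem_comap] using
        actC2_mem_B2 K L I x hfB)

end SecondCohomologyOfIdeal

open TensorProduct in
/-- Vanishing of `H²` for modules in an arbitrary universe, pulled back along `p`. -/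
lemma aux_transport (K : Type u) (L : Type v) [Field K] [LieRing L] [LieAlgebra K L]
    (h2 : IsTwoTrivial K L)
    {S : Type*} [LieRing S] [LieAlgebra K S] (p : L →ₗ⁅K⁆ S)
    {W : Type*} [AddCommGroup W] [Module K W] [LieRingModule S W] [LieModule K S W]
    [FiniteDimensional K W] (f : L →ₗ[K] L →ₗ[K] W) (halt : ∀ a, f a a = 0)
    (hf : ∀ x y z : L, ⁅p x, f y z⁆ - ⁅p y, f x z⁆ + ⁅p z, f x y⁆
      - f ⁅x, y⁆ z + f ⁅x, z⁆ y - f ⁅y, z⁆ x = 0) :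
    ∃ g : L →ₗ[K] W, ∀ x y : L, f x y = ⁅p x, g y⁆ - ⁅p y, g x⁆ - g ⁅x, y⁆ := by
  let e : W ≃ₗ[K] (Fin (Module.finrank K W) → K) := (Module.finBasis K W).equivFun
  let i1 : LieRingModule L (Fin (Module.finrank K W) → K) :=
    { bracket := fun x v => e ⁅p x, e.symm v⁆
      add_lie := fun x y v => by
        change e ⁅p (x + y), e.symm v⁆ = e ⁅p x, e.symm v⁆ + e ⁅p y, e.symm v⁆
        simp
      lie_add := fun x v w => by
        change e ⁅p x, e.symm (v + w)⁆ = e ⁅p x, e.symm v⁆ + e ⁅p x, e.symm w⁆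
        simp
      leibniz_lie := fun x y v => by
        change e ⁅p x, e.symm (e ⁅p y, e.symm v⁆)⁆ =
          e ⁅p ⁅x, y⁆, e.symm v⁆ + e ⁅p y, e.symm (e ⁅p x, e.symm v⁆)⁆
        rw [e.symm_apply_apply, e.symm_apply_apply, LieHom.map_lie, ← map_add, leibniz_lie] }
  have hb : ∀ (x : L) (v : Fin (Module.finrank K W) → K), ⁅x, v⁆ = e ⁅p x, e.symm v⁆ :=
    fun _ _ => rfl
  let i2 : LieModule K L (Fin (Module.finrank K W) → K) :=
    { smul_lie := fun t x v => by simp [hb]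
      lie_smul := fun t x v => by simp [hb] }
  obtain ⟨g, hg⟩ := h2 (Fin (Module.finrank K W) → K) (f.compr₂ e.toLinearMap) (by
    refine ⟨fun a => by simp [halt], fun x y z => ?_⟩
    have := congrArg e (hf x y z)
    simpa [hb] using this)
  refine ⟨e.symm.toLinearMap ∘ₗ g, fun x y => ?_⟩
  have := congrArg e.symm (hg x y)
  simpa [hb] using this

section AuxMain

variable {K : Type u} {L : Type v} [Field K] [LieRing L] [LieAlgebra K L]

/-- `D g (a, b) = g ⁅a, b⁆`. -/
def auxD (I : LieIdeal K L) (V : Type*) [AddCommGroup V] [Module K V] :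
    (I →ₗ[K] V) →ₗ[K] (I →ₗ[K] I →ₗ[K] V) where
  toFun g := LinearMap.mk₂ K (fun a b => g ⁅a, b⁆) (by simp) (by simp) (by simp) (by simp)
  map_add' g g' := by ext; simp
  map_smul' t g := by ext; simp

lemma auxD_apply (I : LieIdeal K L) (V : Type*) [AddCommGroup V] [Module K V]
    (g : I →ₗ[K] V) (a b : I) : auxD I V g a b = g ⁅a, b⁆ := rfl

variable (S : LieSubalgebra K L) (I : LieIdeal K L)

lemma aux_leib (s : S) (a b : I) : ⁅s, ⁅a, b⁆⁆ = ⁅⁅s, a⁆, b⁆ + ⁅a, ⁅s, b⁆⁆ := by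
  apply Subtype.ext
  exact leibniz_lie (s : L) (a : L) (b : L)

lemma auxD_lie (V : Type*) [AddCommGroup V] [Module K V] [LieRingModule S V] [LieModule K S V]
    (s : S) (g : I →ₗ[K] V) : auxD I V ⁅s, g⁆ = ⁅s, auxD I V g⁆ := by
  ext a b
  simp only [auxD_apply, LieHom.lie_apply, LinearMap.sub_apply, aux_leib, map_add]
  abel

/-- The kernel of `D` as an `S`-submodule. -/
def auxW (V : Type*) [AddCommGroup V] [Module K V] [LieRingModule S V] [LieModule K S V] :
    LieSubmodule K S (I →ₗ[K] V) where
  toSubmodule := LinearMap.ker (auxD I V)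
  lie_mem := by
    intro s g hg
    have hg' : auxD I V g = 0 := hg
    change auxD I V ⁅s, g⁆ = 0
    rw [auxD_lie, hg', lie_zero]

variable (V : Type u) [AddCommGroup V] [Module K V] [LieRingModule S V] [LieModule K S V]

lemma aux_step1 [FiniteDimensional K L] [FiniteDimensional K V] (h2 : IsTwoTrivial K L)
    (p : L →ₗ⁅K⁆ S) (hp : ∀ s : S, p s = s)
    (f : I →ₗ[K] I →ₗ[K] V) (hf : ∀ s : S, ∃ g : I →ₗ[K] V, ⁅s, f⁆ = auxD I V g) :
    ∃ g : S →ₗ[K] (I →ₗ[K] V), (∀ s, ⁅s, f⁆ = auxD I V (g s)) ∧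
      ∀ s t, ⁅s, g t⁆ - ⁅t, g s⁆ - g ⁅s, t⁆ = 0 := by
  have : ∃ g : S →ₗ[K] (I →ₗ[K] V), ∀ s, ⁅s, f⁆ = auxD I V (g s) := by
    let A : S →ₗ[K] (I →ₗ[K] I →ₗ[K] V) :=
      { toFun := fun s => ⁅s, f⁆
        map_add' := fun s t => add_lie s t f
        map_smul' := fun c s => smul_lie c s f }
    let A' : S →ₗ[K] LinearMap.range (auxD I V) :=
      A.codRestrict _ (fun s => by obtain ⟨g, hg⟩ := hf s; exact ⟨g, hg.symm⟩)
    obtain ⟨g, hg⟩ := Module.projective_lifting_property (auxD I V).rangeRestrict A'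
      (LinearMap.surjective_rangeRestrict _)
    refine ⟨g, fun s => ?_⟩
    have := congrArg Subtype.val (LinearMap.congr_fun hg s)
    exact this.symm
  obtain ⟨g, hg⟩ := this
  let hh : S → S → (I →ₗ[K] V) := fun s t => ⁅s, g t⁆ - ⁅t, g s⁆ - g ⁅s, t⁆
  have hmem : ∀ s t, hh s t ∈ auxW S I V := by
    intro s t
    change auxD I V (⁅s, g t⁆ - ⁅t, g s⁆ - g ⁅s, t⁆) = 0
    rw [map_sub, map_sub, auxD_lie, auxD_lie, ← hg, ← hg, ← hg, lie_lie]
    abel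
  let h : L →ₗ[K] L →ₗ[K] auxW S I V :=
    LinearMap.mk₂ K (fun x y => ⟨hh (p x) (p y), hmem _ _⟩)
      (fun x y z => by apply Subtype.ext; simp [hh]; abel)
      (fun c x z => by apply Subtype.ext; simp [hh, smul_sub])
      (fun x y z => by apply Subtype.ext; simp [hh]; abel)
      (fun c x z => by apply Subtype.ext; simp [hh, smul_sub])
  have hval : ∀ x y, (h x y : I →ₗ[K] V) = hh (p x) (p y) := fun _ _ => rfl
  have : FiniteDimensional K (auxW S I V) :=
    inferInstanceAs (FiniteDimensional K (LinearMap.ker (auxD I V)))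
  obtain ⟨k, hk⟩ := aux_transport K L h2 p h (fun a => by
      apply Subtype.ext; rw [hval]; simp [hh]) (fun x y z => by
      apply Subtype.ext
      simp only [LieSubmodule.coe_add, LieSubmodule.coe_sub, LieSubmodule.coe_bracket, hval,
        LieSubmodule.coe_zero, LieHom.map_lie, hh, lie_sub]
      have e1 := leibniz_lie (p x) (p y) (g (p z))
      have e2 := leibniz_lie (p x) (p z) (g (p y))
      have e3 := leibniz_lie (p y) (p z) (g (p x))
      have e4 : g ⁅⁅p x, p y⁆, p z⁆ - g ⁅⁅p x, p z⁆, p y⁆ + g ⁅⁅p y, p z⁆, p x⁆ = 0 := by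
        rw [← map_sub, ← map_add]
        have := lie_jacobi (p x) (p y) (p z)
        rw [← map_zero g]; congr 1
        have n1 : ⁅p z, p y⁆ = -⁅p y, p z⁆ := (lie_skew _ _).symm
        have n2 : ⁅p z, p x⁆ = -⁅p x, p z⁆ := (lie_skew _ _).symm
        have n3 : ⁅p y, p x⁆ = -⁅p x, p y⁆ := (lie_skew _ _).symm
        rw [n2, lie_neg] at this
        rw [lie_lie, lie_lie, lie_lie, n1, n2, n3, lie_neg, lie_neg, lie_neg]
        linear_combination (norm := module) (2 : K) • this
      rw [e1, e2, e3]
      linear_combination (norm := module) e4)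
  refine ⟨g - (auxW S I V).toSubmodule.subtype ∘ₗ k ∘ₗ S.toSubmodule.subtype, ?_, ?_⟩
  · intro s
    have : auxD I V (k s : I →ₗ[K] V) = 0 := (k s).2
    change ⁅s, f⁆ = auxD I V (g s - (k s : I →ₗ[K] V))
    rw [map_sub, this, sub_zero, hg]
  · intro s t
    have := congrArg Subtype.val (hk s t)
    rw [hval] at this
    simp only [LieSubmodule.coe_sub, LieSubmodule.coe_bracket, hp, hh] at this
    change ⁅s, g t - (k t : I →ₗ[K] V)⁆ - ⁅t, g s - (k s : I →ₗ[K] V)⁆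
      - (g ⁅s, t⁆ - (k (⁅s, t⁆ : S) : I →ₗ[K] V)) = 0
    rw [lie_sub, lie_sub, LieSubalgebra.coe_bracket]
    linear_combination (norm := module) this

lemma aux_main [FiniteDimensional K L] [FiniteDimensional K V] (h2 : IsTwoTrivial K L)
    (p : L →ₗ⁅K⁆ S) (hp : ∀ s : S, p s = s) (hpI : ∀ a : I, p a = 0)
    (q : L →ₗ[K] I) (hqI : ∀ a : I, q a = a)
    (hq : ∀ x y, q ⁅x, y⁆ = ⁅p x, q y⁆ - ⁅p y, q x⁆ + ⁅q x, q y⁆)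
    (f : I →ₗ[K] I →ₗ[K] V) (halt : ∀ a, f a a = 0)
    (hc : ∀ a b c : I, f ⁅a, b⁆ c - f ⁅a, c⁆ b + f ⁅b, c⁆ a = 0)
    (hf : ∀ s : S, ∃ g : I →ₗ[K] V, ⁅s, f⁆ = auxD I V g) :
    ∃ g : I →ₗ[K] V, ∀ a b, f a b = g ⁅a, b⁆ := by
  obtain ⟨g, hg, hgc⟩ := aux_step1 S I V h2 p hp f hf
  have hskew : ∀ a b, f a b = - f b a := by
    intro a b
    have := halt (a + b)
    simp only [map_add, LinearMap.add_apply, halt, zero_add, add_zero] at this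
    rw [eq_neg_iff_add_eq_zero, add_comm]; exact this
  have hg1 : ∀ (s : S) (a b : I), ⁅s, f a b⁆ - f a ⁅s, b⁆ - f ⁅s, a⁆ b - g s ⁅a, b⁆ = 0 := by
    intro s a b
    have := LinearMap.congr_fun (LinearMap.congr_fun (hg s) a) b
    rw [auxD_apply] at this
    rw [← this]
    simp [LieHom.lie_apply]
  have hg2 : ∀ (s t : S) (a : I),
      ⁅s, g t a⁆ - g t ⁅s, a⁆ - (⁅t, g s a⁆ - g s ⁅t, a⁆) - g ⁅s, t⁆ a = 0 := by
    intro s t a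
    have := LinearMap.congr_fun (hgc s t) a
    simpa [LieHom.lie_apply] using this
  let F : L →ₗ[K] L →ₗ[K] V :=
    LinearMap.mk₂ K (fun x y => f (q x) (q y) - (g (p x) (q y) - g (p y) (q x)))
      (fun x y z => by simp; abel)
      (fun c x z => by simp [smul_sub])
      (fun x y z => by simp; abel)
      (fun c x z => by simp [smul_sub])
  have hF : ∀ x y, F x y = f (q x) (q y) - (g (p x) (q y) - g (p y) (q x)) := fun _ _ => rfl
  obtain ⟨G, hG⟩ := aux_transport K L h2 p F (fun a => by simp [hF, halt]) (fun x y z => by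
    simp only [hF, hq, LieHom.map_lie, map_add, map_sub, LinearMap.add_apply,
      LinearMap.sub_apply, lie_sub]
    generalize p x = s, p y = t, p z = r, q x = a, q y = b, q z = c
    rw [hskew ⁅s, c⁆ b, hskew ⁅t, c⁆ a, hskew ⁅r, b⁆ a]
    linear_combination (norm := module) hg1 s b c - hg1 t a c + hg1 r a b - hc a b c
      - hg2 s t c + hg2 s r b - hg2 t r a)
  refine ⟨- (G ∘ₗ I.toSubmodule.subtype), fun a b => ?_⟩
  have := hG a b
  simp only [hF, hqI, hpI, map_zero, LinearMap.zero_apply, sub_zero, zero_lie, zero_sub] at this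
  rw [this]; rfl

end AuxMain

lemma aux_proj {K : Type u} {L : Type v} [Field K] [LieRing L] [LieAlgebra K L]
    (S : LieSubalgebra K L) (I : LieIdeal K L)
    (hcompl : IsCompl S.toSubmodule I.toSubmodule) :
    ∃ (p : L →ₗ⁅K⁆ S) (q : L →ₗ[K] I), (∀ s : S, p s = s) ∧ (∀ a : I, p a = 0) ∧
      (∀ a : I, q a = a) ∧
      ∀ x y, q ⁅x, y⁆ = ⁅p x, q y⁆ - ⁅p y, q x⁆ + ⁅q x, q y⁆ := by
  let p0 : L →ₗ[K] S := Submodule.projectionOnto _ _ hcompl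
  let q0 : L →ₗ[K] I := Submodule.projectionOnto _ _ hcompl.symm
  have hp1 : ∀ s : S, p0 s = s := fun s => Submodule.projectionOnto_apply_left hcompl s
  have hp2 : ∀ a : I, p0 a = 0 := fun a => Submodule.projectionOnto_apply_right hcompl a
  have hq1 : ∀ a : I, q0 a = a := fun a => Submodule.projectionOnto_apply_left hcompl.symm a
  have hq2 : ∀ s : S, q0 s = 0 :=
    fun a => Submodule.projectionOnto_apply_right hcompl.symm a
  have hsum : ∀ x : L, ∃ (s : S) (a : I), x = s + a := by
    intro x
    have : x ∈ S.toSubmodule ⊔ I.toSubmodule := by rw [hcompl.sup_eq_top]; trivial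
    obtain ⟨s, hs, a, ha, h⟩ := Submodule.mem_sup.mp this
    exact ⟨⟨s, hs⟩, ⟨a, ha⟩, h.symm⟩
  have hbr : ∀ (s t : S) (a b : I), ⁅(s : L) + a, (t : L) + b⁆ =
      ((⁅s, t⁆ : S) : L) + ((⁅s, b⁆ - ⁅t, a⁆ + ⁅a, b⁆ : I) : L) := by
    intro s t a b
    have : ((⁅s, b⁆ - ⁅t, a⁆ + ⁅a, b⁆ : I) : L) =
      ⁅(s : L), (b : L)⁆ - ⁅(t : L), (a : L)⁆ + ⁅(a : L), (b : L)⁆ := rfl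
    rw [this, LieSubalgebra.coe_bracket, lie_add, add_lie, add_lie, ← lie_skew (a : L) (t : L)]
    abel
  refine ⟨{ p0 with map_lie' := ?_ }, q0, hp1, hp2, hq1, ?_⟩
  · intro x y
    change p0 ⁅x, y⁆ = ⁅p0 x, p0 y⁆
    obtain ⟨s, a, rfl⟩ := hsum x
    obtain ⟨t, b, rfl⟩ := hsum y
    rw [hbr]
    simp only [map_add p0, hp1, hp2, add_zero]
  · intro x y
    change q0 ⁅x, y⁆ = ⁅p0 x, q0 y⁆ - ⁅p0 y, q0 x⁆ + ⁅q0 x, q0 y⁆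
    obtain ⟨s, a, rfl⟩ := hsum x
    obtain ⟨t, b, rfl⟩ := hsum y
    rw [hbr]
    simp only [map_add p0, map_add q0, hp1, hp2, hq1, hq2, add_zero, zero_add]

/-- Let `L` be a 2-trivial Lie algebra over a field `K` of characteristic zero which is
the semidirect sum `L = S ⋉ I` of a subalgebra `S` and an ideal `I` (`L = S ⊕ I` as
vector spaces).  Then for every finite-dimensional `S`-module `V`, the subspace of
`S`-invariants `(H²(I,K) ⊗ V)^S` is zero; here `S` acts on `H²(I,K)` via the action
induced by the adjoint action of `S` on `I`, and acts on the tensor product diagonally. -/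
theorem invariants_H2_tensor_eq_bot
    (K : Type u) (L : Type v) [Field K] [CharZero K]
    [LieRing L] [LieAlgebra K L] [FiniteDimensional K L]
    (S : LieSubalgebra K L) (I : LieIdeal K L)
    (hcompl : IsCompl S.toSubmodule I.toSubmodule)
    (h2 : IsTwoTrivial K L)
    (V : Type u) [AddCommGroup V] [Module K V] [LieRingModule ↥S V] [LieModule K ↥S V]
    [FiniteDimensional K V] :
    (⨅ s : ↥S, LinearMap.ker
        (TensorProduct.map (actH2 K L I (s : L)) LinearMap.id
          + TensorProduct.map LinearMap.id (LieModule.toEnd K ↥S V s))) = ⊥ := by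
  obtain ⟨p, q, hp, hpI, hqI, hq⟩ := aux_proj S I hcompl
  rw [eq_bot_iff]
  intro x hx
  rw [Submodule.mem_iInf] at hx
  rw [Submodule.mem_bot]
  let b := Module.finBasis K V
  obtain ⟨c, hc⟩ := TensorProduct.eq_repr_basis_right b x
  rw [Finsupp.sum_fintype _ _ (by simp)] at hc
  choose z hz using fun i => Submodule.Quotient.mk_surjective _ (c i)
  have hz1 : ∀ i, (z i : I → I → K) ∈ Z2 K L I := fun i => (z i).2
  let f : I →ₗ[K] I →ₗ[K] V :=
    LinearMap.mk₂ K (fun a a' => ∑ i, (z i : I → I → K) a a' • b i)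
      (fun a a' d => by simp only [(hz1 _).1, add_smul, Finset.sum_add_distrib])
      (fun t a d => by simp only [(hz1 _).2.1, smul_assoc, Finset.smul_sum])
      (fun a a' d => by simp only [(hz1 _).2.2.1, add_smul, Finset.sum_add_distrib])
      (fun t a d => by simp only [(hz1 _).2.2.2.1, smul_assoc, Finset.smul_sum])
  have hfv : ∀ a a', f a a' = ∑ i, (z i : I → I → K) a a' • b i := fun _ _ => rfl
  have hfr : ∀ a a' i, b.repr (f a a') i = (z i : I → I → K) a a' := by
    intro a a' i
    rw [hfv]
    rw [b.repr_sum_self]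
  obtain ⟨g, hg⟩ := aux_main S I V h2 p hp hpI q hqI hq f
    (fun a => by simp [hfv, (hz1 _).2.2.2.2.1])
    (fun a a' d => by
      simp only [hfv, ← Finset.sum_sub_distrib, ← Finset.sum_add_distrib, ← sub_smul,
        ← add_smul, (hz1 _).2.2.2.2.2, zero_smul, Finset.sum_const_zero])
    (fun s => by
      have h1 := hx s
      rw [LinearMap.mem_ker, ← hc] at h1
      have h3 : ∀ j, ∃ g : I →ₗ[K] K, ∀ a a' : I,
          actC2 K L I (s : L) (z j) a a' +
            ∑ i, b.repr ⁅s, b i⁆ j * (z i : I → I → K) a a' = g ⁅a, a'⁆ := by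
        intro j
        have h4 := congrArg ((TensorProduct.rid K (H2 K L I)).toLinearMap ∘ₗ
          LinearMap.lTensor (H2 K L I) (b.coord j)) h1
        simp only [LinearMap.add_apply, map_sum, TensorProduct.map_tmul, LinearMap.id_apply,
          LieModule.toEnd_apply_apply, map_add, LinearMap.comp_apply, LinearEquiv.coe_coe,
          LinearMap.lTensor_tmul, TensorProduct.rid_tmul, Module.Basis.coord_apply,
          Module.Basis.repr_self, map_zero, ← hz] at h4
        have h5 : (Submodule.Quotient.mk (actZ2 K L I (s : L) (z j) +
            ∑ i, b.repr ⁅s, b i⁆ j • z i) : H2 K L I) = 0 := by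
          rw [← h4]
          simp only [← Submodule.mkQ_apply, map_add, map_sum, map_smul, Finset.sum_add_distrib]
          congr 1
          symm
          rw [Finset.sum_eq_single j]
          · simp [actH2]
          · intro i _ hij
            simp [Finsupp.single_apply, hij]
          · simp
        rw [Submodule.Quotient.mk_eq_zero] at h5
        obtain ⟨g, hg⟩ := h5
        refine ⟨g, fun a a' => ?_⟩
        rw [← hg]
        simp [actZ2, LinearMap.restrict_apply, Finset.sum_apply]
      choose g hg using h3
      refine ⟨∑ j, (g j).smulRight (b j), ?_⟩
      ext a a'
      apply b.repr.injective
      ext j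
      have hR : auxD I V (∑ j, (g j).smulRight (b j)) a a' = ∑ j, g j ⁅a, a'⁆ • b j := by
        simp [auxD_apply]
      have hL : ⁅s, f⁆ a a' = ⁅s, f a a'⁆ - f a ⁅s, a'⁆ - f ⁅s, a⁆ a' := by
        simp [LieHom.lie_apply]
      have hs : b.repr ⁅s, f a a'⁆ j = ∑ i, b.repr ⁅s, b i⁆ j * (z i : I → I → K) a a' := by
        rw [hfv, lie_sum]
        simp [mul_comm]
      rw [hR, hL, b.repr_sum_self, ← hg]
      simp only [map_sub, Finsupp.sub_apply, hfr, hs]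
      change _ = (-(z j : I → I → K) ⁅s, a⁆ a' - (z j : I → I → K) a ⁅s, a'⁆) + _
      ring)
  rw [← hc]
  apply Finset.sum_eq_zero
  intro i _
  have : c i = 0 := by
    rw [← hz, Submodule.Quotient.mk_eq_zero]
    refine ⟨b.coord i ∘ₗ g, fun a a' => ?_⟩
    rw [LinearMap.comp_apply, ← hg, Module.Basis.coord_apply, hfr]
    rfl
  rw [this, TensorProduct.zero_tmul]
end

section
/- Let L be a 2-trivial Lie algebra over a field K of characteristic zero, and let Rad(L) denote its solvable radical. Then H^2(Rad(L), K) = 0, where K is the trivial one-dimensional Rad(L)-module. -/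
universe u v

section RtscProof

attribute [local instance] LieRing.ofAssociativeRing
open LieAlgebra LieModule

theorem rtsc_solvable_of_faithful {K N M : Type*} [Field K] [CharZero K] [LieRing N] [LieAlgebra K N]
    [FiniteDimensional K N]
    [AddCommGroup M] [Module K M] [LieRingModule N M] [LieModule K N M] [FiniteDimensional K M]
    (h0 : traceForm K N M = 0) (hinj : ∀ x : N, (∀ m : M, ⁅x, m⁆ = 0) → x = 0) :
    IsSolvable N := by
  have h1 := isNilpotent_derivedSeries_of_traceForm_eq_zero (R := K) h0
  have h2 : LieRing.IsNilpotent (derivedSeries K N 1) := by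
    rw [LieAlgebra.isNilpotent_iff_forall (R := K)]
    rintro x
    have hx := (LieModule.isNilpotent_iff_forall' (R := K)).mp h1 x
    have hx' := LieAlgebra.ad_nilpotent_of_nilpotent (R := K) hx
    obtain ⟨n, hn⟩ := hx'
    refine ⟨n, ?_⟩
    have key : ∀ (n : ℕ) (y : derivedSeries K N 1),
        toEnd K (derivedSeries K N 1) M ((ad K _ x ^ n) y) =
        (ad K (Module.End K M) (toEnd K (derivedSeries K N 1) M x) ^ n)
          (toEnd K (derivedSeries K N 1) M y) := by
      intro n
      induction n with
      | zero => intro y; simp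
      | succ k ih =>
        intro y
        rw [pow_succ, pow_succ, Module.End.mul_apply, Module.End.mul_apply, ih]
        congr 1
        exact LieHom.map_lie (toEnd K (derivedSeries K N 1) M) x y
    ext y
    have h3 := key n y
    rw [hn] at h3
    have : ((ad K _ x ^ n) y : derivedSeries K N 1) = 0 := by
      apply Subtype.ext
      apply hinj
      intro m
      exact LinearMap.congr_fun h3 m
    rw [this]; rfl
  have h4 : IsSolvable (derivedSeries K N 1) := inferInstance
  obtain ⟨k, hk⟩ := IsSolvable.solvable K (derivedSeries K N 1)
  rw [LieIdeal.derivedSeries_eq_bot_iff] at hk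
  refine IsSolvable.mk (R := K) (k := k + 1) ?_
  rw [derivedSeries_def, derivedSeriesOfIdeal_add]
  exact hk

theorem rtsc_casimir {K S M : Type*} [Field K] [CharZero K] [LieRing S] [LieAlgebra K S]
    [FiniteDimensional K S] [HasTrivialRadical K S]
    [AddCommGroup M] [Module K M] [LieRingModule S M] [LieModule K S M] [FiniteDimensional K M] :
    ∃ C : Module.End K M, (∀ (x : S) (m : M), C ⁅x, m⁆ = ⁅x, C m⁆) ∧
      (∀ N : Submodule K M, (∀ (x : S) (m : M), ⁅x, m⁆ ∈ N) → ∀ m, C m ∈ N) ∧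
      (LinearMap.trace K M C = 0 → ∀ (x : S) (m : M), ⁅x, m⁆ = 0) := by
  classical
  obtain ⟨J, hJ⟩ := exists_isCompl (LieModule.ker K S M)
  set B : LinearMap.BilinForm K J := (traceForm K S M).restrict J.toSubmodule with hB
  have hBapp : ∀ x y : J, B x y = traceForm K S M (x : S) (y : S) := fun _ _ => rfl
  have hker : ∀ x : S, (∀ m : M, ⁅x, m⁆ = 0) → x ∈ J → x = 0 := by
    intro x hx hxJ
    have : x ∈ LieModule.ker K S M ⊓ J := ⟨by simpa [LieModule.mem_ker] using hx, hxJ⟩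
    rw [hJ.inf_eq_bot] at this
    simpa using this
  have hsymm : B.IsSymm := ⟨fun x y => by rw [hBapp, hBapp]; exact traceForm_comm K S M _ _⟩
  -- kernel of the form
  let N : LieIdeal K S :=
    { carrier := {x | x ∈ J ∧ ∀ y ∈ J, traceForm K S M x y = 0}
      add_mem' := by
        rintro a b ⟨h1, h2⟩ ⟨h3, h4⟩
        refine ⟨add_mem h1 h3, fun y hy => ?_⟩
        simp [h2 y hy, h4 y hy]
      zero_mem' := ⟨zero_mem _, fun y _ => by simp⟩
      smul_mem' := by
        rintro c a ⟨h1, h2⟩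
        refine ⟨SMulMemClass.smul_mem c h1, fun y hy => ?_⟩
        simp [h2 y hy]
      lie_mem := by
        rintro x a ⟨h1, h2⟩
        refine ⟨lie_mem_right K S J x a h1, fun y hy => ?_⟩
        rw [← lie_skew, map_neg, LinearMap.neg_apply, traceForm_apply_lie_apply,
          h2 _ (lie_mem_right K S J x y hy), neg_zero] }
  have hN : N = ⊥ := by
    have hs : IsSolvable N := by
      apply rtsc_solvable_of_faithful (K := K) (M := M)
      · ext x y
        exact x.2.2 y y.2.1
      · intro x hx
        exact Subtype.ext (hker x hx x.2.1)
    exact HasTrivialRadical.eq_bot_of_isSolvable N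
  have hnd : B.Nondegenerate := by
    refine (LinearMap.IsRefl.nondegenerate_iff_separatingLeft hsymm.isRefl).mpr ?_
    intro x hx
    have : (x : S) ∈ N := ⟨x.2, fun y hy => hx ⟨y, hy⟩⟩
    rw [hN] at this
    exact Subtype.ext (by simpa using this)
  let b := Module.finBasis K J
  let d := B.dualBasis hnd b
  let ρ := toEnd K S M
  have hcomm : ∀ (x : S), ∑ i, (ρ (⁅x, (b i : S)⁆) * ρ (d i) + ρ (b i) * ρ ⁅x, (d i : S)⁆) = 0 := by
    intro x
    have e1 : ∀ i, ρ ⁅x, (b i : S)⁆ = ∑ j, B ⁅x, b i⁆ (d j) • ρ (b j) := by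
      intro i
      have h := b.sum_repr ⁅x, b i⁆
      have h' := congrArg (fun z : J => ρ (z : S)) h
      simp only [LieSubmodule.coe_bracket] at h'
      rw [← h', AddSubmonoidClass.coe_finsetSum, map_sum]
      refine Finset.sum_congr rfl fun j _ => ?_
      rw [LieSubmodule.coe_smul, map_smul]
      congr 1
      have := B.dualBasis_repr_apply hnd d ⁅x, b i⁆ j
      rw [B.dualBasis_dualBasis hnd hsymm] at this
      exact this
    have e2 : ∀ i, ρ ⁅x, (d i : S)⁆ = ∑ j, B ⁅x, d i⁆ (b j) • ρ (d j) := by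
      intro i
      have h := d.sum_repr ⁅x, d i⁆
      have h' := congrArg (fun z : J => ρ (z : S)) h
      simp only [LieSubmodule.coe_bracket] at h'
      rw [← h', AddSubmonoidClass.coe_finsetSum, map_sum]
      refine Finset.sum_congr rfl fun j _ => ?_
      rw [LieSubmodule.coe_smul, map_smul]
      congr 1
      exact B.dualBasis_repr_apply hnd b ⁅x, d i⁆ j
    have e3 : ∀ i j, B ⁅x, d i⁆ (b j) = - B ⁅x, b j⁆ (d i) := by
      intro i j
      rw [hBapp, hBapp, LieSubmodule.coe_bracket, LieSubmodule.coe_bracket,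
        ← lie_skew, map_neg, LinearMap.neg_apply, traceForm_apply_lie_apply, traceForm_comm]
    rw [Finset.sum_add_distrib]
    simp only [e1, e2, e3, Finset.sum_mul, Finset.mul_sum, smul_mul_assoc, mul_smul_comm, neg_smul, mul_neg,
      Finset.sum_neg_distrib]
    rw [add_neg_eq_zero, Finset.sum_comm]
  refine ⟨∑ i, ρ (b i) * ρ (d i), ?_, ?_, ?_⟩
  · intro x m
    have := LinearMap.congr_fun (hcomm x) m
    simp only [LinearMap.sum_apply, LinearMap.add_apply, Module.End.mul_apply, ρ, toEnd_apply_apply, LinearMap.zero_apply] at this ⊢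
    rw [lie_sum, ← sub_eq_zero, ← Finset.sum_sub_distrib, ← neg_eq_zero, ← Finset.sum_neg_distrib, ← this]
    refine Finset.sum_congr rfl fun i _ => ?_
    simp only [lie_lie, lie_sub]
    abel
  · intro N hN m
    simp only [LinearMap.sum_apply, Module.End.mul_apply, ρ, toEnd_apply_apply]
    exact sum_mem fun i _ => hN _ _
  · intro h
    have h1 : ∀ i, LinearMap.trace K M (ρ (b i) * ρ (d i)) = 1 := by
      intro i
      have := B.apply_dualBasis_right hnd hsymm b i i
      rw [if_pos rfl] at this
      exact this
    rw [map_sum, Finset.sum_congr rfl fun i _ => h1 i] at h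
    simp at h
    have hJ0 : J = ⊥ := by
      have hsub : Subsingleton J := by
        rw [← Module.finrank_zero_iff (R := K)]
        exact h
      rw [eq_bot_iff]
      intro x hx
      have : (⟨x, hx⟩ : J) = 0 := Subsingleton.elim _ _
      simpa using congrArg Subtype.val this
    rw [hJ0] at hJ
    have : LieModule.ker K S M = ⊤ := by simpa using hJ.sup_eq_top
    intro x m
    have hx : x ∈ LieModule.ker K S M := by rw [this]; trivial
    rw [LieModule.mem_ker] at hx
    exact hx m

theorem rtsc_weyl {K S : Type*} [Field K] [CharZero K] [LieRing S] [LieAlgebra K S]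
    [FiniteDimensional K S] [HasTrivialRadical K S] (n : ℕ) :
    ∀ (M : Type v) [AddCommGroup M] [Module K M] [LieRingModule S M] [LieModule K S M]
      [FiniteDimensional K M] (_ : Module.finrank K M = n) (N : Submodule K M)
      (_ : ∀ (x : S) (m : M), ⁅x, m⁆ ∈ N) (m : M), ∃ n ∈ N, ∀ x : S, ⁅x, m - n⁆ = 0 := by
  induction n using Nat.strong_induction_on with
  | _ n ih =>
  intro M _ _ _ _ _ hn N hN m
  obtain ⟨C, hC1, hC2, hC3⟩ := rtsc_casimir (K := K) (S := S) (M := M)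
  by_cases hnil : _root_.IsNilpotent C
  · have := hC3 (LinearMap.isNilpotent_trace_of_isNilpotent hnil).eq_zero
    exact ⟨0, zero_mem _, fun x => this x _⟩
  obtain ⟨k0, hk0⟩ := Filter.eventually_atTop.mp C.eventually_isCompl_ker_pow_range_pow
  have hk := hk0 (k0 + 1) (Nat.le_succ _)
  set k := k0 + 1 with hkdef
  have hCk : ∀ (j : ℕ) (x : S) (m : M), (C ^ j) ⁅x, m⁆ = ⁅x, (C ^ j) m⁆ := by
    intro j
    induction j with
    | zero => intro x m; simp
    | succ j ihj => intro x m; rw [pow_succ, Module.End.mul_apply, hC1, ihj]; rfl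
  let P : LieSubmodule K S M :=
    { LinearMap.ker (C ^ k) with
      lie_mem := by
        intro x m hm
        have hm' : (C ^ k) m = 0 := hm
        change (C ^ k) ⁅x, m⁆ = 0
        rw [hCk, hm', lie_zero] }
  have hPmem : ∀ m : M, m ∈ P ↔ (C ^ k) m = 0 := fun m => Iff.rfl
  have hlt : Module.finrank K P < n := by
    rw [← hn]
    apply Submodule.finrank_lt (s := LinearMap.ker (C ^ k))
    intro h
    exact hnil ⟨k, LinearMap.ker_eq_top.mp h⟩
  have hm : m ∈ LinearMap.ker (C ^ k) ⊔ LinearMap.range (C ^ k) := by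
    rw [hk.sup_eq_top]; trivial
  obtain ⟨a, ha, b, hb, rfl⟩ := Submodule.mem_sup.mp hm
  have hbN : b ∈ N := by
    obtain ⟨c, rfl⟩ := hb
    rw [hkdef, pow_succ', Module.End.mul_apply]
    exact hC2 N hN _
  obtain ⟨n0, hn0, hn0'⟩ := ih _ hlt P rfl (N.comap P.toSubmodule.subtype)
    (fun x m => hN x m) ⟨a, ha⟩
  refine ⟨n0 + b, add_mem hn0 hbN, fun x => ?_⟩
  have := congrArg Subtype.val (hn0' x)
  simpa [add_sub_add_right_eq_sub] using this

theorem rtsc_weyl_rel {K L S X : Type*} [Field K] [CharZero K] [LieRing S] [LieAlgebra K S]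
    [FiniteDimensional K S] [HasTrivialRadical K S] [LieRing L] [LieAlgebra K L]
    (π : L →ₗ⁅K⁆ S) (hπ : Function.Surjective π)
    [AddCommGroup X] [Module K X] [LieRingModule L X] [LieModule K L X] [FiniteDimensional K X]
    (P : LieSubmodule K L X) (hP : ∀ r : L, π r = 0 → ∀ m : X, ⁅r, m⁆ ∈ P)
    (N : Submodule K X) (hPN : P.toSubmodule ≤ N) (hN : ∀ (x : L) (m : X), ⁅x, m⁆ ∈ N) (m : X) :
    ∃ n : X, m - n ∈ N ∧ ∀ x : L, ⁅x, n⁆ ∈ P := by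
  have key0 : ∀ (r : L), π r = 0 → ∀ q : X ⧸ P, ⁅r, q⁆ = 0 := by
    intro r hr q
    obtain ⟨m, rfl⟩ := LieSubmodule.Quotient.surjective_mk' P q
    rw [← LieModuleHom.map_lie, LieSubmodule.Quotient.mk_eq_zero]
    exact hP r hr m
  have key : ∀ x y : L, π x = π y → ∀ q : X ⧸ P, ⁅x, q⁆ = ⁅y, q⁆ := by
    intro x y hxy q
    rw [← sub_eq_zero, ← sub_lie]
    exact key0 _ (by rw [map_sub, hxy, sub_self]) q
  obtain ⟨σ, hσ⟩ := hπ.hasRightInverse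
  let i1 : LieRingModule S (X ⧸ P) :=
    { bracket := fun s q => ⁅σ s, q⁆
      add_lie := fun s t q => by
        change ⁅σ (s + t), q⁆ = ⁅σ s, q⁆ + ⁅σ t, q⁆
        rw [← add_lie]
        exact key _ _ (by rw [map_add, hσ, hσ, hσ]) q
      lie_add := fun s q q' => lie_add (σ s) q q'
      leibniz_lie := fun s t q => by
        change ⁅σ s, ⁅σ t, q⁆⁆ = ⁅σ ⁅s, t⁆, q⁆ + ⁅σ t, ⁅σ s, q⁆⁆
        rw [leibniz_lie, key (σ ⁅s, t⁆) ⁅σ s, σ t⁆ (by rw [LieHom.map_lie, hσ, hσ, hσ])] }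
  have hbr : ∀ (s : S) (q : X ⧸ P), ⁅s, q⁆ = ⁅σ s, q⁆ := fun _ _ => rfl
  have i2 : LieModule K S (X ⧸ P) :=
    { smul_lie := fun c s q => by
        rw [hbr, hbr, ← smul_lie]
        exact key _ _ (by rw [map_smul, hσ, hσ]) q
      lie_smul := fun c s q => by rw [hbr, hbr, lie_smul] }
  have : FiniteDimensional K (X ⧸ P) :=
    Module.Finite.of_surjective (LieSubmodule.Quotient.mk' P : X →ₗ[K] X ⧸ P)
      (LieSubmodule.Quotient.surjective_mk' P)
  obtain ⟨n, hn, hn'⟩ := rtsc_weyl (K := K) (S := S) _ (X ⧸ P) rfl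
    (N.map (LieSubmodule.Quotient.mk' P : X →ₗ[K] X ⧸ P)) (by
      intro s q
      obtain ⟨m, rfl⟩ := LieSubmodule.Quotient.surjective_mk' P q
      rw [hbr, ← LieModuleHom.map_lie]
      exact ⟨_, hN _ _, rfl⟩) (LieSubmodule.Quotient.mk' P m)
  obtain ⟨n, hnN, rfl⟩ := hn
  refine ⟨m - n, by simpa using hnN, fun x => ?_⟩
  have h := hn' (π x)
  rw [hbr, key (σ (π x)) x (hσ _)] at h
  rw [← LieSubmodule.Quotient.mk_eq_zero (N := P), LieModuleHom.map_lie, map_sub]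
  exact h

theorem rtsc_levi_step {K L S : Type*} [Field K] [CharZero K] [LieRing S] [LieAlgebra K S]
    [FiniteDimensional K S] [HasTrivialRadical K S] [LieRing L] [LieAlgebra K L]
    [FiniteDimensional K L]
    (π : L →ₗ⁅K⁆ S) (hπ : Function.Surjective π) (hsol : IsSolvable π.ker) (hne : π.ker ≠ ⊥) :
    ∃ T : LieSubalgebra K L, T ≠ ⊤ ∧ ∀ s : S, ∃ x ∈ T, π x = s := by
  set R : LieIdeal K L := π.ker with hR
  have hRmem : ∀ x : L, x ∈ R ↔ π x = 0 := fun x => LieHom.mem_ker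
  set D : LieIdeal K L := ⁅R, R⁆ with hD
  have hDR : ¬ R ≤ D := by
    intro h
    obtain ⟨k, hk⟩ := IsSolvable.solvable K R
    rw [LieIdeal.derivedSeries_eq_bot_iff] at hk
    have : ∀ j, R ≤ derivedSeriesOfIdeal K L j R := by
      intro j
      induction j with
      | zero => exact le_rfl
      | succ j ih =>
        rw [derivedSeriesOfIdeal_succ]
        exact h.trans (LieSubmodule.mono_lie ih ih)
    exact hne (le_bot_iff.mp (hk ▸ this k))
  let mk := LieSubmodule.Quotient.mk' D
  have mk0 : ∀ x, mk x = 0 ↔ x ∈ D := fun x => LieSubmodule.Quotient.mk_eq_zero D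
  have hDmem : ∀ r ∈ R, ∀ r' ∈ R, mk ⁅r, r'⁆ = 0 := fun r hr r' hr' =>
    (mk0 _).mpr (LieSubmodule.lie_mem_lie hr hr')
  have hlie : ∀ (x : L) (r : L), r ∈ R → ⁅x, r⁆ ∈ R := fun x r hr => R.lie_mem hr
  have hlie' : ∀ (x : L) (r : L), r ∈ R → ⁅r, x⁆ ∈ R := fun x r hr => by
    rw [← lie_skew]; exact neg_mem (R.lie_mem hr)
  -- the module of maps acting as a scalar on `R`
  let M : LieSubmodule K L (L →ₗ[K] L ⧸ D) :=
    { carrier := {φ | (∀ x, ∃ r ∈ R, φ x = mk r) ∧ ∃ c : K, ∀ r ∈ R, φ r = c • mk r}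
      add_mem' := by
        rintro φ ψ ⟨h1, c, h2⟩ ⟨h3, d, h4⟩
        refine ⟨fun x => ?_, c + d, fun r hr => ?_⟩
        · obtain ⟨r, hr, e⟩ := h1 x
          obtain ⟨r', hr', e'⟩ := h3 x
          exact ⟨r + r', add_mem hr hr', by rw [LinearMap.add_apply, e, e', map_add]⟩
        · rw [LinearMap.add_apply, h2 r hr, h4 r hr, add_smul]
      zero_mem' := ⟨fun x => ⟨0, zero_mem _, by simp⟩, 0, fun r _ => by simp⟩
      smul_mem' := by
        rintro a φ ⟨h1, c, h2⟩
        refine ⟨fun x => ?_, a * c, fun r hr => ?_⟩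
        · obtain ⟨r, hr, e⟩ := h1 x
          exact ⟨a • r, SMulMemClass.smul_mem a hr, by rw [LinearMap.smul_apply, e, map_smul]⟩
        · rw [LinearMap.smul_apply, h2 r hr, mul_smul]
      lie_mem := by
        rintro x φ ⟨h1, c, h2⟩
        refine ⟨fun y => ?_, 0, fun r hr => ?_⟩
        · obtain ⟨r, hr, e⟩ := h1 y
          obtain ⟨r', hr', e'⟩ := h1 ⁅x, y⁆
          refine ⟨⁅x, r⁆ - r', sub_mem (hlie _ _ hr) hr', ?_⟩
          rw [LieHom.lie_apply, e, e', map_sub, LieModuleHom.map_lie]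
        · rw [LieHom.lie_apply, h2 r hr, h2 _ (hlie x r hr), LieModuleHom.map_lie, lie_smul,
            sub_self, zero_smul] }
  let ev : L → (L →ₗ[K] L ⧸ D) := fun r => - ((mk : L →ₗ[K] L ⧸ D) ∘ₗ (ad K L r))
  have hev : ∀ r y, ev r y = mk ⁅y, r⁆ := by
    intro r y
    simp only [ev, LinearMap.neg_apply, LinearMap.comp_apply, ad_apply]
    rw [← lie_skew y r, map_neg]; rfl
  let P : LieSubmodule K L M :=
    { carrier := {φ | ∃ r ∈ R, (φ : L →ₗ[K] L ⧸ D) = ev r}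
      add_mem' := by
        rintro φ ψ ⟨r, hr, h1⟩ ⟨r', hr', h2⟩
        refine ⟨r + r', add_mem hr hr', LinearMap.ext fun y => ?_⟩
        rw [hev, lie_add, map_add, ← hev, ← hev, ← h1, ← h2]; rfl
      zero_mem' := ⟨0, zero_mem _, LinearMap.ext fun y => by rw [hev]; simp⟩
      smul_mem' := by
        rintro a φ ⟨r, hr, h1⟩
        refine ⟨a • r, SMulMemClass.smul_mem a hr, LinearMap.ext fun y => ?_⟩
        rw [hev, lie_smul, map_smul, ← hev, ← h1]; rfl
      lie_mem := by
        rintro x φ ⟨r, hr, h1⟩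
        refine ⟨⁅x, r⁆, hlie x r hr, LinearMap.ext fun y => ?_⟩
        rw [LieSubmodule.coe_bracket, h1, LieHom.lie_apply, hev, hev, hev, ← LieModuleHom.map_lie,
          ← map_sub, leibniz_lie x y r, add_sub_cancel_left] }
  let N : Submodule K M :=
    { carrier := {φ | ∀ r ∈ R, (φ : L →ₗ[K] L ⧸ D) r = 0}
      add_mem' := by
        intro φ ψ h1 h2 r hr
        change (φ : L →ₗ[K] L ⧸ D) r + (ψ : L →ₗ[K] L ⧸ D) r = 0
        rw [h1 r hr, h2 r hr, add_zero]
      zero_mem' := fun r _ => rfl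
      smul_mem' := by
        intro a φ h1 r hr
        change a • (φ : L →ₗ[K] L ⧸ D) r = 0
        rw [h1 r hr, smul_zero] }
  have hrev : ∀ φ : L →ₗ[K] L ⧸ D, φ ∈ M → ∀ c : K, (∀ r ∈ R, φ r = c • mk r) →
      ∀ r ∈ R, ⁅r, φ⁆ = ev (c • r) := by
    rintro φ hφ c hc r hr
    refine LinearMap.ext fun y => ?_
    obtain ⟨r', hr', e⟩ := hφ.1 y
    rw [LieHom.lie_apply, hev, e, ← LieModuleHom.map_lie, hDmem r hr r' hr', zero_sub,
      hc _ (hlie' y r hr), ← map_smul, ← map_neg, ← smul_neg, lie_skew, lie_smul]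
  have hP : ∀ r : L, π r = 0 → ∀ m : M, ⁅r, m⁆ ∈ P := by
    intro r hr φ
    obtain ⟨c, hc⟩ := φ.2.2
    exact ⟨c • r, SMulMemClass.smul_mem c ((hRmem r).mpr hr),
      hrev φ φ.2 c hc r ((hRmem r).mpr hr)⟩
  have hPN : P.toSubmodule ≤ N := by
    rintro φ ⟨r, hr, h1⟩ r' hr'
    rw [h1, hev]
    exact hDmem _ hr' _ hr
  have hN : ∀ (x : L) (m : M), ⁅x, m⁆ ∈ N := by
    intro x φ r hr
    obtain ⟨c, hc⟩ := φ.2.2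
    rw [LieSubmodule.coe_bracket, LieHom.lie_apply, hc r hr, hc _ (hlie x r hr),
      LieModuleHom.map_lie, lie_smul, sub_self]
  obtain ⟨p, hp⟩ := R.toSubmodule.subtype.exists_leftInverse_of_injective
    (Submodule.ker_subtype _)
  have hp' : ∀ r (hr : r ∈ R), (p r : L) = r := fun r hr =>
    congrArg Subtype.val (LinearMap.congr_fun hp ⟨r, hr⟩)
  let φ₀ : M := ⟨(mk : L →ₗ[K] L ⧸ D) ∘ₗ R.toSubmodule.subtype ∘ₗ p,
    fun x => ⟨p x, (p x).2, rfl⟩, 1, fun r hr => by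
      rw [one_smul]
      exact congrArg mk (hp' r hr)⟩
  obtain ⟨φ, h1, h2⟩ := rtsc_weyl_rel π hπ P hP N hPN hN φ₀
  have hφR : ∀ r ∈ R, (φ : L →ₗ[K] L ⧸ D) r = mk r := by
    intro r hr
    have h3 := h1 r hr
    have h4 : (φ₀ : L →ₗ[K] L ⧸ D) r - (φ : L →ₗ[K] L ⧸ D) r = 0 := h3
    rw [← sub_eq_zero.mp h4]
    exact congrArg mk (hp' r hr)
  let T : LieSubalgebra K L :=
    { carrier := {x | ⁅x, (φ : L →ₗ[K] L ⧸ D)⁆ = 0}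
      add_mem' := by
        intro a b (ha : _ = _) (hb : _ = _)
        change ⁅a + b, (φ : L →ₗ[K] L ⧸ D)⁆ = 0
        rw [add_lie, ha, hb, add_zero]
      zero_mem' := zero_lie _
      smul_mem' := by
        intro c a (ha : _ = _)
        change ⁅c • a, (φ : L →ₗ[K] L ⧸ D)⁆ = 0
        rw [smul_lie, ha, smul_zero]
      lie_mem' := by
        intro a b (ha : _ = _) (hb : _ = _)
        change ⁅⁅a, b⁆, (φ : L →ₗ[K] L ⧸ D)⁆ = 0
        rw [lie_lie, ha, hb, lie_zero, lie_zero, sub_zero] }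
  have hTmem : ∀ x, x ∈ T ↔ ⁅x, (φ : L →ₗ[K] L ⧸ D)⁆ = 0 := fun _ => Iff.rfl
  by_cases hT : T = ⊤
  · have hall : ∀ x y : L, (φ : L →ₗ[K] L ⧸ D) ⁅x, y⁆ = ⁅x, (φ : L →ₗ[K] L ⧸ D) y⁆ := by
      intro x y
      have hx : x ∈ T := by rw [hT]; trivial
      have := LinearMap.congr_fun ((hTmem x).mp hx) y
      rw [LieHom.lie_apply, LinearMap.zero_apply, sub_eq_zero] at this
      exact this.symm
    let T' : LieSubalgebra K L :=
      { LinearMap.ker (φ : L →ₗ[K] L ⧸ D) with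
        lie_mem' := by
          intro a b _ hb
          have hb' : (φ : L →ₗ[K] L ⧸ D) b = 0 := hb
          change (φ : L →ₗ[K] L ⧸ D) ⁅a, b⁆ = 0
          rw [hall, hb', lie_zero] }
    have hT'mem : ∀ x, x ∈ T' ↔ (φ : L →ₗ[K] L ⧸ D) x = 0 := fun _ => Iff.rfl
    refine ⟨T', fun h => hDR fun r hr => ?_, fun s => ?_⟩
    · have hrT : r ∈ T' := by rw [h]; trivial
      rw [← mk0, ← hφR r hr]
      exact hrT
    · obtain ⟨x, rfl⟩ := hπ s
      obtain ⟨r, hr, e⟩ := φ.2.1 x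
      refine ⟨x - r, ?_, ?_⟩
      · rw [hT'mem, map_sub, hφR r hr, e, sub_self]
      · rw [map_sub, (hRmem r).mp hr, sub_zero]
  · refine ⟨T, hT, fun s => ?_⟩
    obtain ⟨x, rfl⟩ := hπ s
    obtain ⟨r, hr, e⟩ := h2 x
    refine ⟨x - r, ?_, ?_⟩
    · rw [hTmem, sub_lie, hrev φ φ.2 1 (fun r hr => by rw [one_smul, hφR r hr]) r hr, one_smul,
        ← e, LieSubmodule.coe_bracket, sub_self]
    · rw [map_sub, (hRmem r).mp hr, sub_zero]

theorem rtsc_levi {K S : Type*} [Field K] [CharZero K] [LieRing S] [LieAlgebra K S]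
    [FiniteDimensional K S] [HasTrivialRadical K S] (n : ℕ) :
    ∀ (L : Type v) [LieRing L] [LieAlgebra K L] [FiniteDimensional K L]
      (_ : Module.finrank K L = n) (π : L →ₗ⁅K⁆ S) (_ : Function.Surjective π)
      (_ : IsSolvable π.ker), ∃ σ : S →ₗ⁅K⁆ L, ∀ s, π (σ s) = s := by
  induction n using Nat.strong_induction_on with
  | _ n ih =>
  intro L _ _ _ hn π hπ hsol
  by_cases hne : π.ker = ⊥
  · let e := LieEquiv.ofBijective π ⟨by rwa [← LieHom.ker_eq_bot], hπ⟩
    exact ⟨e.symm.toLieHom, fun s => e.apply_symm_apply s⟩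
  obtain ⟨T, hT, hTs⟩ := rtsc_levi_step π hπ hsol hne
  have hlt : Module.finrank K T < n := by
    rw [← hn]
    apply Submodule.finrank_lt (s := T.toSubmodule)
    intro h
    exact hT (LieSubalgebra.toSubmodule_injective h)
  let π' : T →ₗ⁅K⁆ S := π.comp T.incl
  have hker : ∀ x : π'.ker, T.incl (x : T) ∈ π.ker := by
    intro x
    have := x.2
    rw [LieHom.mem_ker] at this ⊢
    exact this
  let j : π'.ker →ₗ⁅K⁆ π.ker :=
    { toFun := fun x => ⟨T.incl (x : T), hker x⟩
      map_add' := fun x y => rfl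
      map_smul' := fun c x => rfl
      map_lie' := fun {x y} => rfl }
  have hsol' : IsSolvable π'.ker := by
    apply Function.Injective.lieAlgebra_isSolvable (R := K) (f := j)
    intro x y h
    have h' : T.incl (x : T) = T.incl (y : T) := congrArg (fun z : π.ker => (z : L)) h
    exact Subtype.ext (Subtype.ext h')
  obtain ⟨σ, hσ⟩ := ih _ hlt T rfl π' (fun s => by
    obtain ⟨x, hx, e⟩ := hTs s
    exact ⟨⟨x, hx⟩, e⟩) hsol'
  exact ⟨T.incl.comp σ, hσ⟩

theorem rtsc_hasTrivialRadical_quot {K L S : Type*} [Field K] [LieRing S] [LieAlgebra K S]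
    [LieRing L] [LieAlgebra K L] [FiniteDimensional K L]
    (π : L →ₗ⁅K⁆ S) (hπ : Function.Surjective π) (hker : π.ker = radical K L) :
    HasTrivialRadical K S := by
  apply hasTrivialRadical_of_no_solvable_ideals
  intro I hI
  obtain ⟨k, hk⟩ := IsSolvable.solvable K I
  rw [LieIdeal.derivedSeries_eq_bot_iff] at hk
  have h1 : ∀ j, derivedSeriesOfIdeal K L j (I.comap π) ≤
      (derivedSeriesOfIdeal K S j I).comap π := by
    intro j
    induction j with
    | zero => exact le_rfl
    | succ j ih =>
      rw [derivedSeriesOfIdeal_succ, derivedSeriesOfIdeal_succ]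
      exact (LieSubmodule.mono_lie ih ih).trans (LieIdeal.comap_bracket_le _)
  have h2 := h1 k
  rw [hk] at h2
  have h3 : derivedSeriesOfIdeal K L k (I.comap π) ≤ radical K L := by
    rw [← hker]
    exact h2
  obtain ⟨l, hl⟩ := IsSolvable.solvable K (radical K L)
  rw [LieIdeal.derivedSeries_eq_bot_iff] at hl
  have h4 : IsSolvable (I.comap π) := by
    refine IsSolvable.mk (R := K) (k := l + k) ((LieIdeal.derivedSeries_eq_bot_iff _ _).mpr ?_)
    rw [derivedSeriesOfIdeal_add, ← le_bot_iff, ← hl]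
    exact derivedSeriesOfIdeal_mono h3 l
  rw [LieIdeal.solvable_iff_le_radical, ← hker] at h4
  rw [eq_bot_iff]
  intro s hs
  obtain ⟨x, rfl⟩ := hπ s
  have : x ∈ π.ker := h4 (by rwa [LieIdeal.mem_comap])
  rw [LieHom.mem_ker] at this
  simp [this]

theorem rtsc_twoTrivial {K : Type u} {L : Type v} [Field K] [LieRing L] [LieAlgebra K L]
    (h2 : IsTwoTrivial K L) (V : Type*) [AddCommGroup V] [Module K V] [FiniteDimensional K V]
    (ρ : L →ₗ⁅K⁆ Module.End K V) (F : L →ₗ[K] L →ₗ[K] V) (h0 : ∀ a, F a a = 0)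
    (hF : ∀ x y z, ρ x (F y z) - ρ y (F x z) + ρ z (F x y) - F ⁅x, y⁆ z + F ⁅x, z⁆ y
      - F ⁅y, z⁆ x = 0) :
    ∃ g : L →ₗ[K] V, ∀ x y, F x y = ρ x (g y) - ρ y (g x) - g ⁅x, y⁆ := by
  let e : V ≃ₗ[K] (Fin (Module.finrank K V) → K) := (Module.finBasis K V).equivFun
  let i1 : LieRingModule L (Fin (Module.finrank K V) → K) :=
    { bracket := fun x v => e (ρ x (e.symm v))
      add_lie := fun x y v => by simp
      lie_add := fun x v w => by simp
      leibniz_lie := fun x y v => by simp [LieHom.map_lie, LieRing.of_associative_ring_bracket] }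
  have hbr : ∀ (x : L) (v : Fin (Module.finrank K V) → K), ⁅x, v⁆ = e (ρ x (e.symm v)) :=
    fun _ _ => rfl
  have i2 : LieModule K L (Fin (Module.finrank K V) → K) :=
    { smul_lie := fun c x v => by simp [hbr]
      lie_smul := fun c x v => by simp [hbr] }
  obtain ⟨g, hg⟩ := h2 (Fin (Module.finrank K V) → K) (F.compr₂ (e : V →ₗ[K] _)) ⟨fun a => by
      simp [h0], fun x y z => by
      have := congrArg e (hF x y z)
      simpa [hbr] using this⟩
  refine ⟨(e.symm : _ →ₗ[K] V) ∘ₗ g, fun x y => ?_⟩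
  have := congrArg e.symm (hg x y)
  simpa [hbr] using this

open TensorProduct in
theorem rtsc_main
    (K : Type u) (L : Type v) [Field K] [CharZero K]
    [LieRing L] [LieAlgebra K L] [FiniteDimensional K L]
    (h2 : IsTwoTrivial K L) :
    ∀ f : ↥(LieAlgebra.radical K L) →ₗ[K] ↥(LieAlgebra.radical K L) →ₗ[K] K,
      (∀ a, f a a = 0) →
      (∀ x y z : ↥(LieAlgebra.radical K L), f ⁅x, y⁆ z - f ⁅x, z⁆ y + f ⁅y, z⁆ x = 0) →
      ∃ h : ↥(LieAlgebra.radical K L) →ₗ[K] K,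
        ∀ x y : ↥(LieAlgebra.radical K L), f x y = h ⁅x, y⁆ := by
  set R := LieAlgebra.radical K L with hR
  let π : L →ₗ⁅K⁆ L ⧸ R :=
    { (LieSubmodule.Quotient.mk' R : L →ₗ[K] L ⧸ R) with
      map_lie' := fun {x y} => LieSubmodule.Quotient.mk_bracket R x y }
  have hπ : Function.Surjective π := LieSubmodule.Quotient.surjective_mk' R
  have hπ0 : ∀ x, π x = 0 ↔ x ∈ R := fun x => LieSubmodule.Quotient.mk_eq_zero R
  have hker : π.ker = R := by
    ext x
    rw [LieHom.mem_ker, hπ0]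
  have : FiniteDimensional K (L ⧸ R) := Module.Finite.of_surjective (π : L →ₗ[K] L ⧸ R) hπ
  have : HasTrivialRadical K (L ⧸ R) := rtsc_hasTrivialRadical_quot π hπ hker
  obtain ⟨σ, hσ⟩ := rtsc_levi _ L rfl π hπ (by rw [hker]; infer_instance)
  intro f hf0 hf
  let IsZ : (R →ₗ[K] R →ₗ[K] K) → Prop := fun f => (∀ a, f a a = 0) ∧
    ∀ x y z : R, f ⁅x, y⁆ z - f ⁅x, z⁆ y + f ⁅y, z⁆ x = 0
  have hskew : ∀ f : R →ₗ[K] R →ₗ[K] K, (∀ a, f a a = 0) → ∀ a b, f a b = - f b a := by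
    intro f h a b
    have := h (a + b)
    simp only [map_add, LinearMap.add_apply, h, zero_add, add_zero] at this
    linear_combination this
  have hR1 : ∀ (x : L) (a b : R), ⁅x, ⁅a, b⁆⁆ = ⁅⁅x, a⁆, b⁆ + ⁅a, ⁅x, b⁆⁆ := by
    intro x a b
    apply Subtype.ext
    exact leibniz_lie x (a : L) (b : L)
  let U : LieSubmodule K L (R ⊗[K] R) :=
    { carrier := {t | ∀ f, IsZ f → TensorProduct.lift f t = 0}
      add_mem' := by
        intro s t hs ht f hf
        rw [map_add, hs f hf, ht f hf, add_zero]
      zero_mem' := fun f _ => map_zero _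
      smul_mem' := by
        intro c t ht f hf
        rw [map_smul, ht f hf, smul_zero]
      lie_mem := by
        intro x t ht f hf
        let f' : R →ₗ[K] R →ₗ[K] K := f ∘ₗ (toEnd K L R x) + f.compl₂ (toEnd K L R x)
        have hf'app : ∀ a b, f' a b = f ⁅x, a⁆ b + f a ⁅x, b⁆ := fun a b => rfl
        have hf' : IsZ f' := by
          refine ⟨fun a => ?_, fun a b c => ?_⟩
          · rw [hf'app, hskew f hf.1 a, add_neg_cancel]
          · simp only [hf'app, hR1, map_add, LinearMap.add_apply]
            linear_combination hf.2 ⁅x, a⁆ b c + hf.2 a ⁅x, b⁆ c + hf.2 a b ⁅x, c⁆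
        have key : ∀ t, TensorProduct.lift f ⁅x, t⁆ = TensorProduct.lift f' t := by
          intro t
          induction t with
          | zero => simp
          | tmul a b => rw [TensorProduct.LieModule.lie_tmul_right, map_add]; rfl
          | add s t hs ht => rw [lie_add, map_add, map_add, hs, ht]
        change TensorProduct.lift f ⁅x, t⁆ = 0
        rw [key]
        exact ht f' hf' }
  let mk := LieSubmodule.Quotient.mk' U
  have mk0 : ∀ x, mk x = 0 ↔ x ∈ U := fun x => LieSubmodule.Quotient.mk_eq_zero U
  have : FiniteDimensional K ((R ⊗[K] R) ⧸ U) :=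
    Module.Finite.of_surjective (mk : (R ⊗[K] R) →ₗ[K] (R ⊗[K] R) ⧸ U)
      (LieSubmodule.Quotient.surjective_mk' U)
  let q : R →ₗ[K] R →ₗ[K] (R ⊗[K] R) ⧸ U :=
    (TensorProduct.mk K R R).compr₂ (mk : (R ⊗[K] R) →ₗ[K] (R ⊗[K] R) ⧸ U)
  have hq : ∀ a b, q a b = mk (a ⊗ₜ b) := fun a b => rfl
  have q0 : ∀ a, q a a = 0 := by
    intro a
    rw [hq, mk0]
    intro f hf
    rw [TensorProduct.lift.tmul]
    exact hf.1 a
  have qskew : ∀ a b, q a b = - q b a := by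
    intro a b
    have := q0 (a + b)
    simp only [map_add, LinearMap.add_apply, q0, zero_add, add_zero] at this
    rw [eq_neg_iff_add_eq_zero, add_comm, this]
  have qcoc : ∀ a b c, q ⁅a, b⁆ c - q ⁅a, c⁆ b + q ⁅b, c⁆ a = 0 := by
    intro a b c
    rw [hq, hq, hq, ← map_sub, ← map_add, mk0]
    intro f hf
    rw [map_add, map_sub, TensorProduct.lift.tmul, TensorProduct.lift.tmul, TensorProduct.lift.tmul]
    exact hf.2 a b c
  have qlie : ∀ (x : L) a b, ⁅x, q a b⁆ = q ⁅x, a⁆ b + q a ⁅x, b⁆ := by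
    intro x a b
    rw [hq, hq, hq, ← LieModuleHom.map_lie, ← map_add, TensorProduct.LieModule.lie_tmul_right]
  let p : L →ₗ[K] R := LinearMap.codRestrict R.toSubmodule
    (LinearMap.id - (σ : L ⧸ R →ₗ[K] L) ∘ₗ (π : L →ₗ[K] L ⧸ R)) (by
      intro x
      change x - σ (π x) ∈ R
      rw [← hπ0, map_sub, hσ, sub_self])
  have hp : ∀ x, (p x : L) = x - σ (π x) := fun x => rfl
  have hpR : ∀ x : R, p (x : L) = x := by
    intro x
    apply Subtype.ext
    rw [hp, (hπ0 x).mpr x.2, map_zero, sub_zero]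
  have hpl : ∀ x y, p ⁅x, y⁆ = ⁅σ (π x), p y⁆ - ⁅σ (π y), p x⁆ + ⁅p x, p y⁆ := by
    intro x y
    apply Subtype.ext
    have : (((⁅σ (π x), p y⁆ - ⁅σ (π y), p x⁆ + ⁅p x, p y⁆ : R)) : L)
      = ⁅σ (π x), (p y : L)⁆ - ⁅σ (π y), (p x : L)⁆ + ⁅(p x : L), (p y : L)⁆ := rfl
    rw [this, hp, hp, hp, LieHom.map_lie, LieHom.map_lie]
    simp only [lie_sub, sub_lie]
    rw [← lie_skew (σ (π y)) x, ← lie_skew (σ (π y)) (σ (π x))]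
    abel
  let ρ : L →ₗ⁅K⁆ Module.End K ((R ⊗[K] R) ⧸ U) :=
    (toEnd K L ((R ⊗[K] R) ⧸ U)).comp (σ.comp π)
  have hρ : ∀ x v, ρ x v = ⁅σ (π x), v⁆ := fun _ _ => rfl
  obtain ⟨g, hg⟩ := rtsc_twoTrivial h2 ((R ⊗[K] R) ⧸ U) ρ (q.compl₁₂ p p)
    (fun a => q0 _) (by
      intro x y z
      simp only [LinearMap.compl₁₂_apply, hρ, qlie, hpl, map_add, map_sub, LinearMap.add_apply,
        LinearMap.sub_apply]
      rw [← neg_eq_zero, ← qcoc (p x) (p y) (p z), qskew (p y) ⁅σ (π x), p z⁆,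
        qskew (p x) ⁅σ (π y), p z⁆, qskew (p x) ⁅σ (π z), p y⁆]
      abel)
  have hle : U.toSubmodule ≤ LinearMap.ker (TensorProduct.lift f) := fun t ht => ht f ⟨hf0, hf⟩
  let F : ((R ⊗[K] R) ⧸ U) →ₗ[K] K := Submodule.liftQ U.toSubmodule (TensorProduct.lift f) hle
  have hF : ∀ a b, F (q a b) = f a b := by
    intro a b
    rfl
  refine ⟨- (F ∘ₗ g ∘ₗ R.toSubmodule.subtype), fun x y => ?_⟩
  have h := hg x y
  rw [LinearMap.compl₁₂_apply, hpR, hpR, hρ, hρ, (hπ0 x).mpr x.2, (hπ0 y).mpr y.2, map_zero,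
    zero_lie, zero_lie, sub_zero, zero_sub] at h
  rw [← hF, h, map_neg]
  rfl

end RtscProof

/-- If `L` is a 2-trivial Lie algebra over a field of characteristic zero, then
`H²(Rad L, K) = 0` for the trivial one-dimensional module `K`: every alternating bilinear
2-cocycle on the solvable radical with trivial coefficients is a coboundary. -/
theorem radical_trivial_second_cohomology
    (K : Type u) (L : Type v) [Field K] [CharZero K]
    [LieRing L] [LieAlgebra K L] [FiniteDimensional K L]
    (h2 : IsTwoTrivial K L) :
    ∀ f : ↥(LieAlgebra.radical K L) →ₗ[K] ↥(LieAlgebra.radical K L) →ₗ[K] K,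
      (∀ a, f a a = 0) →
      (∀ x y z : ↥(LieAlgebra.radical K L), f ⁅x, y⁆ z - f ⁅x, z⁆ y + f ⁅y, z⁆ x = 0) →
      ∃ h : ↥(LieAlgebra.radical K L) →ₗ[K] K,
        ∀ x y : ↥(LieAlgebra.radical K L), f x y = h ⁅x, y⁆ := by
  exact rtsc_main K L h2
end
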